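/- arXiv:1708.09030 — 3 statements merged into one kernel-verified Lean document; each statement's English description precedes it below -/
import Mathlib

section
/- Let T ⊂ ℝ^d be compact and {f(t) : t ∈ T} a centered, unit-variance, almost surely continuous Gaussian random field whose correlation function r(s,t) = E[f(s)f(t)] satisfies |r(t,s) − r(t',s')| ≤ κ_H'(|t−t'|^{β'} + |s−s'|^{β'}). Let β* = min(β, β') and, for ε_0 > 0, set N_0(ε, b) = b^{(2/β*)(3d/β* + 2 + ε_0)} · ε^{−(2/β* + ε_0)}. Then for any ε_0 > 0 there exists b_0 such that for every ε ∈ (0,1), every b > b_0, and every N ≥ N_0(ε, b), the relative discretization bias satisfies | w_{σ,μ,N}(b) − w_{σ,μ}(b) | / w_{σ,μ}(b) < ε, uniformly over all (σ, μ) in the class C(μ_l, μ_u, σ_l, σ_u, β, κ_H). -/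
open MeasureTheory ProbabilityTheory Filter Set

/-- The lattice discretization `T_N = {(i₁/N, …, i_d/N) : i_j ∈ ℤ} ∩ T`. -/
def latticePoints (d : ℕ) (T : Set (EuclideanSpace ℝ (Fin d))) (N : ℕ) :
    Set (EuclideanSpace ℝ (Fin d)) :=
  {u ∈ T | ∀ j : Fin d, ∃ z : ℤ, u j = (z : ℝ) / N}

/-!
Write `X = σ f + μ` and `γ = c ε / b`. The bias `w(b) - w_N(b)` is at most
`[w(b) - w_N(b - γ)] + [w_N(b - γ) - w_N(b)]`, and both terms are small relative to `w(b)`.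

The second is an anti-concentration estimate. Cover `T` by finitely many balls on each of which `f`
has correlation at least `1 / 2` with its value `f(z)` at the centre. Regressing on `f(z)` makes `X`
on that ball a family of increasing affine functions of a standard normal variable independent of
the residuals. Hence, conditionally on the residuals, `{b - γ < sup X ≤ b}` constrains `f(z)` to an
interval of length `O(γ)` above which `{sup X > b}` holds, and the Gaussian hazard rate, which is
`O(b)` in the relevant range, bounds its probability by `O(γ b)` times that of `{sup X > b}`.

The first is a chaining estimate over the lattices of mesh `1 / (2 ^ k N)`, starting from `T_N`
itself, with the slack `γ` distributed geometrically over the levels. For `N` above the threshold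
its failure probability is negligible compared with the lower bound `w(b) ≥ exp (-Λ b²)` coming from
a single point of `T`.
-/

section GaussianReal

lemma setIntegral_mul_measureReal_le {α : Type*} {mα : MeasurableSpace α} {ν : Measure α}
    {s t : Set α} {f g : α → ℝ} (hs : MeasurableSet s) (ht : MeasurableSet t) (hνs : ν s ≠ ⊤)
    (hνt : ν t ≠ ⊤) (hf : IntegrableOn f s ν) (hg : IntegrableOn g t ν)
    (hfg : ∀ x ∈ s, ∀ y ∈ t, f x ≤ g y) :
    (∫ x in s, f x ∂ν) * ν.real t ≤ ν.real s * ∫ y in t, g y ∂ν := by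
  calc (∫ x in s, f x ∂ν) * ν.real t = ∫ x in s, f x * ν.real t ∂ν :=
        (integral_mul_const _ _).symm
    _ ≤ ∫ _ in s, (∫ y in t, g y ∂ν) ∂ν :=
        setIntegral_mono_on (hf.mul_const _) (integrableOn_const hνs) hs fun x hx =>
          setIntegral_ge_of_const_le_real ht hνt (hfg x hx) hg
    _ = ν.real s * ∫ y in t, g y ∂ν := by rw [setIntegral_const, smul_eq_mul]

lemma gaussianReal_real_eq_setIntegral (m : ℝ) {v : NNReal} (hv : v ≠ 0) (s : Set ℝ) :
    (gaussianReal m v).real s = ∫ x in s, gaussianPDFReal m v x := by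
  rw [measureReal_def, gaussianReal_apply_eq_integral m hv,
    ENNReal.toReal_ofReal (integral_nonneg fun x => gaussianPDFReal_nonneg m v x)]

lemma stdGaussian_mul_volume_le {s t : Set ℝ} {c : ℝ} (hs : MeasurableSet s)
    (ht : MeasurableSet t) (hvs : volume s ≠ ⊤) (hvt : volume t ≠ ⊤)
    (hst : ∀ x ∈ s, ∀ y ∈ t, y ^ 2 - x ^ 2 ≤ 2 * c) :
    (gaussianReal 0 1).real s * volume.real t ≤
      volume.real s * (Real.exp c * (gaussianReal 0 1).real t) := by
  rw [gaussianReal_real_eq_setIntegral 0 one_ne_zero,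
    gaussianReal_real_eq_setIntegral 0 one_ne_zero, ← integral_const_mul (Real.exp c)]
  refine setIntegral_mul_measureReal_le hs ht hvs hvt
    (integrable_gaussianPDFReal 0 1).integrableOn
    ((integrable_gaussianPDFReal 0 1).const_mul _).integrableOn fun x hx y hy => ?_
  rw [gaussianPDFReal, gaussianPDFReal, mul_left_comm, ← Real.exp_add]
  gcongr
  have := hst x hx y hy
  simp only [sub_zero, NNReal.coe_one, mul_one]
  linarith

lemma one_le_sqrt_two_pi : 1 ≤ √(2 * Real.pi) :=
  Real.one_le_sqrt.2 (by linarith [Real.two_le_pi])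

lemma stdGaussian_real_le_exp_mul_volume {s : Set ℝ} {M : ℝ} (hs : MeasurableSet s)
    (hvs : volume s ≠ ⊤) (hM : 0 ≤ M) (hsM : ∀ x ∈ s, M ≤ x) :
    (gaussianReal 0 1).real s ≤ volume.real s * Real.exp (-M ^ 2 / 2) := by
  rw [gaussianReal_real_eq_setIntegral 0 one_ne_zero, ← smul_eq_mul, ← setIntegral_const]
  refine setIntegral_mono_on (integrable_gaussianPDFReal 0 1).integrableOn
    (integrableOn_const hvs) hs fun x hx => ?_
  have := hsM x hx
  simp only [gaussianPDFReal, NNReal.coe_one, mul_one, sub_zero]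
  refine (mul_le_of_le_one_left (Real.exp_nonneg _)
    (inv_le_one_of_one_le₀ one_le_sqrt_two_pi)).trans ?_
  gcongr

/-- On `[x, x + h]` with `x ≤ M` the density is comparable with that on the adjacent interval of
length `1 / M`; beyond `M` it is at most `exp (-M² / 2)`. -/
lemma stdGaussian_Icc_le {M h : ℝ} (hM : 1 ≤ M) (hh : 0 ≤ h) (hhM : h * M ≤ 1) (x : ℝ) :
    (gaussianReal 0 1).real (Icc x (x + h)) ≤
      Real.exp 5 * h * (M * (gaussianReal 0 1).real (Ioi (x + h)) + Real.exp (-M ^ 2 / 2)) := by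
  have hM0 : 0 < M := by linarith
  have hvol : volume.real (Icc x (x + h)) = h := by
    rw [Real.volume_real_Icc_of_le (by linarith), add_sub_cancel_left]
  rcases le_total M x with hx | hx
  · calc (gaussianReal 0 1).real (Icc x (x + h))
        ≤ h * Real.exp (-M ^ 2 / 2) := by
          simpa only [hvol] using stdGaussian_real_le_exp_mul_volume measurableSet_Icc
            measure_Icc_lt_top.ne hM0.le fun y (hy : y ∈ Icc x (x + h)) => hx.trans hy.1
      _ ≤ Real.exp 5 * h * Real.exp (-M ^ 2 / 2) := by
          gcongr
          exact le_mul_of_one_le_left hh (Real.one_le_exp (by norm_num))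
      _ ≤ _ := by gcongr; exact le_add_of_nonneg_left (by positivity)
  · have hhM' : h ≤ M⁻¹ := by rwa [← one_div, le_div_iff₀ hM0]
    have hM' : M⁻¹ ≤ M := (inv_le_one_of_one_le₀ hM).trans hM
    have hcmp := stdGaussian_mul_volume_le (s := Icc x (x + h)) (c := 5)
      (t := Ioc (x + h) (x + h + M⁻¹)) measurableSet_Icc measurableSet_Ioc
      measure_Icc_lt_top.ne measure_Ioc_lt_top.ne fun u hu v hv => by
        have huv : v - u ≤ 2 * M⁻¹ := by linarith [hu.1, hv.2]
        calc v ^ 2 - u ^ 2 = (v - u) * (v + u) := by ring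
          _ ≤ (v - u) * (5 * M) := by
            gcongr
            · linarith [hu.2, hv.1]
            · linarith [hu.2, hv.2]
          _ ≤ 2 * M⁻¹ * (5 * M) := by gcongr
          _ = 2 * 5 := by field_simp
    rw [hvol, Real.volume_real_Ioc_of_le (by linarith [inv_pos.2 hM0]), add_sub_cancel_left,
      ← div_eq_mul_inv, div_le_iff₀ hM0] at hcmp
    calc (gaussianReal 0 1).real (Icc x (x + h))
        ≤ h * (Real.exp 5 * (gaussianReal 0 1).real (Ioc (x + h) (x + h + M⁻¹))) * M := hcmp
      _ ≤ h * (Real.exp 5 * (gaussianReal 0 1).real (Ioi (x + h))) * M := by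
          gcongr h * (Real.exp 5 * ?_) * M
          exact measureReal_mono Ioc_subset_Ioi_self
      _ = Real.exp 5 * h * (M * (gaussianReal 0 1).real (Ioi (x + h))) := by ring
      _ ≤ _ := by gcongr; exact le_add_of_nonneg_right (Real.exp_nonneg _)

lemma exp_le_stdGaussian_Ioi {x : ℝ} (hx : 0 ≤ x) :
    Real.exp (-(x + 1) ^ 2 / 2 - 1) ≤ (gaussianReal 0 1).real (Ioi x) := by
  have hsqrt : Real.exp (-1) ≤ (√(2 * Real.pi))⁻¹ := by
    rw [Real.exp_neg]
    gcongr
    refine Real.sqrt_le_iff.2 ⟨Real.exp_nonneg _, ?_⟩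
    nlinarith [Real.pi_lt_d2, Real.exp_one_gt_d9]
  calc Real.exp (-(x + 1) ^ 2 / 2 - 1)
      = Real.exp (-(x + 1) ^ 2 / 2 - 1) * volume.real (Ioc x (x + 1)) := by
        rw [Real.volume_real_Ioc_of_le (by linarith), add_sub_cancel_left, mul_one]
    _ ≤ ∫ y in Ioc x (x + 1), gaussianPDFReal 0 1 y := by
        refine setIntegral_ge_of_const_le_real measurableSet_Ioc measure_Ioc_lt_top.ne
          (fun y hy => ?_) (integrable_gaussianPDFReal 0 1).integrableOn
        have hy0 : 0 ≤ y := hx.trans hy.1.le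
        rw [sub_eq_neg_add, Real.exp_add, gaussianPDFReal]
        simp only [NNReal.coe_one, mul_one, sub_zero]
        gcongr
        exact hy.2
    _ = (gaussianReal 0 1).real (Ioc x (x + 1)) :=
        (gaussianReal_real_eq_setIntegral 0 one_ne_zero _).symm
    _ ≤ _ := measureReal_mono Ioc_subset_Ioi_self

lemma exists_exp_le_stdGaussian_affine {s₀ m₀ : ℝ} (hs₀ : 0 < s₀) :
    ∃ Λ ≥ 1, ∀ b ≥ 1, ∀ s ≥ s₀, ∀ m ≥ m₀,
      Real.exp (-(Λ * b ^ 2)) ≤ (gaussianReal 0 1).real {x | b < s * x + m} := by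
  set K := (1 + |m₀|) / s₀ with hK
  have : 0 ≤ K := by positivity
  refine ⟨(K + 1) ^ 2 / 2 + 1, by linarith [sq_nonneg (K + 1)], fun b hb s hs m hm => ?_⟩
  have hsub : Ioi (K * b) ⊆ {x | b < s * x + m} := fun x (hx : K * b < x) => by
    have hx0 : 0 ≤ x := (by positivity : 0 ≤ K * b).trans hx.le
    have hKs : (1 + |m₀|) * b < s₀ * x := by
      rw [hK, div_mul_eq_mul_div, div_lt_iff₀ hs₀] at hx
      linarith
    have : s₀ * x ≤ s * x := by gcongr
    have : |m₀| ≤ |m₀| * b := le_mul_of_one_le_right (abs_nonneg _) hb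
    change b < s * x + m
    linarith [neg_abs_le m₀]
  calc Real.exp (-(((K + 1) ^ 2 / 2 + 1) * b ^ 2))
      ≤ Real.exp (-(K * b + 1) ^ 2 / 2 - 1) := by
        have h1 : (K * b + 1) ^ 2 ≤ ((K + 1) * b) ^ 2 := by gcongr; linarith
        have h2 : 1 ≤ b ^ 2 := one_le_pow₀ hb
        gcongr
        nlinarith
    _ ≤ (gaussianReal 0 1).real (Ioi (K * b)) := exp_le_stdGaussian_Ioi (by positivity)
    _ ≤ _ := measureReal_mono hsub

end GaussianReal

section Excursion

variable {Ω E F : Type*}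

/-- The event that the random field `X` exceeds the level `b` somewhere in `U`, so that
`P.real (excursion X U b)` is the paper's `w(b) = P(sup_U X > b)`. It is written with an existential
quantifier because a real supremum takes the value `0` on unbounded and empty sets. -/
def excursion (X : E → Ω → ℝ) (U : Set E) (b : ℝ) : Set Ω :=
  {ω | ∃ u ∈ U, b < X u ω}

/-- The random field `σ f + μ` obtained from `f` by pointwise scaling and shifting. -/
def affineField (f : E → Ω → ℝ) (σ μ : E → ℝ) : E → Ω → ℝ :=
  fun u ω => σ u * f u ω + μ u

lemma excursion_subset_excursion {X : E → Ω → ℝ} {U V : Set E} {a b : ℝ} (hUV : U ⊆ V)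
    (hab : a ≤ b) : excursion X U b ⊆ excursion X V a :=
  fun _ ⟨u, hu, hub⟩ => ⟨u, hUV hu, hab.trans_lt hub⟩

lemma excursion_image (X : E → Ω → ℝ) (g : F → E) (V : Set F) (b : ℝ) :
    excursion X (g '' V) b = excursion (fun v => X (g v)) V b := by
  ext; simp [excursion]

end Excursion

section AntiConcentration

lemma exists_subset_Icc_of_lt_add {S : Set ℝ} {h : ℝ} (hS : S.Nonempty)
    (hlt : ∀ ξ ∈ S, ∀ ξ' ∈ S, ξ' < ξ + h) :
    ∃ x, S ⊆ Icc x (x + h) ∧ ∀ y > x + h, ∃ ξ ∈ S, ξ + h ≤ y := by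
  have hbdd : BddBelow S := by
    obtain ⟨ξ₀, hξ₀⟩ := hS
    exact ⟨ξ₀ - h, fun ξ hξ => by linarith [hlt ξ hξ ξ₀ hξ₀]⟩
  refine ⟨sInf S, fun ξ hξ => ⟨csInf_le hbdd hξ, ?_⟩, fun y hy => ?_⟩
  · have : ξ - h ≤ sInf S := le_csInf hS fun ξ' hξ' => by linarith [hlt ξ' hξ' ξ hξ]
    linarith
  · obtain ⟨ξ, hξ, hξy⟩ := exists_lt_of_csInf_lt hS (show sInf S < y - h by linarith)
    exact ⟨ξ, hξ, by linarith⟩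

lemma stdGaussian_diff_le_of_shift {A B : Set ℝ} {M h : ℝ} (hM : 1 ≤ M) (hh : 0 ≤ h)
    (hhM : h * M ≤ 1) (hAB : ∀ ξ ∈ A, ∀ ξ' ≥ ξ + h, ξ' ∈ B) :
    (gaussianReal 0 1).real (A \ B) ≤
      Real.exp 5 * h * (M * (gaussianReal 0 1).real B + Real.exp (-M ^ 2 / 2)) := by
  rcases (A \ B).eq_empty_or_nonempty with hempty | hne
  · rw [hempty, measureReal_empty]
    positivity
  obtain ⟨x, hsub, hsup⟩ := exists_subset_Icc_of_lt_add (h := h) hne fun ξ hξ ξ' hξ' =>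
    lt_of_not_ge fun hle => hξ'.2 (hAB ξ hξ.1 ξ' hle)
  have hsupB : Ioi (x + h) ⊆ B := fun y hy =>
    have ⟨ξ, hξ, hle⟩ := hsup y hy
    hAB ξ hξ.1 y hle
  calc (gaussianReal 0 1).real (A \ B) ≤ (gaussianReal 0 1).real (Icc x (x + h)) :=
        measureReal_mono hsub
    _ ≤ _ := stdGaussian_Icc_le hM hh hhM x
    _ ≤ _ := by
      gcongr Real.exp 5 * h * (M * ?_ + _)
      exact measureReal_mono hsupB

lemma prod_real_eq_integral {α γ : Type*} {mα : MeasurableSpace α} {mγ : MeasurableSpace γ}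
    {μ : Measure α} {ν : Measure γ} [IsFiniteMeasure μ] [SFinite ν] {s : Set (α × γ)}
    (hs : MeasurableSet s) :
    (μ.prod ν).real s = ∫ y, μ.real ((fun x => (x, y)) ⁻¹' s) ∂ν := by
  rw [measureReal_def, Measure.prod_apply_symm hs, ← integral_toReal
    (measurable_measure_prodMk_right hs).aemeasurable (.of_forall fun _ => measure_lt_top _ _)]
  rfl

lemma integrable_real_slice {α γ : Type*} {mα : MeasurableSpace α} {mγ : MeasurableSpace γ}
    {μ : Measure α} {ν : Measure γ} [IsFiniteMeasure μ] [IsFiniteMeasure ν] {s : Set (α × γ)}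
    (hs : MeasurableSet s) : Integrable (fun y => μ.real ((fun x => (x, y)) ⁻¹' s)) ν :=
  .of_bound (measurable_measure_prodMk_right hs).ennreal_toReal.aestronglyMeasurable (μ.real univ)
    (.of_forall fun y => by
      rw [Real.norm_of_nonneg measureReal_nonneg]
      exact measureReal_mono (subset_univ _))

lemma stdGaussian_prod_diff_le_of_shift {G : Type*} {mG : MeasurableSpace G} (ν : Measure G)
    [IsProbabilityMeasure ν] {A B : Set (ℝ × G)} {M h : ℝ} (hA : MeasurableSet A)
    (hB : MeasurableSet B) (hM : 1 ≤ M) (hh : 0 ≤ h) (hhM : h * M ≤ 1)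
    (hAB : ∀ y ξ, (ξ, y) ∈ A → ∀ ξ' ≥ ξ + h, (ξ', y) ∈ B) :
    ((gaussianReal 0 1).prod ν).real (A \ B) ≤
      Real.exp 5 * h * (M * ((gaussianReal 0 1).prod ν).real B + Real.exp (-M ^ 2 / 2)) := by
  have hBint := (integrable_real_slice (μ := gaussianReal 0 1) (ν := ν) hB).const_mul M
  rw [prod_real_eq_integral (hA.diff hB), prod_real_eq_integral hB]
  calc ∫ y, (gaussianReal 0 1).real ((fun x => (x, y)) ⁻¹' (A \ B)) ∂ν
      ≤ ∫ y, Real.exp 5 * h * (M * (gaussianReal 0 1).real ((fun x => (x, y)) ⁻¹' B) +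
          Real.exp (-M ^ 2 / 2)) ∂ν :=
        integral_mono (integrable_real_slice (hA.diff hB))
          ((hBint.add (integrable_const _)).const_mul _)
          fun y => stdGaussian_diff_le_of_shift hM hh hhM (hAB y)
    _ = _ := by
        rw [integral_const_mul, integral_add hBint (integrable_const _), integral_const_mul]
        simp

variable {Ω ι : Type*} {mΩ : MeasurableSpace Ω} {P : Measure Ω}

/-- Conditionally on `V`, raising `Z` by `γ / a₀` raises every coordinate by at least `γ`. -/
lemma real_excursion_diff_le_of_indepFun [IsProbabilityMeasure P] [Countable ι] {Z : Ω → ℝ}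
    {V : ι → Ω → ℝ} (hZ : HasLaw Z (gaussianReal 0 1) P) (hV : ∀ u, AEMeasurable (V u) P)
    (hind : IndepFun Z (fun ω u => V u ω) P) {a : ι → ℝ} {a₀ b γ M : ℝ} (ha₀ : 0 < a₀)
    (ha : ∀ u, a₀ ≤ a u) (hM : 1 ≤ M) (hγ : 0 ≤ γ) (hγM : γ / a₀ * M ≤ 1) {X : ι → Ω → ℝ}
    (hX : ∀ u ω, X u ω = a u * Z ω + V u ω) :
    P.real (excursion X univ (b - γ) \ excursion X univ b) ≤
      Real.exp 5 * (γ / a₀) * (M * P.real (excursion X univ b) + Real.exp (-M ^ 2 / 2)) := by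
  have hlaw : HasLaw (fun ω => (Z ω, fun u => V u ω))
      ((gaussianReal 0 1).prod (P.map fun ω u => V u ω)) P :=
    (indepFun_iff_hasLaw_prodMk_prod hZ ⟨aemeasurable_pi_lambda _ hV, rfl⟩).1 hind
  have := Measure.isProbabilityMeasure_map (μ := P) (aemeasurable_pi_lambda _ hV)
  let Y : ι → ℝ × (ι → ℝ) → ℝ := fun u p => a u * p.1 + p.2 u
  have hY : ∀ c, MeasurableSet (excursion Y univ c) := fun c => by
    simp only [excursion, mem_univ, true_and, ofPred_exists]
    exact .iUnion fun u => measurableSet_lt measurable_const (by fun_prop)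
  have hexc : ∀ c, excursion X univ c =
      (fun ω => (Z ω, fun u => V u ω)) ⁻¹' excursion Y univ c := fun c => by
    ext; simp [excursion, hX, Y]
  have hreal : ∀ s, MeasurableSet s → P.real ((fun ω => (Z ω, fun u => V u ω)) ⁻¹' s) =
      ((gaussianReal 0 1).prod (P.map fun ω u => V u ω)).real s := fun s hs =>
    hlaw.measureReal_eq (p := (· ∈ s)) hs
  rw [hexc, hexc, ← preimage_sdiff, hreal _ ((hY _).diff (hY _)), hreal _ (hY _)]
  refine stdGaussian_prod_diff_le_of_shift _ (hY _) (hY _) hM (by positivity) hγM ?_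
  rintro y ξ ⟨u, -, hu⟩ ξ' hξ'
  have hshift : γ ≤ a u * (ξ' - ξ) :=
    calc γ = a₀ * (γ / a₀) := by field_simp
      _ ≤ a u * (ξ' - ξ) := by gcongr; exacts [ha₀.le.trans (ha u), ha u, by linarith]
  exact ⟨u, mem_univ u, by simp only [Y] at hu ⊢; linarith⟩

lemma indepFun_regression_residual {f : ι → Ω → ℝ} (hf : IsGaussianProcess f P) (t : ι)
    (hvar : Var[f t; P] ≠ 0) :
    IndepFun (f t) (fun ω u => f u ω - cov[f t, f u; P] / Var[f t; P] * f t ω) P := by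
  classical
  have := hf.isProbabilityMeasure
  have hLp : ∀ u, MemLp (f u) 2 P := fun u => (hf.hasGaussianLaw_eval u).memLp_two
  set c : ι → ℝ := fun u => cov[f t, f u; P] / Var[f t; P]
  have hproc : IsGaussianProcess (Sum.elim (fun _ : Unit => f t) fun u ω => f u ω - c u * f t ω)
      P := by
    refine hf.of_isGaussianProcess ?_
    rintro (_ | u)
    · exact ⟨{t}, .proj ⟨t, by simp⟩, fun ω => by simp⟩
    · exact ⟨{t, u}, .proj ⟨u, by simp⟩ - c u • .proj ⟨t, by simp⟩, fun ω => by simp⟩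
  have hcov : ∀ u, cov[f t, fun ω => f u ω - c u * f t ω; P] = 0 := fun u => by
    rw [covariance_fun_sub_right (hLp _) (hLp _) ((hLp _).const_mul _),
      covariance_const_mul_right, covariance_self (hf.aemeasurable t)]
    simp only [c]
    field_simp
    ring
  have hind := hproc.indepFun_of_covariance_eq_zero (X := fun _ : Unit => f t)
    (fun _ => hf.aemeasurable t)
    (fun u => (hf.aemeasurable u).sub ((hf.aemeasurable t).const_mul _)) (fun _ u => hcov u)
  exact hind.comp (φ := fun x : Unit → ℝ => x ()) (ψ := id) (by fun_prop) measurable_id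

lemma real_excursion_diff_le_of_le_cov {f : ι → Ω → ℝ} (hf : IsGaussianProcess f P) {t : ι}
    (hlaw : HasLaw (f t) (gaussianReal 0 1) P) {U : Finset ι} {σ μ : ι → ℝ} {a₀ b γ M : ℝ}
    (ha₀ : 0 < a₀) (ha : ∀ u ∈ U, a₀ ≤ σ u * cov[f t, f u; P]) (hM : 1 ≤ M) (hγ : 0 ≤ γ)
    (hγM : γ / a₀ * M ≤ 1) :
    P.real (excursion (affineField f σ μ) U (b - γ) \ excursion (affineField f σ μ) U b) ≤
      Real.exp 5 * (γ / a₀) *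
        (M * P.real (excursion (affineField f σ μ) U b) + Real.exp (-M ^ 2 / 2)) := by
  have := hf.isProbabilityMeasure
  have hvar : Var[f t; P] = 1 := by simpa using hlaw.variance_eq
  have hind := indepFun_regression_residual hf t (by rw [hvar]; exact one_ne_zero)
  have hU : (U : Set ι) = Subtype.val '' (univ : Set U) := by simp
  rw [hU]
  simp only [excursion_image]
  refine real_excursion_diff_le_of_indepFun (a := fun u : U => σ u * cov[f t, f u; P])
    (V := fun u : U => fun ω => σ u * (f u ω - cov[f t, f u; P] / Var[f t; P] * f t ω) + μ u)
    hlaw (fun u => ?_) ?_ ha₀ (fun u => ha u u.2) hM hγ hγM fun u ω => ?_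
  · exact (((hf.aemeasurable u).sub ((hf.aemeasurable t).const_mul _)).const_mul _).add_const _
  · exact hind.comp (φ := id) (ψ := fun y (u : U) => σ u * y u + μ u) measurable_id
      (by fun_prop)
  · simp only [affineField, hvar]
    ring

lemma real_excursion_diff_le_of_cover {f : ι → Ω → ℝ} (hf : IsGaussianProcess f P)
    (hlaw : ∀ t, HasLaw (f t) (gaussianReal 0 1) P) {Z S : Finset ι} {σ μ : ι → ℝ}
    {a₀ b γ M : ℝ} (ha₀ : 0 < a₀) (hZ : ∀ u ∈ S, ∃ z ∈ Z, a₀ ≤ σ u * cov[f z, f u; P])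
    (hM : 1 ≤ M) (hγ : 0 ≤ γ) (hγM : γ / a₀ * M ≤ 1) :
    P.real (excursion (affineField f σ μ) S (b - γ) \ excursion (affineField f σ μ) S b) ≤
      Z.card * (Real.exp 5 * (γ / a₀) *
        (M * P.real (excursion (affineField f σ μ) S b) + Real.exp (-M ^ 2 / 2))) := by
  classical
  have := hf.isProbabilityMeasure
  set X := affineField f σ μ
  let V : ι → Finset ι := fun z => S.filter fun u => a₀ ≤ σ u * cov[f z, f u; P]
  have hVS : ∀ z c, excursion X (V z) c ⊆ excursion X S c := fun z c =>
    excursion_subset_excursion (Finset.coe_subset.2 (Finset.filter_subset _ _)) le_rfl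
  have hsub : excursion X S (b - γ) \ excursion X S b ⊆
      ⋃ z ∈ Z, excursion X (V z) (b - γ) \ excursion X (V z) b := by
    rintro ω ⟨⟨u, huS, hu⟩, hω⟩
    obtain ⟨z, hz, hzu⟩ := hZ u huS
    exact mem_iUnion₂.2
      ⟨z, hz, ⟨u, Finset.mem_filter.2 ⟨huS, hzu⟩, hu⟩, fun h => hω (hVS z b h)⟩
  calc P.real (excursion X S (b - γ) \ excursion X S b)
      ≤ ∑ z ∈ Z, P.real (excursion X (V z) (b - γ) \ excursion X (V z) b) :=
        (measureReal_mono hsub (measure_ne_top _ _)).trans (measureReal_biUnion_finset_le _ _)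
    _ ≤ ∑ _z ∈ Z, Real.exp 5 * (γ / a₀) *
          (M * P.real (excursion X S b) + Real.exp (-M ^ 2 / 2)) := by
        refine Finset.sum_le_sum fun z _ => (real_excursion_diff_le_of_le_cov hf (hlaw z) ha₀
          (fun u hu => (Finset.mem_filter.1 hu).2) hM hγ hγM).trans ?_
        gcongr Real.exp 5 * (γ / a₀) * (M * ?_ + _)
        exact measureReal_mono (hVS z b)
    _ = _ := by rw [Finset.sum_const, nsmul_eq_mul]

lemma exists_finset_half_le_cov {E : Type*} [PseudoMetricSpace E]
    (hE : TotallyBounded (univ : Set E)) {f : E → Ω → ℝ} {κ β : ℝ} (hκ : 0 < κ) (hβ : 0 < β)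
    (hcov : ∀ s t, 1 - cov[f s, f t; P] ≤ κ * dist s t ^ β) :
    ∃ Z : Finset E, ∀ u, ∃ z ∈ Z, 1 / 2 ≤ cov[f z, f u; P] := by
  obtain ⟨Z, hZ, hball⟩ :=
    Metric.totallyBounded_iff.1 hE ((2 * κ)⁻¹ ^ β⁻¹) (by positivity)
  refine ⟨hZ.toFinset, fun u => ?_⟩
  obtain ⟨z, hz, hu⟩ := mem_iUnion₂.1 (hball (mem_univ u))
  have hdist : dist z u ^ β ≤ (2 * κ)⁻¹ := by
    rw [← Real.rpow_inv_rpow (by positivity : 0 ≤ (2 * κ)⁻¹) hβ.ne']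
    gcongr
    exact (dist_comm z u).trans_le (Metric.mem_ball.1 hu).le
  have : κ * dist z u ^ β ≤ 1 / 2 :=
    calc κ * dist z u ^ β ≤ κ * (2 * κ)⁻¹ := by gcongr
      _ = 1 / 2 := by field_simp
  exact ⟨z, hZ.mem_toFinset.2 hz, by linarith [hcov z u]⟩

lemma exists_forall_real_excursion_diff_le {E : Type*} [PseudoMetricSpace E]
    (hE : TotallyBounded (univ : Set E)) {f : E → Ω → ℝ} (hf : IsGaussianProcess f P)
    (hlaw : ∀ t, HasLaw (f t) (gaussianReal 0 1) P) {κ β σl : ℝ} (hκ : 0 < κ) (hβ : 0 < β)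
    (hσl : 0 < σl) (hcov : ∀ s t, 1 - cov[f s, f t; P] ≤ κ * dist s t ^ β) :
    ∃ C > 0, ∀ γ ≥ 0, ∀ M ≥ 1, C * γ * M ≤ 1 → ∀ σ μ : E → ℝ, (∀ u, σl ≤ σ u) →
      ∀ (S : Finset E) (b : ℝ),
        P.real (excursion (affineField f σ μ) S (b - γ) \ excursion (affineField f σ μ) S b) ≤
          C * γ * (M * P.real (excursion (affineField f σ μ) S b) + Real.exp (-M ^ 2 / 2)) := by
  obtain ⟨Z, hZ⟩ := exists_finset_half_le_cov hE hκ hβ hcov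
  set C₁ : ℝ := Real.exp 5 / (σl / 2) with hC₁
  refine ⟨(Z.card + 1) * C₁, by positivity, fun γ hγ M hM hγM σ μ hσ S b => ?_⟩
  have hcover : ∀ u ∈ S, ∃ z ∈ Z, σl / 2 ≤ σ u * cov[f z, f u; P] := fun u _ => by
    obtain ⟨z, hz, hzu⟩ := hZ u
    refine ⟨z, hz, ?_⟩
    calc σl / 2 = σl * (1 / 2) := by ring
      _ ≤ σ u * cov[f z, f u; P] := by gcongr; exacts [hσl.le.trans (hσ u), hσ u]
  have hsmall : γ / (σl / 2) * M ≤ 1 :=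
    calc γ / (σl / 2) * M = 1 * (1 / (σl / 2)) * γ * M := by ring
      _ ≤ (Z.card + 1) * C₁ * γ * M := by
        rw [hC₁]
        gcongr
        · linarith [Z.card.cast_nonneg (α := ℝ)]
        · exact Real.one_le_exp (by norm_num)
      _ ≤ 1 := hγM
  refine (real_excursion_diff_le_of_cover hf hlaw (by positivity) hcover hM hγ hsmall).trans ?_
  calc Z.card * (Real.exp 5 * (γ / (σl / 2)) *
        (M * P.real (excursion (affineField f σ μ) S b) + Real.exp (-M ^ 2 / 2)))
      = Z.card * C₁ * γ *
        (M * P.real (excursion (affineField f σ μ) S b) + Real.exp (-M ^ 2 / 2)) := by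
        rw [hC₁]; ring
    _ ≤ _ := by gcongr; exact le_add_of_nonneg_right zero_le_one

lemma exists_forall_real_excursion_diff_le_mul {E : Type*} [PseudoMetricSpace E]
    (hE : TotallyBounded (univ : Set E)) {f : E → Ω → ℝ} (hf : IsGaussianProcess f P)
    (hlaw : ∀ t, HasLaw (f t) (gaussianReal 0 1) P) {κ β σl : ℝ} (hκ : 0 < κ) (hβ : 0 < β)
    (hσl : 0 < σl) (hcov : ∀ s t, 1 - cov[f s, f t; P] ≤ κ * dist s t ^ β) {Λ : ℝ}
    (hΛ : 1 ≤ Λ) :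
    ∃ c > 0, ∀ ε ∈ Ioo (0 : ℝ) 1, ∀ b ≥ 1, ∀ σ μ : E → ℝ, (∀ u, σl ≤ σ u) → ∀ S : Finset E,
      P.real (excursion (affineField f σ μ) S (b - c * (ε / b)) \
          excursion (affineField f σ μ) S b) ≤
        ε / 6 * (P.real (excursion (affineField f σ μ) S b) + Real.exp (-(Λ * b ^ 2))) := by
  obtain ⟨C, hC, hlayer⟩ := exists_forall_real_excursion_diff_le hE hf hlaw hκ hβ hσl hcov
  have : 0 < Λ := by linarith
  refine ⟨1 / (12 * Λ * C), by positivity, fun ε hε b hb σ μ hσ S => ?_⟩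
  have : 0 < b := by linarith
  have hε0 : 0 < ε := hε.1
  set γ := 1 / (12 * Λ * C) * (ε / b) with hγ
  have hM : 1 ≤ 2 * Λ * b := by nlinarith
  have hγM : C * γ * (2 * Λ * b) = ε / 6 := by
    rw [hγ]
    field_simp
    norm_num
  calc _ ≤ C * γ * (2 * Λ * b * P.real (excursion (affineField f σ μ) S b) +
          Real.exp (-(2 * Λ * b) ^ 2 / 2)) :=
        hlayer γ (by positivity) _ hM (by rw [hγM]; linarith [hε.2]) σ μ hσ S b
    _ ≤ C * γ * (2 * Λ * b * P.real (excursion (affineField f σ μ) S b) +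
          2 * Λ * b * Real.exp (-(Λ * b ^ 2))) := by
        gcongr
        refine le_trans ?_ (le_mul_of_one_le_left (Real.exp_nonneg _) hM)
        gcongr
        nlinarith [mul_le_mul_of_nonneg_right hΛ (by positivity : 0 ≤ Λ * b ^ 2)]
    _ = C * γ * (2 * Λ * b) *
          (P.real (excursion (affineField f σ μ) S b) + Real.exp (-(Λ * b ^ 2))) := by ring
    _ = _ := by rw [hγM]

end AntiConcentration

section Increments

variable {Ω E : Type*} {mΩ : MeasurableSpace Ω} {P : Measure Ω}

lemma real_lt_add_const_le_exp {Y : Ω → ℝ} (hY : HasGaussianLaw Y P) {m η γ : ℝ} (hη : 0 < η)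
    (hmean : P[Y] + m ≤ η) (hvar : Var[Y; P] ≤ η ^ 2) (hγ : 2 * η ≤ γ) :
    P.real {ω | γ < Y ω + m} ≤ Real.exp (-(γ / η) ^ 2 / 8) := by
  have := hY.isProbabilityMeasure
  have hlaw := hY.map_eq_gaussianReal
  set l := (γ - η) / η ^ 2 with hl
  have hl0 : 0 ≤ l := div_nonneg (by linarith) (by positivity)
  have hint : Integrable (fun ω => Real.exp (l * Y ω)) P := by
    rw [← mgf_pos_iff, mgf_gaussianReal hlaw]
    positivity
  have hle : γ / η / 2 ≤ (γ - η) / η := by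
    rw [div_div, div_le_div_iff₀ (by positivity) hη]
    nlinarith
  calc P.real {ω | γ < Y ω + m} ≤ P.real {ω | γ - m ≤ Y ω} :=
        measureReal_mono fun ω (hω : γ < Y ω + m) => show γ - m ≤ Y ω by linarith
    _ ≤ Real.exp (-l * (γ - m)) * mgf Y P l := measure_ge_le_exp_mul_mgf _ hl0 hint
    _ = Real.exp ((P[Y] + m) * l + Var[Y; P] * l ^ 2 / 2 - γ * l) := by
        rw [mgf_gaussianReal hlaw, ← Real.exp_add, Real.coe_toNNReal _ (variance_nonneg _ _)]
        ring_nf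
    _ ≤ Real.exp (η * l + η ^ 2 * l ^ 2 / 2 - γ * l) := by gcongr
    _ = Real.exp (-((γ - η) / η) ^ 2 / 2) := by
        congr 1
        rw [hl]
        field_simp
        ring
    _ ≤ Real.exp (-(γ / η / 2) ^ 2 / 2) := by
        have : 0 ≤ γ / η / 2 := div_nonneg (div_nonneg (by linarith) hη.le) zero_le_two
        gcongr
    _ = Real.exp (-(γ / η) ^ 2 / 8) := by ring_nf

lemma variance_const_mul_sub_const_mul {X Y : Ω → ℝ} [IsProbabilityMeasure P] (hX : MemLp X 2 P)
    (hY : MemLp Y 2 P) (hX1 : Var[X; P] = 1) (hY1 : Var[Y; P] = 1) (a b : ℝ) :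
    Var[fun ω => a * X ω - b * Y ω; P] = (a - b) ^ 2 + 2 * a * b * (1 - cov[X, Y; P]) := by
  rw [variance_fun_sub (hX.const_mul _) (hY.const_mul _), variance_const_mul, variance_const_mul,
    covariance_const_mul_left, covariance_const_mul_right, hX1, hY1]
  ring

lemma real_affineField_increment_le {f : E → Ω → ℝ} (hf : IsGaussianProcess f P)
    (hlaw : ∀ t, HasLaw (f t) (gaussianReal 0 1) P) {σ μ : E → ℝ} {s t : E} {η γ : ℝ}
    (hη : 0 < η) (hμ : μ s - μ t ≤ η)
    (hvar : (σ s - σ t) ^ 2 + 2 * σ s * σ t * (1 - cov[f s, f t; P]) ≤ η ^ 2)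
    (hγ : 2 * η ≤ γ) :
    P.real {ω | γ < affineField f σ μ s ω - affineField f σ μ t ω} ≤
      Real.exp (-(γ / η) ^ 2 / 8) := by
  have := hf.isProbabilityMeasure
  have hLp : ∀ u, MemLp (f u) 2 P := fun u => (hf.hasGaussianLaw_eval u).memLp_two
  have hvar1 : ∀ u, Var[f u; P] = 1 := fun u => by simpa using (hlaw u).variance_eq
  have hmean : P[fun ω => σ s * f s ω - σ t * f t ω] = 0 := by
    have hint : ∀ u, Integrable (f u) P := fun u => (hf.hasGaussianLaw_eval u).integrable
    have hzero : ∀ u, P[f u] = 0 := fun u => by simpa using (hlaw u).integral_eq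
    rw [integral_sub ((hint s).const_mul _) ((hint t).const_mul _), integral_const_mul,
      integral_const_mul, hzero, hzero, mul_zero, mul_zero, sub_zero]
  have hsplit : {ω | γ < affineField f σ μ s ω - affineField f σ μ t ω} =
      {ω | γ < (σ s * f s ω - σ t * f t ω) + (μ s - μ t)} := by
    ext ω
    simp only [affineField, mem_ofPred_eq]
    ring_nf
  rw [hsplit]
  refine real_lt_add_const_le_exp ((hf.smul σ).hasGaussianLaw_fun_sub) hη ?_ ?_ hγ
  · simpa only [Pi.smul_apply, smul_eq_mul, hmean, zero_add] using hμ
  · simpa only [Pi.smul_apply, smul_eq_mul,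
      variance_const_mul_sub_const_mul (hLp s) (hLp t) (hvar1 s) (hvar1 t)] using hvar

/-- The Hölder class `C(μl, μu, σl, σu, β, κ)` of condition C1, without the upper bound `μu` on
`μ`. -/
structure IsHolderScaling [PseudoMetricSpace E] (σl σu μl β κ : ℝ) (σ μ : E → ℝ) : Prop where
  le_scale : ∀ u, σl ≤ σ u
  scale_le : ∀ u, σ u ≤ σu
  le_shift : ∀ u, μl ≤ μ u
  abs_add_abs_le : ∀ s t, |σ t - σ s| + |μ t - μ s| ≤ κ * dist s t ^ β

lemma IsHolderScaling.abs_scale_sub_le [PseudoMetricSpace E] {σl σu μl β κ : ℝ} {σ μ : E → ℝ}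
    (h : IsHolderScaling σl σu μl β κ σ μ) (s t : E) : |σ t - σ s| ≤ κ * dist s t ^ β :=
  (le_add_of_nonneg_right (abs_nonneg _)).trans (h.abs_add_abs_le s t)

lemma IsHolderScaling.abs_shift_sub_le [PseudoMetricSpace E] {σl σu μl β κ : ℝ} {σ μ : E → ℝ}
    (h : IsHolderScaling σl σu μl β κ σ μ) (s t : E) : |μ t - μ s| ≤ κ * dist s t ^ β :=
  (le_add_of_nonneg_left (abs_nonneg _)).trans (h.abs_add_abs_le s t)

lemma IsHolderScaling.sq_scale_sub_add_le [PseudoMetricSpace E] {σl σu μl β κ : ℝ}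
    {σ μ : E → ℝ} (h : IsHolderScaling σl σu μl β κ σ μ) (hσl : 0 ≤ σl) (hβ : 0 ≤ β)
    (hκ : 0 ≤ κ) {β' κ' δ ρ : ℝ} (hκ' : 0 ≤ κ') (hδ0 : 0 < δ) (hδ1 : δ ≤ 1) {s t : E}
    (hst : dist s t ≤ δ) (hρ : ρ ≤ κ' * δ ^ β') :
    (σ s - σ t) ^ 2 + 2 * (σ s * σ t) * ρ ≤ (κ ^ 2 + 2 * σu ^ 2 * κ') * δ ^ min β β' := by
  have hpos : ∀ u, 0 ≤ σ u := fun u => hσl.trans (h.le_scale u)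
  have hσ : (σ s - σ t) ^ 2 ≤ κ ^ 2 * δ ^ min β β' :=
    calc (σ s - σ t) ^ 2 ≤ (κ * dist t s ^ β) ^ 2 := by
          rw [← sq_abs]
          gcongr
          exact h.abs_scale_sub_le t s
      _ ≤ (κ * δ ^ β) ^ 2 := by rw [dist_comm]; gcongr
      _ = κ ^ 2 * δ ^ (β * 2) := by rw [mul_pow, Real.rpow_mul hδ0.le, Real.rpow_two]
      _ ≤ κ ^ 2 * δ ^ min β β' := by
        gcongr κ ^ 2 * ?_
        exact Real.rpow_le_rpow_of_exponent_ge hδ0 hδ1 (by linarith [min_le_left β β'])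
  have hσσ : σ s * σ t ≤ σu ^ 2 := by
    rw [sq]
    exact mul_le_mul (h.scale_le s) (h.scale_le t) (hpos t) ((hpos s).trans (h.scale_le s))
  have hρ' : ρ ≤ κ' * δ ^ min β β' := by
    refine hρ.trans ?_
    gcongr κ' * ?_
    exact Real.rpow_le_rpow_of_exponent_ge hδ0 hδ1 (min_le_right β β')
  calc (σ s - σ t) ^ 2 + 2 * (σ s * σ t) * ρ
      ≤ κ ^ 2 * δ ^ min β β' + 2 * (σ s * σ t) * (κ' * δ ^ min β β') := by
        have := mul_nonneg (hpos s) (hpos t)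
        gcongr
    _ ≤ κ ^ 2 * δ ^ min β β' + 2 * σu ^ 2 * (κ' * δ ^ min β β') := by gcongr
    _ = _ := by ring

/-- The increments of `X` over distances at most `δ` have the tails of a Gaussian variable with mean
and standard deviation at most `C * δ ^ α`, which is what chaining needs. -/
def HasGaussianIncrementTail [PseudoMetricSpace E] (X : E → Ω → ℝ) (C α : ℝ) (P : Measure Ω) :
    Prop :=
  ∀ δ ∈ Ioc (0 : ℝ) 1, ∀ γ ≥ 2 * (C * δ ^ α), ∀ s t, dist s t ≤ δ →
    P.real {ω | γ < X s ω - X t ω} ≤ Real.exp (-(γ / (C * δ ^ α)) ^ 2 / 8)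

lemma exists_forall_hasGaussianIncrementTail_affineField [PseudoMetricSpace E] {f : E → Ω → ℝ}
    (hf : IsGaussianProcess f P) (hlaw : ∀ t, HasLaw (f t) (gaussianReal 0 1) P)
    (μl : ℝ) {σl σu β κ β' κ' : ℝ} (hσl : 0 ≤ σl) (hβ : 0 < β) (hκ : 0 < κ) (hβ' : 0 < β')
    (hκ' : 0 ≤ κ') (hcov : ∀ s t, 1 - cov[f s, f t; P] ≤ κ' * dist s t ^ β') :
    ∃ C > 0, ∀ σ μ : E → ℝ, IsHolderScaling σl σu μl β κ σ μ →
      HasGaussianIncrementTail (affineField f σ μ) C (min β β' / 2) P := by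
  have : 0 < min β β' := lt_min hβ hβ'
  set K := κ ^ 2 + 2 * σu ^ 2 * κ'
  have hK : 0 < K := by positivity
  refine ⟨√K, Real.sqrt_pos.2 hK, ?_⟩
  rintro σ μ hσμ δ ⟨hδ0, hδ1⟩ γ hγ s t hst
  refine real_affineField_increment_le hf hlaw (by positivity) ?_ ?_ hγ
  · have hκK : κ ≤ √K := Real.le_sqrt_of_sq_le (le_add_of_nonneg_right (by positivity))
    calc μ s - μ t ≤ κ * dist t s ^ β := (le_abs_self _).trans (hσμ.abs_shift_sub_le t s)
      _ ≤ κ * δ ^ β := by rw [dist_comm]; gcongr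
      _ ≤ √K * δ ^ (min β β' / 2) := by
        gcongr ?_ * ?_
        exact Real.rpow_le_rpow_of_exponent_ge hδ0 hδ1 (by linarith [min_le_left β β'])
  · have hrpow : (δ ^ (min β β' / 2)) ^ 2 = δ ^ min β β' := by
      rw [← Real.rpow_mul_natCast hδ0.le, Nat.cast_ofNat, div_mul_cancel₀ _ two_ne_zero]
    rw [mul_pow, Real.sq_sqrt hK.le, hrpow, mul_assoc 2]
    exact hσμ.sq_scale_sub_add_le hσl hβ.le hκ.le hκ' hδ0 hδ1 hst
      ((hcov s t).trans (by gcongr))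

end Increments

section Chaining

variable {Ω E : Type*} {mΩ : MeasurableSpace Ω} {P : Measure Ω}

lemma exists_mem_lt_of_chain [TopologicalSpace E] {x : E → ℝ} (hx : Continuous x)
    {S : ℕ → Set E} {π : ℕ → E → E} (hπS : ∀ k u, π k u ∈ S k)
    (hπ : ∀ u, Tendsto (fun k => π k u) atTop (nhds u)) {g : ℕ → ℝ} {γ : ℝ}
    (hgγ : ∀ n, ∑ k ∈ Finset.range n, g k ≤ γ) (hg : ∀ k, ∀ s ∈ S (k + 1), x s - x (π k s) ≤ g k)
    {u : E} {b : ℝ} (hu : b < x u) : ∃ s ∈ S 0, b - γ < x s := by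
  have hdescend : ∀ n, ∀ s ∈ S n, ∃ s₀ ∈ S 0, x s - ∑ k ∈ Finset.range n, g k ≤ x s₀ := by
    intro n
    induction n with
    | zero => exact fun s hs => ⟨s, hs, by simp⟩
    | succ n ih =>
      intro s hs
      obtain ⟨s₀, hs₀, hle⟩ := ih (π n s) (hπS n s)
      exact ⟨s₀, hs₀, by rw [Finset.sum_range_succ]; linarith [hg n s hs]⟩
  obtain ⟨n, hn⟩ := ((hx.continuousAt.tendsto.comp (hπ u)).eventually_const_lt hu).exists
  obtain ⟨s₀, hs₀, hle⟩ := hdescend n (π n u) (hπS n u)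
  exact ⟨s₀, hs₀, by linarith [hgγ n, show b < x (π n u) from hn]⟩

lemma real_iUnion_le_of_hasSum [IsFiniteMeasure P] {B : ℕ → Set Ω} {q : ℕ → ℝ} {c : ℝ}
    (hB : ∀ k, P.real (B k) ≤ q k) (hq : HasSum q c) : P.real (⋃ k, B k) ≤ c := by
  have hq0 : ∀ k, 0 ≤ q k := fun k => measureReal_nonneg.trans (hB k)
  refine ENNReal.toReal_le_of_le_ofReal (hq.nonneg hq0) ((measure_iUnion_le B).trans ?_)
  rw [← hq.tsum_eq, ENNReal.ofReal_tsum_of_nonneg hq0 hq.summable]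
  exact ENNReal.tsum_le_tsum fun k => by
    rw [← ofReal_measureReal]
    exact ENNReal.ofReal_le_ofReal (hB k)

lemma real_excursion_univ_le_of_chain [TopologicalSpace E] [IsFiniteMeasure P] {X : E → Ω → ℝ}
    (hX : ∀ᵐ ω ∂P, Continuous fun u => X u ω) {S : ℕ → Finset E} {π : ℕ → E → E}
    (hπS : ∀ k u, π k u ∈ S k) (hπ : ∀ u, Tendsto (fun k => π k u) atTop (nhds u))
    {g q : ℕ → ℝ} {γ c : ℝ} (hgγ : ∀ n, ∑ k ∈ Finset.range n, g k ≤ γ)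
    (hgq : ∀ k, ∑ s ∈ S (k + 1), P.real {ω | g k < X s ω - X (π k s) ω} ≤ q k)
    (hq : HasSum q c) (b : ℝ) :
    P.real (excursion X univ b) ≤ P.real (excursion X (S 0) (b - γ)) + c := by
  set B : ℕ → Set Ω := fun k => ⋃ s ∈ S (k + 1), {ω | g k < X s ω - X (π k s) ω}
  have hsub : excursion X univ b ≤ᵐ[P] (excursion X (S 0) (b - γ) ∪ ⋃ k, B k : Set Ω) := by
    filter_upwards [hX] with ω hω
    rintro ⟨u, -, hu⟩
    by_cases hbad : ω ∈ ⋃ k, B k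
    · exact Or.inr hbad
    · simp only [B, mem_iUnion, not_exists, mem_ofPred_eq, not_lt] at hbad
      exact Or.inl (exists_mem_lt_of_chain hω hπS hπ hgγ hbad hu)
  calc P.real (excursion X univ b) ≤ P.real (excursion X (S 0) (b - γ) ∪ ⋃ k, B k) :=
        ENNReal.toReal_mono (measure_ne_top _ _) (measure_mono_ae hsub)
    _ ≤ P.real (excursion X (S 0) (b - γ)) + P.real (⋃ k, B k) := measureReal_union_le _ _
    _ ≤ _ := by
      gcongr
      exact real_iUnion_le_of_hasSum (fun k => (measureReal_biUnion_finset_le _ _).trans (hgq k)) hq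

/-- Nets at dyadic scales with polynomially many points: `S k` is a `κ / (2 ^ k * N)`-net of the
whole space, as are the lattices of mesh `1 / (2 ^ k * N)` in the compact set `T` of the paper. -/
structure IsDyadicNet [PseudoMetricSpace E] (S : ℕ → Finset E) (N κ A : ℝ) (D : ℕ) : Prop where
  exists_dist_le : ∀ k u, ∃ s ∈ S k, dist u s ≤ κ / (2 ^ k * N)
  card_le : ∀ k, ((S k).card : ℝ) ≤ A * (2 ^ k * N) ^ D

lemma two_rpow_neg_pow_mul_dyadic_rpow {N : ℝ} (hN : 0 < N) (α τ : ℝ) (k : ℕ) :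
    ((2 : ℝ) ^ (-τ)) ^ k * (2 ^ k * N) ^ α = N ^ τ * (2 ^ k * N) ^ (α - τ) := by
  have hpow : ((2 : ℝ) ^ (-τ)) ^ k * (2 ^ k * N) ^ τ = N ^ τ := by
    rw [Real.mul_rpow (by positivity) hN.le, ← mul_assoc, ← Real.rpow_natCast_mul zero_le_two,
      ← Real.rpow_mul_natCast zero_le_two, ← Real.rpow_add two_pos]
    simp [mul_comm]
  rw [← hpow, mul_assoc, ← Real.rpow_add (by positivity), add_sub_cancel]

lemma eventually_mul_rpow_mul_exp_neg_le_one (A p : ℝ) {c a : ℝ} (hc : 0 < c) (ha : 0 < a) :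
    ∀ᶠ Q in atTop, A * (Q ^ p * Real.exp (-c * Q ^ a)) ≤ 1 := by
  have hlim := ((tendsto_rpow_mul_exp_neg_mul_atTop_nhds_zero (p / a) c hc).comp
    (tendsto_rpow_atTop ha)).const_mul A
  rw [mul_zero] at hlim
  filter_upwards [hlim.eventually_le_const zero_lt_one, eventually_ge_atTop 0] with Q hQ hQ0
  simpa only [Function.comp_apply, ← Real.rpow_mul hQ0, mul_div_cancel₀ _ ha.ne'] using hQ

lemma eventually_forall_mul_rpow_mul_exp_neg_sq_le (A p Λ : ℝ) {c a : ℝ} (hc : 0 < c)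
    (ha : 0 < a) :
    ∀ᶠ Q in atTop, ∀ b ≥ 1,
      A * (Q ^ p * Real.exp (-c * (b ^ 2 * Q ^ a))) ≤ Real.exp (-(Λ * b ^ 2)) := by
  filter_upwards [eventually_mul_rpow_mul_exp_neg_le_one |A| p (half_pos hc) ha,
    (tendsto_rpow_atTop ha).eventually_ge_atTop (2 * Λ / c), eventually_ge_atTop 0]
    with Q hone hΛ hQ0 b hb
  have hb2 : 1 ≤ b ^ 2 := one_le_pow₀ hb
  have hΛ' : Λ ≤ c / 2 * Q ^ a := by rw [div_le_iff₀ hc] at hΛ; linarith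
  have hsplit : -c * (b ^ 2 * Q ^ a) ≤ -(c / 2) * Q ^ a + -(Λ * b ^ 2) := by
    have : c / 2 * Q ^ a * 1 ≤ c / 2 * Q ^ a * b ^ 2 := by gcongr
    nlinarith
  calc A * (Q ^ p * Real.exp (-c * (b ^ 2 * Q ^ a)))
      ≤ |A| * (Q ^ p * Real.exp (-(c / 2) * Q ^ a + -(Λ * b ^ 2))) := by
        gcongr
        exact le_abs_self A
    _ = |A| * (Q ^ p * Real.exp (-(c / 2) * Q ^ a)) * Real.exp (-(Λ * b ^ 2)) := by
        rw [Real.exp_add]; ring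
    _ ≤ 1 * Real.exp (-(Λ * b ^ 2)) := by gcongr
    _ = _ := one_mul _

lemma eventually_forall_dyadic_level_le (A Λ : ℝ) (D : ℕ) {c a : ℝ} (hc : 0 < c) (ha : 0 < a)
    (τ : ℝ) :
    ∀ᶠ Q in atTop, ∀ b ≥ 1, 2 ≤ c * (b * Q ^ a) ∧
      A * (2 * Q) ^ D * Real.exp (-(c * (b * Q ^ a)) ^ 2 / 8) ≤
        Real.exp (-(Λ * b ^ 2)) / 4 * Q ^ (-(1 + τ)) := by
  filter_upwards [(tendsto_rpow_atTop ha).eventually_ge_atTop (2 / c), eventually_gt_atTop 0,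
    eventually_forall_mul_rpow_mul_exp_neg_sq_le (4 * A * 2 ^ D) (D + (1 + τ)) Λ
      (c := c ^ 2 / 8) (a := a * 2) (by positivity) (by positivity)] with Q hlarge hQ hdecay b hb
  refine ⟨?_, ?_⟩
  · rw [div_le_iff₀' hc] at hlarge
    calc 2 ≤ c * (1 * Q ^ a) := by rwa [one_mul]
      _ ≤ c * (b * Q ^ a) := by gcongr
  · have hexp : -(c * (b * Q ^ a)) ^ 2 / 8 = -(c ^ 2 / 8) * (b ^ 2 * Q ^ (a * 2)) := by
      rw [Real.rpow_mul hQ.le, Real.rpow_two]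
      ring
    have hpow : Q ^ D = Q ^ (D + (1 + τ)) * Q ^ (-(1 + τ)) := by
      rw [← Real.rpow_add hQ, add_neg_cancel_right, Real.rpow_natCast]
    rw [hexp, mul_pow, hpow]
    calc A * (2 ^ D * (Q ^ (D + (1 + τ)) * Q ^ (-(1 + τ)))) *
          Real.exp (-(c ^ 2 / 8) * (b ^ 2 * Q ^ (a * 2)))
        = 4 * A * 2 ^ D * (Q ^ (D + (1 + τ)) *
          Real.exp (-(c ^ 2 / 8) * (b ^ 2 * Q ^ (a * 2)))) / 4 * Q ^ (-(1 + τ)) := by ring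
      _ ≤ _ := by gcongr; exact hdecay b hb

lemma dyadic_rpow_neg_le {N τ b ε : ℝ} (hN : 1 ≤ N) (hτ : 0 < τ) (hb : 1 ≤ b) (hε : 0 < ε)
    (hthreshold : b ^ 2 / ε ≤ N ^ τ) (k : ℕ) :
    (2 ^ k * N) ^ (-(1 + τ)) ≤ ε * (1 / 2) ^ k := by
  have hN0 : 0 < N := by linarith
  have hNτ : N ^ (-τ) ≤ ε := by
    rw [Real.rpow_neg hN0.le]
    refine inv_le_of_inv_le₀ hε (le_trans ?_ hthreshold)
    rw [← one_div]
    gcongr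
    exact one_le_pow₀ hb
  have hNQ : N ≤ 2 ^ k * N := le_mul_of_one_le_left hN0.le (one_le_pow₀ one_le_two)
  calc (2 ^ k * N) ^ (-(1 + τ)) = (2 ^ k * N) ^ (-τ) * (2 ^ k * N)⁻¹ := by
        rw [neg_add, add_comm, Real.rpow_add (by positivity), Real.rpow_neg_one]
    _ ≤ N ^ (-τ) * (2 ^ k * 1)⁻¹ := by
        gcongr ?_ * (2 ^ k * ?_)⁻¹
        exact Real.rpow_le_rpow_of_nonpos hN0 hNQ (by linarith)
    _ ≤ ε * (1 / 2) ^ k := by rw [mul_one, ← inv_pow, ← one_div]; gcongr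

/-- The geometric weights `ρ ^ k` with `ρ = 2 ^ (-τ)` trade part of the modulus of continuity at
scale `κ / (2 ^ k * N)` for the factor `N ^ τ`, which the threshold turns into `b ^ 2 / ε`. -/
lemma mul_le_dyadic_increment_ratio {N τ α b ε C κ w : ℝ} (hN : 0 < N) (hb : 0 < b) (hε : 0 < ε)
    (hC : 0 < C) (hκ : 0 < κ) (hw : 0 ≤ w) (hthreshold : b ^ 2 / ε ≤ N ^ τ) (k : ℕ) :
    w / (C * κ ^ α) * (b * (2 ^ k * N) ^ (α - τ)) ≤
      w * (ε / b) * ((2 : ℝ) ^ (-τ)) ^ k / (C * (κ / (2 ^ k * N)) ^ α) := by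
  calc w / (C * κ ^ α) * (b * (2 ^ k * N) ^ (α - τ))
      = w / (C * κ ^ α) * (ε / b * (b ^ 2 / ε * (2 ^ k * N) ^ (α - τ))) := by field_simp
    _ ≤ w / (C * κ ^ α) * (ε / b * (N ^ τ * (2 ^ k * N) ^ (α - τ))) := by gcongr
    _ = _ := by
      rw [← two_rpow_neg_pow_mul_dyadic_rpow hN, Real.div_rpow hκ.le (by positivity)]
      field_simp

lemma sum_range_one_sub_mul_pow_le_one {ρ : ℝ} (hρ : 0 ≤ ρ) (n : ℕ) :
    ∑ k ∈ Finset.range n, (1 - ρ) * ρ ^ k ≤ 1 := by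
  rw [← Finset.mul_sum, mul_neg_geom_sum]
  linarith [pow_nonneg hρ n]

lemma le_of_le_sq_div_le_rpow {Q N τ b ε : ℝ} (hQ : 0 ≤ Q) (hN : 0 ≤ N) (hτ : 0 < τ) (hb : 1 ≤ b)
    (hε : ε ∈ Ioo (0 : ℝ) 1) (hQb : Q ^ τ ≤ b) (hthreshold : b ^ 2 / ε ≤ N ^ τ) : Q ≤ N := by
  refine (Real.rpow_le_rpow_iff hQ hN hτ).1 (hQb.trans (le_trans ?_ hthreshold))
  calc b ≤ b ^ 2 := le_self_pow₀ hb two_ne_zero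
    _ ≤ b ^ 2 / ε := le_div_self (by positivity) hε.1 hε.2.le

variable [PseudoMetricSpace E]

lemma HasGaussianIncrementTail.sum_real_le {X : E → Ω → ℝ} {C α : ℝ}
    (hX : HasGaussianIncrementTail X C α P) {δ γ x : ℝ} (hδ : δ ∈ Ioc (0 : ℝ) 1) (hC : 0 < C)
    (hx : 2 ≤ x) (hxγ : x ≤ γ / (C * δ ^ α)) {S : Finset E} {π : E → E}
    (hπ : ∀ s, dist s (π s) ≤ δ) :
    ∑ s ∈ S, P.real {ω | γ < X s ω - X (π s) ω} ≤ S.card * Real.exp (-x ^ 2 / 8) := by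
  have hη : 0 < C * δ ^ α := mul_pos hC (Real.rpow_pos_of_pos hδ.1 α)
  rw [← nsmul_eq_mul]
  refine Finset.sum_le_card_nsmul _ _ _ fun s _ => (hX δ hδ γ ?_ s (π s) (hπ s)).trans ?_
  · exact (le_div_iff₀ hη).1 (hx.trans hxγ)
  · gcongr

lemma tendsto_of_dist_le_dyadic {N κ : ℝ} {π : ℕ → E → E}
    (hπ : ∀ k u, dist u (π k u) ≤ κ / (2 ^ k * N)) (u : E) :
    Tendsto (fun k => π k u) atTop (nhds u) := by
  have hscale : Tendsto (fun k : ℕ => κ / (2 ^ k * N)) atTop (nhds 0) := by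
    have := (tendsto_pow_atTop_nhds_zero_of_lt_one (r := (1 / 2 : ℝ)) (by norm_num)
      (by norm_num)).const_mul (κ / N)
    rw [mul_zero] at this
    refine this.congr fun k => ?_
    rw [one_div, inv_pow]
    ring
  exact tendsto_iff_dist_tendsto_zero.2
    (squeeze_zero (fun _ => dist_nonneg) (fun k => (dist_comm _ _).trans_le (hπ k u)) hscale)

lemma exists_forall_sum_real_dyadic_increment_le {C α τ κ w : ℝ} (hC : 0 < C) (hτ : 0 < τ)
    (hτα : τ < α) (hκ : 0 < κ) (hw : 0 < w) (A Λ : ℝ) (D : ℕ) :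
    ∃ b₀ ≥ 1, ∀ ε ∈ Ioo (0 : ℝ) 1, ∀ b ≥ b₀, ∀ N > 0, b ^ 2 / ε ≤ N ^ τ →
      ∀ X : E → Ω → ℝ, HasGaussianIncrementTail X C α P →
        ∀ S : ℕ → Finset E, IsDyadicNet S N κ A D →
          ∀ π : ℕ → E → E, (∀ k u, dist u (π k u) ≤ κ / (2 ^ k * N)) → ∀ k,
            ∑ s ∈ S (k + 1),
                P.real {ω | w * (ε / b) * ((2 : ℝ) ^ (-τ)) ^ k < X s ω - X (π k s) ω} ≤
              ε / 4 * Real.exp (-(Λ * b ^ 2)) * (1 / 2) ^ k := by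
  obtain ⟨Q₀, hQ₀⟩ := ((eventually_forall_dyadic_level_le A Λ D
    (show 0 < w / (C * κ ^ α) by positivity) (sub_pos.2 hτα) τ).and
      ((eventually_ge_atTop κ).and (eventually_ge_atTop 1))).exists_forall_of_atTop
  refine ⟨max 1 (|Q₀| ^ τ), le_max_left _ _, ?_⟩
  intro ε hε b hb N hN hthreshold X hX S hS π hπ k
  have hb1 : 1 ≤ b := (le_max_left _ _).trans hb
  have hQN : Q₀ ≤ N := (le_abs_self Q₀).trans (le_of_le_sq_div_le_rpow (abs_nonneg Q₀) hN.le hτ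
    hb1 hε ((le_max_right _ _).trans hb) hthreshold)
  have hNQ : N ≤ 2 ^ k * N := le_mul_of_one_le_left hN.le (one_le_pow₀ one_le_two)
  obtain ⟨hdecay, hκQ, -⟩ := hQ₀ (2 ^ k * N) (hQN.trans hNQ)
  have hδ : κ / (2 ^ k * N) ∈ Ioc (0 : ℝ) 1 :=
    ⟨by positivity, div_le_one_of_le₀ hκQ (by positivity)⟩
  set x := w / (C * κ ^ α) * (b * (2 ^ k * N) ^ (α - τ))
  calc ∑ s ∈ S (k + 1), P.real {ω | w * (ε / b) * ((2 : ℝ) ^ (-τ)) ^ k < X s ω - X (π k s) ω}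
      ≤ (S (k + 1)).card * Real.exp (-x ^ 2 / 8) :=
        hX.sum_real_le hδ hC (hdecay b hb1).1 (mul_le_dyadic_increment_ratio hN (by linarith)
          hε.1 hC hκ hw.le hthreshold k) (hπ k)
    _ ≤ A * (2 * (2 ^ k * N)) ^ D * Real.exp (-x ^ 2 / 8) := by
        gcongr
        rw [← mul_assoc, ← pow_succ']
        exact hS.card_le (k + 1)
    _ ≤ Real.exp (-(Λ * b ^ 2)) / 4 * (2 ^ k * N) ^ (-(1 + τ)) := (hdecay b hb1).2
    _ ≤ Real.exp (-(Λ * b ^ 2)) / 4 * (ε * (1 / 2) ^ k) := by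
        gcongr
        exact dyadic_rpow_neg_le (hQ₀ N hQN).2.2 hτ hb1 hε.1 hthreshold k
    _ = _ := by ring

lemma exists_forall_real_excursion_univ_le_add [IsFiniteMeasure P] {C α τ κ c : ℝ} (hC : 0 < C)
    (hτ : 0 < τ) (hτα : τ < α) (hκ : 0 < κ) (hc : 0 < c) (A Λ : ℝ) (D : ℕ) :
    ∃ b₀ ≥ 1, ∀ ε ∈ Ioo (0 : ℝ) 1, ∀ b ≥ b₀, ∀ N > 0, b ^ 2 / ε ≤ N ^ τ →
      ∀ X : E → Ω → ℝ, HasGaussianIncrementTail X C α P →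
        (∀ᵐ ω ∂P, Continuous fun u => X u ω) →
          ∀ S : ℕ → Finset E, IsDyadicNet S N κ A D →
            P.real (excursion X univ b) ≤
              P.real (excursion X (S 0) (b - c * (ε / b))) +
                ε / 2 * Real.exp (-(Λ * b ^ 2)) := by
  have hρ1 : (2 : ℝ) ^ (-τ) < 1 := Real.rpow_lt_one_of_one_lt_of_neg one_lt_two (by linarith)
  obtain ⟨b₀, hb₀, hlevel⟩ := exists_forall_sum_real_dyadic_increment_le (P := P) (E := E) hC hτ
    hτα hκ (mul_pos hc (sub_pos.2 hρ1)) A Λ D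
  refine ⟨b₀, hb₀, ?_⟩
  intro ε hε b hb N hN hthreshold X hX hcont S hS
  choose π hπS hπ using hS.exists_dist_le
  refine real_excursion_univ_le_of_chain hcont hπS (tendsto_of_dist_le_dyadic hπ)
    (fun n => ?_) (hlevel ε hε b hb N hN hthreshold X hX S hS π hπ) ?_ b
  · have hγ : 0 ≤ c * (ε / b) := mul_nonneg hc.le (div_nonneg hε.1.le (by linarith))
    calc ∑ k ∈ Finset.range n, c * (1 - (2 : ℝ) ^ (-τ)) * (ε / b) * ((2 : ℝ) ^ (-τ)) ^ k
        = c * (ε / b) * ∑ k ∈ Finset.range n,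
            (1 - (2 : ℝ) ^ (-τ)) * ((2 : ℝ) ^ (-τ)) ^ k := by
          rw [Finset.mul_sum]
          exact Finset.sum_congr rfl fun k _ => by ring
      _ ≤ c * (ε / b) :=
          mul_le_of_le_one_right hγ (sum_range_one_sub_mul_pow_le_one (by positivity) n)
  · have hsum := hasSum_geometric_two.mul_left (ε / 4 * Real.exp (-(Λ * b ^ 2)))
    rwa [show ε / 4 * Real.exp (-(Λ * b ^ 2)) * 2 = ε / 2 * Real.exp (-(Λ * b ^ 2)) by ring] at hsum

end Chaining

section RelativeBias

variable {Ω E : Type*} {mΩ : MeasurableSpace Ω} {P : Measure Ω}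

lemma exists_forall_exp_le_real_excursion_univ {σl μl : ℝ} (hσl : 0 < σl) {f : E → Ω → ℝ} {t : E}
    (hlaw : HasLaw (f t) (gaussianReal 0 1) P) :
    ∃ Λ ≥ 1, ∀ b ≥ 1, ∀ σ μ : E → ℝ, σl ≤ σ t → μl ≤ μ t →
      Real.exp (-(Λ * b ^ 2)) ≤ P.real (excursion (affineField f σ μ) univ b) := by
  obtain ⟨Λ, hΛ, hexp⟩ := exists_exp_le_stdGaussian_affine (m₀ := μl) hσl
  have := hlaw.isFiniteMeasure
  refine ⟨Λ, hΛ, fun b hb σ μ hσ hμ => (hexp b hb _ hσ _ hμ).trans ?_⟩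
  rw [← hlaw.measureReal_eq (p := fun x => b < σ t * x + μ t)
    (measurableSet_lt measurable_const (by fun_prop))]
  exact measureReal_mono fun ω hω => ⟨t, mem_univ t, hω⟩

variable [PseudoMetricSpace E]

lemma continuous_of_abs_sub_le_mul_dist_rpow {h : E → ℝ} {κ β : ℝ} (hβ : 0 < β)
    (hh : ∀ s t, |h t - h s| ≤ κ * dist s t ^ β) : Continuous h := by
  refine continuous_iff_continuousAt.2 fun s => tendsto_iff_dist_tendsto_zero.2 ?_
  have hlim : Tendsto (fun t => κ * dist s t ^ β) (nhds s) (nhds (κ * dist s s ^ β)) :=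
    (continuous_const.mul
      ((continuous_const.dist continuous_id).rpow_const fun _ => .inr hβ.le)).tendsto s
  rw [dist_self, Real.zero_rpow hβ.ne', mul_zero] at hlim
  exact squeeze_zero (fun _ => dist_nonneg) (hh s) hlim

lemma IsHolderScaling.continuous_affineField {σl σu μl β κ : ℝ} {σ μ : E → ℝ}
    (h : IsHolderScaling σl σu μl β κ σ μ) (hβ : 0 < β) {f : E → Ω → ℝ} {ω : Ω}
    (hf : Continuous fun u => f u ω) : Continuous fun u => affineField f σ μ u ω :=
  ((continuous_of_abs_sub_le_mul_dist_rpow hβ h.abs_scale_sub_le).mul hf).add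
    (continuous_of_abs_sub_le_mul_dist_rpow hβ h.abs_shift_sub_le)

theorem exists_forall_relative_bias_lt [Nonempty E] (hE : TotallyBounded (univ : Set E))
    {f : E → Ω → ℝ} (hf : IsGaussianProcess f P) (hlaw : ∀ t, HasLaw (f t) (gaussianReal 0 1) P)
    (hcont : ∀ᵐ ω ∂P, Continuous fun u => f u ω) {β' κ' : ℝ} (hβ' : 0 < β') (hκ' : 0 < κ')
    (hcov : ∀ s t, 1 - cov[f s, f t; P] ≤ κ' * dist s t ^ β') (μl : ℝ) {σl : ℝ} (hσl : 0 < σl)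
    (σu : ℝ) {β κ κm : ℝ} (hβ : 0 < β) (hκ : 0 < κ) (hκm : 0 < κm) (A : ℝ) (D : ℕ) {τ : ℝ}
    (hτ : 0 < τ) (hτβ : τ < min β β' / 2) :
    ∃ b₀ ≥ 1, ∀ ε ∈ Ioo (0 : ℝ) 1, ∀ b ≥ b₀, ∀ N > 0, b ^ 2 / ε ≤ N ^ τ →
      ∀ S : ℕ → Finset E, IsDyadicNet S N κm A D →
        ∀ σ μ : E → ℝ, IsHolderScaling σl σu μl β κ σ μ →
          |P.real (excursion (affineField f σ μ) (S 0) b) -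
              P.real (excursion (affineField f σ μ) univ b)| /
            P.real (excursion (affineField f σ μ) univ b) < ε := by
  have := hf.isProbabilityMeasure
  obtain ⟨t⟩ := ‹Nonempty E›
  obtain ⟨Λ, hΛ, hlower⟩ := exists_forall_exp_le_real_excursion_univ (μl := μl) hσl (hlaw t)
  obtain ⟨c, hc, hlayer⟩ :=
    exists_forall_real_excursion_diff_le_mul hE hf hlaw hκ' hβ' hσl hcov hΛ
  obtain ⟨C, hC, htail⟩ := exists_forall_hasGaussianIncrementTail_affineField (σu := σu) hf hlaw
    μl hσl.le hβ hκ hβ' hκ'.le hcov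
  obtain ⟨b₀, hb₀, hchain⟩ := exists_forall_real_excursion_univ_le_add (P := P) (E := E) hC hτ
    hτβ hκm hc A Λ D
  refine ⟨b₀, hb₀, ?_⟩
  intro ε hε b hb N hN hthreshold S hS σ μ hσμ
  have hb1 : 1 ≤ b := hb₀.trans hb
  set X := affineField f σ μ
  have hw := hlower b hb1 σ μ (hσμ.le_scale t) (hσμ.le_shift t)
  have hwchain := hchain ε hε b hb N hN hthreshold X (htail σ μ hσμ)
    (hcont.mono fun ω hω => hσμ.continuous_affineField hβ hω) S hS
  have hvlayer := (le_measureReal_sdiff (measure_ne_top _ _)).trans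
    (hlayer ε hε b hb1 σ μ hσμ.le_scale (S 0))
  have hvw : P.real (excursion X (S 0) b) ≤ P.real (excursion X univ b) :=
    measureReal_mono (excursion_subset_excursion (subset_univ _) le_rfl)
  have hw0 : 0 < P.real (excursion X univ b) := (Real.exp_pos _).trans_le hw
  rw [abs_sub_comm, abs_of_nonneg (sub_nonneg.2 hvw), div_lt_iff₀ hw0]
  nlinarith [mul_pos hε.1 hw0, mul_le_mul_of_nonneg_left hw hε.1.le,
    mul_le_mul_of_nonneg_left hvw hε.1.le]

end RelativeBias

section EuclideanLattice

lemma exists_forall_sq_div_le_rpow {β ε₀ : ℝ} (hβ : 0 < β) (hε₀ : 0 < ε₀) :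
    ∃ τ > 0, τ < β / 2 ∧ ∀ b ≥ 1, ∀ ε ∈ Ioo (0 : ℝ) 1, ∀ N : ℝ,
      b ^ (2 / β * (2 + ε₀)) * ε ^ (-(2 / β + ε₀)) ≤ N → b ^ 2 / ε ≤ N ^ τ := by
  set m := ε₀ * min 1 β
  have hm : 0 < m := mul_pos hε₀ (lt_min one_pos hβ)
  have hm1 : m ≤ ε₀ * 1 := mul_le_mul_of_nonneg_left (min_le_left _ _) hε₀.le
  have hmβ : m ≤ ε₀ * β := mul_le_mul_of_nonneg_left (min_le_right _ _) hε₀.le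
  refine ⟨β / (2 + m), by positivity, by gcongr; linarith, fun b hb ε hε N hN => ?_⟩
  obtain ⟨hε0, hε1⟩ := hε
  have hb0 : 0 < b := by linarith
  have hbexp : (2 : ℕ) ≤ 2 / β * (2 + ε₀) * (β / (2 + m)) := by
    rw [show 2 / β * (2 + ε₀) * (β / (2 + m)) = 2 * (2 + ε₀) / (2 + m) by field_simp,
      le_div_iff₀ (by positivity)]
    push_cast
    linarith
  have hεexp : -(2 / β + ε₀) * (β / (2 + m)) ≤ -1 := by
    rw [show -(2 / β + ε₀) * (β / (2 + m)) = -((2 + ε₀ * β) / (2 + m)) by field_simp,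
      neg_le_neg_iff, le_div_iff₀ (by positivity)]
    linarith
  calc b ^ 2 / ε = b ^ ((2 : ℕ) : ℝ) * ε ^ (-1 : ℝ) := by
        rw [Real.rpow_natCast, Real.rpow_neg_one, div_eq_mul_inv]
    _ ≤ b ^ (2 / β * (2 + ε₀) * (β / (2 + m))) * ε ^ (-(2 / β + ε₀) * (β / (2 + m))) := by
        gcongr ?_ * ?_
        · exact Real.rpow_le_rpow_of_exponent_le hb hbexp
        · exact Real.rpow_le_rpow_of_exponent_ge hε0 hε1.le hεexp
    _ = (b ^ (2 / β * (2 + ε₀)) * ε ^ (-(2 / β + ε₀))) ^ (β / (2 + m)) := by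
        rw [Real.mul_rpow (by positivity) (by positivity), ← Real.rpow_mul hb0.le,
          ← Real.rpow_mul hε0.le]
    _ ≤ N ^ (β / (2 + m)) := by gcongr

variable {d : ℕ} {T : Set (EuclideanSpace ℝ (Fin d))}

lemma totallyBounded_univ_coe_of_isBounded {X : Type*} [PseudoMetricSpace X] [ProperSpace X]
    {T : Set X} (hT : Bornology.IsBounded T) : TotallyBounded (univ : Set T) := by
  rw [← totallyBounded_image_iff (isUniformInducing_val T), Subtype.coe_image_univ]
  exact hT.isCompact_closure.totallyBounded.subset subset_closure

lemma exists_finset_coe_eq_latticePoints {R : ℝ} (hR : 0 ≤ R) (hT : ∀ u ∈ T, ‖u‖ ≤ R) {N : ℕ}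
    (hN : 1 ≤ N) :
    ∃ S : Finset (EuclideanSpace ℝ (Fin d)),
      (S : Set (EuclideanSpace ℝ (Fin d))) = latticePoints d T N ∧
        (S.card : ℝ) ≤ (2 * R + 3) ^ d * (N : ℝ) ^ d := by
  classical
  have hN1 : (1 : ℝ) ≤ N := by exact_mod_cast hN
  set m : ℕ := ⌈R * N⌉₊
  set F : Finset (EuclideanSpace ℝ (Fin d)) :=
    (Fintype.piFinset fun _ : Fin d => Finset.Icc (-(m : ℤ)) m).image
      fun z => WithLp.toLp 2 fun j => (z j : ℝ) / N
  have hF : (F.card : ℝ) ≤ (2 * m + 1 : ℝ) ^ d := by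
    refine (Nat.cast_le.2 Finset.card_image_le).trans_eq ?_
    simp only [Fintype.card_piFinset, Int.card_Icc, Finset.prod_const, Finset.card_univ,
      Fintype.card_fin, show ((m : ℤ) + 1 - -m).toNat = 2 * m + 1 by lia]
    push_cast
    rfl
  have hsub : latticePoints d T N ⊆ F := by
    rintro u ⟨huT, hu⟩
    choose z hz using hu
    refine Finset.mem_coe.2 (Finset.mem_image.2 ⟨z, ?_, by ext j; exact (hz j).symm⟩)
    refine Fintype.mem_piFinset.2 fun j => Finset.mem_Icc.2 (abs_le.1 ?_)
    have huj : |u j| ≤ R := (PiLp.norm_apply_le u j).trans (hT u huT)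
    rw [hz j, abs_div, Nat.abs_cast, div_le_iff₀ (by linarith)] at huj
    have hzm : |(z j : ℝ)| ≤ m := huj.trans (Nat.le_ceil _)
    exact_mod_cast hzm
  have hfin := F.finite_toSet.subset hsub
  refine ⟨hfin.toFinset, hfin.coe_toFinset, ?_⟩
  calc (hfin.toFinset.card : ℝ) ≤ F.card := by
        exact_mod_cast Finset.card_le_card (hfin.toFinset_subset.2 hsub)
    _ ≤ (2 * m + 1 : ℝ) ^ d := hF
    _ ≤ ((2 * R + 3) * N) ^ d := by
        have hm : (m : ℝ) ≤ R * N + 1 := (Nat.ceil_lt_add_one (by positivity)).le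
        gcongr
        nlinarith
    _ = _ := mul_pow _ _ _

lemma exists_forall_isDyadicNet_latticePoints (hT : Bornology.IsBounded T) {κ : ℝ}
    (hnet : ∀ N : ℕ, 1 ≤ N → ∀ u ∈ T, ∃ u' ∈ latticePoints d T N, dist u u' ≤ κ / N) :
    ∃ A, ∀ N : ℕ, 1 ≤ N → ∃ S : ℕ → Finset T,
      Subtype.val '' (S 0 : Set T) = latticePoints d T N ∧ IsDyadicNet S N κ A d := by
  classical
  obtain ⟨R, hR0, hR⟩ := hT.exists_pos_norm_le
  refine ⟨(2 * R + 3) ^ d, fun N hN => ?_⟩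
  have hlevel : ∀ k, 1 ≤ 2 ^ k * N := fun k => Nat.mul_pos (by positivity) hN
  choose L hL hcard using fun k => exists_finset_coe_eq_latticePoints hR0.le hR (hlevel k)
  have hmem : ∀ k u, u ∈ L k ↔ u ∈ latticePoints d T (2 ^ k * N) := fun k u => by
    rw [← Finset.mem_coe, hL]
  refine ⟨fun k => (L k).subtype (· ∈ T), ?_, fun k u => ?_, fun k => ?_⟩
  · ext u
    have := hmem 0 u
    rw [pow_zero, one_mul] at this
    simp only [mem_image, Finset.mem_coe, Finset.mem_subtype, Subtype.exists, exists_and_left,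
      exists_prop, exists_eq_right_right, this]
    exact and_iff_left_of_imp And.left
  · obtain ⟨s, hs, hdist⟩ := hnet _ (hlevel k) u u.2
    refine ⟨⟨s, hs.1⟩, Finset.mem_subtype.2 ((hmem k s).2 hs), ?_⟩
    exact_mod_cast hdist
  · rw [Finset.card_subtype]
    calc _ ≤ ((L k).card : ℝ) := by exact_mod_cast Finset.card_filter_le _ _
      _ ≤ _ := by exact_mod_cast hcard k

end EuclideanLattice

section RestrictedField

variable {Ω E : Type*} {mΩ : MeasurableSpace Ω} {P : Measure Ω}

lemma isGaussianProcess_of_forall_hasGaussianLaw_sum {f : E → Ω → ℝ}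
    (hf : ∀ t, AEMeasurable (f t) P)
    (hsum : ∀ (I : Finset E) (c : E → ℝ), HasGaussianLaw (fun ω => ∑ t ∈ I, c t * f t ω) P) :
    IsGaussianProcess f P := by
  classical
  refine ⟨fun I => ⟨isGaussian_of_isGaussian_map fun L => ?_⟩⟩
  have hL : (L ∘ fun ω => I.restrict fun t => f t ω) =
      fun ω => ∑ t ∈ I, (if h : t ∈ I then L (Pi.single ⟨t, h⟩ 1) else 0) * f t ω := by
    ext ω
    rw [← Finset.sum_coe_sort I, Function.comp_apply, ← ContinuousLinearMap.coe_coe,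
      LinearMap.pi_apply_eq_sum_univ]
    refine Finset.sum_congr rfl fun t _ => ?_
    rw [dif_pos t.2, smul_eq_mul, mul_comm]
    congr 2
    ext s
    simp [Pi.single_apply, eq_comm]
  have hm : AEMeasurable (fun ω => I.restrict fun t => f t ω) P :=
    aemeasurable_pi_lambda _ fun t => hf t
  rw [AEMeasurable.map_map_of_aemeasurable L.continuous.aemeasurable hm, hL]
  exact (hsum I _).isGaussian_map

lemma isGaussianProcess_subtype_of_map_sum_eq_gaussianReal {T : Set E} {f : E → Ω → ℝ}
    (hmeas : ∀ u, Measurable (f u))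
    (hf : ∀ s : Finset E, ↑s ⊆ T → ∀ c : E → ℝ, ∃ v : NNReal,
      P.map (fun ω => ∑ u ∈ s, c u * f u ω) = gaussianReal 0 v) :
    IsGaussianProcess (fun u : T => f u) P := by
  refine isGaussianProcess_of_forall_hasGaussianLaw_sum (fun u => (hmeas u).aemeasurable)
    fun I c => ?_
  obtain ⟨v, hv⟩ := hf (I.map (Function.Embedding.subtype _)) (by simp)
    (Function.extend Subtype.val c 0)
  refine ⟨?_⟩
  simp only [Finset.sum_map, Function.Embedding.subtype_apply,
    Subtype.val_injective.extend_apply] at hv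
  rw [hv]
  infer_instance

lemma one_sub_covariance_le_of_abs_integral_sub_le [PseudoMetricSpace E]
    {f : E → Ω → ℝ} (hlaw : ∀ t, HasLaw (f t) (gaussianReal 0 1) P) {κ β : ℝ} (hβ : 0 < β)
    (hr : ∀ s u s' u', |(∫ ω, f u ω * f s ω ∂P) - (∫ ω, f u' ω * f s' ω ∂P)| ≤
      κ * (dist u u' ^ β + dist s s' ^ β)) (s t : E) :
    1 - cov[f s, f t; P] ≤ κ * dist s t ^ β := by
  have hcov : ∀ u, cov[f u, f s; P] = ∫ ω, f u ω * f s ω ∂P := fun u => by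
    have hmean : ∀ u, P[f u] = 0 := fun u => by simpa using (hlaw u).integral_eq
    simp only [covariance, hmean, sub_zero]
  have hvar : cov[f s, f s; P] = 1 := by
    rw [covariance_self (hlaw s).aemeasurable]
    simpa using (hlaw s).variance_eq
  have h := (le_abs_self _).trans (hr s s s t)
  rwa [← hcov, ← hcov, hvar, dist_self, Real.zero_rpow hβ.ne', add_zero, covariance_comm] at h

end RestrictedField

theorem discretization_bias_bound_general
    {Ω : Type*} [MeasurableSpace Ω] {P : Measure Ω}
    {d : ℕ} {T : Set (EuclideanSpace ℝ (Fin d))}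
    (hT : Bornology.IsBounded T) (hTne : T.Nonempty)
    {f : EuclideanSpace ℝ (Fin d) → Ω → ℝ} (hmeas : ∀ u, Measurable (f u))
    (hGauss : ∀ s : Finset (EuclideanSpace ℝ (Fin d)), ↑s ⊆ T →
      ∀ c : EuclideanSpace ℝ (Fin d) → ℝ, ∃ v : NNReal,
        P.map (fun ω => ∑ u ∈ s, c u * f u ω) = gaussianReal 0 v)
    (hstd : ∀ u ∈ T, P.map (f u) = gaussianReal 0 1)
    (hcont : ∀ᵐ ω ∂P, ContinuousOn (fun u => f u ω) T)
    (μl : ℝ) {σl : ℝ} (hσl : 0 < σl) (σu : ℝ) {β κ β' κ' κm : ℝ} (hβ : 0 < β) (hκ : 0 < κ)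
    (hβ' : 0 < β') (hκ' : 0 < κ') (hκm : 0 < κm)
    (hr : ∀ s ∈ T, ∀ u ∈ T, ∀ s' ∈ T, ∀ u' ∈ T,
      |(∫ ω, f u ω * f s ω ∂P) - (∫ ω, f u' ω * f s' ω ∂P)| ≤
        κ' * (dist u u' ^ β' + dist s s' ^ β'))
    (hnet : ∀ N : ℕ, 1 ≤ N → ∀ u ∈ T, ∃ u' ∈ latticePoints d T N, dist u u' ≤ κm / N)
    {ε₀ : ℝ} (hε₀ : 0 < ε₀) :
    ∃ b₀ ≥ 1, ∀ ε ∈ Ioo (0 : ℝ) 1, ∀ b ≥ b₀, ∀ N : ℕ,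
      b ^ (2 / min β β' * (2 + ε₀)) * ε ^ (-(2 / min β β' + ε₀)) ≤ N →
        ∀ σ μ : EuclideanSpace ℝ (Fin d) → ℝ,
          (∀ u ∈ T, σ u ∈ Icc σl σu) → (∀ u ∈ T, μl ≤ μ u) →
          (∀ s ∈ T, ∀ u ∈ T, |σ u - σ s| + |μ u - μ s| ≤ κ * dist s u ^ β) →
          |P.real (excursion (affineField f σ μ) (latticePoints d T N) b) -
              P.real (excursion (affineField f σ μ) T b)| /
            P.real (excursion (affineField f σ μ) T b) < ε := by
  have := hTne.to_subtype
  have hlaw (u : T) : HasLaw (f u) (gaussianReal 0 1) P := ⟨(hmeas u).aemeasurable, hstd u u.2⟩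
  have hcov := one_sub_covariance_le_of_abs_integral_sub_le (f := fun u : T => f u) hlaw hβ'
    fun s u s' u' => hr s s.2 u u.2 s' s'.2 u' u'.2
  obtain ⟨τ, hτ, hτβ, hthreshold⟩ := exists_forall_sq_div_le_rpow (lt_min hβ hβ') hε₀
  obtain ⟨A, hlattice⟩ := exists_forall_isDyadicNet_latticePoints hT hnet
  obtain ⟨b₀, hb₀, hbias⟩ := exists_forall_relative_bias_lt
    (totallyBounded_univ_coe_of_isBounded hT)
    (isGaussianProcess_subtype_of_map_sum_eq_gaussianReal hmeas hGauss) hlaw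
    (hcont.mono fun _ => ContinuousOn.domRestrict) hβ' hκ' hcov μl hσl σu hβ hκ hκm A d hτ hτβ
  refine ⟨b₀, hb₀, fun ε hε b hb N hN σ μ hσ hμ hσμ => ?_⟩
  have hb1 : 1 ≤ b := hb₀.trans hb
  have hε0 : 0 < ε := hε.1
  have hN0 : (0 : ℝ) < N := lt_of_lt_of_le (by positivity) hN
  obtain ⟨S, hS0, hS⟩ := hlattice N (Nat.cast_pos.1 hN0)
  have hclass : IsHolderScaling σl σu μl β κ (fun u : T => σ u) fun u : T => μ u :=
    ⟨fun u => (hσ u u.2).1, fun u => (hσ u u.2).2, fun u => hμ u u.2,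
      fun s u => hσμ s s.2 u u.2⟩
  have hexcursion := excursion_image (affineField f σ μ) ((↑) : T → _) univ b
  rw [Subtype.coe_image_univ] at hexcursion
  rw [hexcursion, ← hS0, excursion_image]
  exact hbias ε hε b hb N hN0 (hthreshold b hb1 ε hε N hN) S hS _ _ hclass

/-- **Uniform control of the discretization bias (Theorem 1).**  Under C1–C4, with
`β* = min(β, β')` and `N₀(ε,b) = b^{(2/β*)(3d/β* + 2 + ε₀)} ε^{−(2/β* + ε₀)}`:
for any `ε₀ > 0` there is `b₀` such that for every `ε ∈ (0,1)`, `b > b₀` and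
`N ≥ N₀(ε,b)`, `|w_{σ,μ,N}(b) − w_{σ,μ}(b)| / w_{σ,μ}(b) < ε`, uniformly over the
Hölder class `C(μ_l, μ_u, σ_l, σ_u, β, κ_H)`. -/
theorem discretization_bias_bound
    {Ω : Type*} [MeasurableSpace Ω] (P : Measure Ω) [IsProbabilityMeasure P]
    {d : ℕ} (T : Set (EuclideanSpace ℝ (Fin d)))
    (hT : IsCompact T) (hTne : T.Nonempty)
    (f : EuclideanSpace ℝ (Fin d) → Ω → ℝ)
    (hmeas : ∀ u, Measurable (f u))
    (hGauss : ∀ s : Finset (EuclideanSpace ℝ (Fin d)), ↑s ⊆ T →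
      ∀ c : EuclideanSpace ℝ (Fin d) → ℝ, ∃ v : NNReal,
        Measure.map (fun ω => ∑ u ∈ s, c u * f u ω) P = gaussianReal 0 v)
    (hstd : ∀ u ∈ T, Measure.map (f u) P = gaussianReal 0 1)
    -- C3: almost sure continuity of the sample paths
    (hcont : ∀ᵐ ω ∂P, ContinuousOn (fun u => f u ω) T)
    (μl μu σl σu β κH β' κH' κm : ℝ)
    (hμ : μl ≤ μu) (hσl : 0 < σl) (hσ : σl ≤ σu) (hβ : 0 < β) (hκH : 0 < κH)
    (hβ' : 0 < β') (hκH' : 0 < κH') (hκm : 0 < κm)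
    -- C4: Hölder continuity of the correlation function r(s,t) = E[f(s)f(t)]
    (hC4 : ∀ s ∈ T, ∀ u ∈ T, ∀ s' ∈ T, ∀ u' ∈ T,
      |(∫ ω, f u ω * f s ω ∂P) - (∫ ω, f u' ω * f s' ω ∂P)| ≤
        κH' * (dist u u' ^ β' + dist s s' ^ β'))
    -- C2: the lattice T_N is a (κ_m/N)-net of T
    (hC2 : ∀ N : ℕ, 1 ≤ N → ∀ u ∈ T, ∃ u' ∈ latticePoints d T N, dist u u' ≤ κm / N) :
    ∀ ε0 > (0 : ℝ), ∃ b0 : ℝ, ∀ ε ∈ Set.Ioo (0 : ℝ) 1, ∀ b > b0, ∀ N : ℕ,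
      (N : ℝ) ≥ b ^ ((2 / min β β') * (3 * (d : ℝ) / min β β' + 2 + ε0)) *
        ε ^ (-(2 / min β β' + ε0)) →
      ∀ σ μ : EuclideanSpace ℝ (Fin d) → ℝ,
        (∀ u ∈ T, σ u ∈ Set.Icc σl σu) → (∀ u ∈ T, μ u ∈ Set.Icc μl μu) →
        (∀ s ∈ T, ∀ u ∈ T, |σ u - σ s| + |μ u - μ s| ≤ κH * dist s u ^ β) →
        |(P {ω | ∃ u ∈ latticePoints d T N, σ u * f u ω + μ u > b}).toReal -
            (P {ω | ∃ u ∈ T, σ u * f u ω + μ u > b}).toReal| /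
          (P {ω | ∃ u ∈ T, σ u * f u ω + μ u > b}).toReal < ε := by
  intro ε₀ hε₀
  obtain ⟨b₀, hb₀, hbias⟩ := discretization_bias_bound_general hT.isBounded hTne hmeas hGauss hstd
    hcont μl hσl σu hβ hκH hβ' hκH' hκm hC4 hC2 hε₀
  refine ⟨b₀, fun ε hε b hb N hN σ μ hσ hμ =>
    hbias ε hε b hb.le N (le_trans ?_ hN) σ μ hσ fun u hu => (hμ u hu).1⟩
  have hε0 : 0 < ε := hε.1
  have hb1 : 1 ≤ b := hb₀.trans hb.le
  gcongr
  linarith [show 0 ≤ 3 * d / min β β' by positivity]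
end

section
/- (Conditional overshoot bound; Proposition 6.5 of Adler–Blanchet–Liu.) Let {f(t) : t ∈ T} be a centered, unit-variance, almost surely continuous Gaussian random field on a compact T ⊂ ℝ^d whose correlation satisfies |r(t,s) − r(t',s')| ≤ κ_H'(|t−t'|^{β'} + |s−s'|^{β'}), and let (σ, μ) belong to the class C(μ_l, μ_u, σ_l, σ_u, β, κ_H). For any v > 0, let β* = min(β, β') and ρ = 2d/β* + dv + 1. Then there exist constants b_0, λ ∈ (0, ∞) such that for all b ≥ b_0 ≥ 1 and all γ ∈ (0, 1], P( max_{t∈T}(σ(t)f(t) + μ(t)) ≤ b + γ/b | max_{t∈T}(σ(t)f(t) + μ(t)) > b ) ≤ λ γ b^ρ. -/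
open MeasureTheory ProbabilityTheory Filter Set

/-! Fix a point `o`. Regressing on `X o` gives `X t = a t * X o + Y t` with `Y` independent of
`X o`, and near `o` the slopes satisfy `a t ≥ 1 / 2`, since they are continuous with `a o = 1`.
Conditionally on `Y`, the event `{b < sup X ≤ b + δ}` then confines `X o` to an interval of length
`2 * δ`, above which `sup X > b` throughout. The density of `X o ~ N(m, v)` at a point is at most
the integral beyond that point of the score `((X o - m) / v)⁺`, so the event has probability at most
`2 * δ * E[((X o - m) / v)⁺; sup X > b]`. As `{X o > b} ⊆ {sup X > b}`, the Gaussian tail makes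
this expectation `O(1 + |b|) * P(sup X > b)`. Compactness reduces the index set to finitely many
such neighbourhoods. -/

section GaussianReal

lemma hasDerivAt_gaussianPDFReal (m : ℝ) (v : NNReal) (x : ℝ) :
    HasDerivAt (gaussianPDFReal m v) (-((x - m) / v * gaussianPDFReal m v x)) x := by
  have h : HasDerivAt (fun y : ℝ ↦ -(y - m) ^ 2 / (2 * v)) (-((x - m) / v)) x := by
    refine ((((hasDerivAt_id x).sub_const m).pow 2).neg.div_const (2 * v : ℝ)).congr_deriv ?_
    simp only [id, Nat.cast_ofNat, Nat.add_one_sub_one, pow_one, mul_one, ← mul_neg, neg_div,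
      mul_div_mul_left _ _ (two_ne_zero' ℝ)]
  refine (h.exp.const_mul (√(2 * Real.pi * v))⁻¹).congr_deriv ?_
  rw [gaussianPDFReal]
  ring

lemma tendsto_gaussianPDFReal_atTop (m : ℝ) (v : NNReal) :
    Tendsto (gaussianPDFReal m v) atTop (nhds 0) := by
  rcases eq_or_ne v 0 with rfl | hv
  · rw [gaussianPDFReal_zero_var]
    exact tendsto_const_nhds
  have h : Tendsto (fun x : ℝ ↦ (x - m) ^ 2 / (2 * v)) atTop atTop :=
    ((tendsto_pow_atTop two_ne_zero).comp
      (tendsto_atTop_add_const_right _ (-m) tendsto_id)).atTop_div_const (by positivity)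
  have := (Real.tendsto_exp_neg_atTop_nhds_zero.comp h).const_mul (√(2 * Real.pi * v))⁻¹
  simpa only [gaussianPDFReal_def, neg_div, Function.comp_def, mul_zero] using this

variable {m : ℝ} {v : NNReal}

lemma gaussianPDF_le_gaussianPDF {x y : ℝ} (h : |x - m| ≤ |y - m|) :
    gaussianPDF m v y ≤ gaussianPDF m v x := by
  have := sq_le_sq.2 h
  unfold gaussianPDF gaussianPDFReal
  gcongr

lemma setLIntegral_Ioi_score_gaussianReal (hv : v ≠ 0) {x : ℝ} (hx : m ≤ x) :
    ∫⁻ z in Ioi x, ENNReal.ofReal ((z - m) / v) ∂gaussianReal m v = gaussianPDF m v x := by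
  have hpos : ∀ z ∈ Ioi x, 0 ≤ (z - m) / v * gaussianPDFReal m v z := fun z hz ↦
    mul_nonneg (div_nonneg (sub_nonneg.2 (hx.trans hz.out.le)) v.2) (gaussianPDFReal_nonneg m v z)
  have hint : IntegrableOn (fun z ↦ (z - m) / v * gaussianPDFReal m v z) (Ioi x) := by
    simpa using (integrableOn_Ioi_deriv_of_nonpos' (fun z _ ↦ hasDerivAt_gaussianPDFReal m v z)
      (fun z hz ↦ neg_nonpos.2 (hpos z hz)) (tendsto_gaussianPDFReal_atTop m v)).neg
  have hI : ∫ z in Ioi x, (z - m) / v * gaussianPDFReal m v z = gaussianPDFReal m v x := by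
    have := integral_Ioi_of_hasDerivAt_of_nonpos' (fun z _ ↦ hasDerivAt_gaussianPDFReal m v z)
      (fun z hz ↦ neg_nonpos.2 (hpos z hz)) (tendsto_gaussianPDFReal_atTop m v)
    simpa [integral_neg] using this
  rw [gaussianPDF, ← hI, ofReal_integral_eq_lintegral_ofReal hint
      ((ae_restrict_iff' measurableSet_Ioi).2 (.of_forall hpos)),
    gaussianReal_of_var_ne_zero m hv, setLIntegral_withDensity_eq_setLIntegral_mul _
      (measurable_gaussianPDF m v) (by fun_prop) measurableSet_Ioi]
  refine setLIntegral_congr_fun measurableSet_Ioi fun z _ ↦ ?_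
  rw [Pi.mul_apply, gaussianPDF, ← ENNReal.ofReal_mul (gaussianPDFReal_nonneg m v z), mul_comm]

lemma gaussianPDF_le_setLIntegral_Ioi_score (hv : v ≠ 0) (x : ℝ) :
    gaussianPDF m v x ≤ ∫⁻ z in Ioi x, ENNReal.ofReal ((z - m) / v) ∂gaussianReal m v := by
  rcases le_total m x with hx | hx
  · exact (setLIntegral_Ioi_score_gaussianReal hv hx).ge
  · calc gaussianPDF m v x ≤ gaussianPDF m v m := gaussianPDF_le_gaussianPDF (by simp)
      _ = ∫⁻ z in Ioi m, ENNReal.ofReal ((z - m) / v) ∂gaussianReal m v :=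
        (setLIntegral_Ioi_score_gaussianReal hv le_rfl).symm
      _ ≤ _ := lintegral_mono_set (Ioi_subset_Ioi hx)

lemma gaussianReal_le_ediam_mul_setLIntegral_score (hv : v ≠ 0) {S E : Set ℝ} (hS : IsUpperSet S)
    (hE : E ⊆ S) : gaussianReal m v E ≤
      Metric.ediam E * ∫⁻ z in S, ENNReal.ofReal ((z - m) / v) ∂gaussianReal m v := by
  rw [gaussianReal_apply m hv]
  calc ∫⁻ x in E, gaussianPDF m v x
      ≤ ∫⁻ _ in E, ∫⁻ z in S, ENNReal.ofReal ((z - m) / v) ∂gaussianReal m v :=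
        setLIntegral_mono measurable_const fun x hx ↦
          (gaussianPDF_le_setLIntegral_Ioi_score hv x).trans <|
            lintegral_mono_set fun z hz ↦ hS hz.out.le (hE hx)
    _ = volume E * ∫⁻ z in S, ENNReal.ofReal ((z - m) / v) ∂gaussianReal m v := by
        rw [setLIntegral_const, mul_comm]
    _ ≤ _ := by gcongr; exact Real.volume_le_diam E

lemma gaussianPDF_le_gaussianReal_Ioi (hv : v ≠ 0) {x : ℝ} (hx : m ≤ x) :
    gaussianPDF m v (x + 1) ≤ gaussianReal m v (Ioi x) := by
  calc gaussianPDF m v (x + 1) = ∫⁻ _ in Ioc x (x + 1), gaussianPDF m v (x + 1) := by simp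
    _ ≤ ∫⁻ z in Ioc x (x + 1), gaussianPDF m v z :=
        setLIntegral_mono (measurable_gaussianPDF m v) fun z hz ↦ gaussianPDF_le_gaussianPDF <|
          abs_le_abs_of_nonneg (by linarith [hz.1]) (by linarith [hz.2])
    _ = gaussianReal m v (Ioc x (x + 1)) := (gaussianReal_apply m hv _).symm
    _ ≤ _ := measure_mono Ioc_subset_Ioi_self

variable {Ω : Type*} [MeasurableSpace Ω] {P : Measure Ω} {Z : Ω → ℝ}

lemma variance_affine_of_hasLaw_gaussianReal (hZ : HasLaw Z (gaussianReal m v) P) (a c : ℝ) :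
    Var[fun ω ↦ a * Z ω + c; P] = a ^ 2 * v := by
  have := hZ.isProbabilityMeasure
  rw [variance_add_const (hZ.aemeasurable.const_mul a).aestronglyMeasurable, variance_const_mul,
    hZ.variance_eq, variance_id_gaussianReal]

lemma setLIntegral_score_le_add_gaussianPDF (hv : v ≠ 0) (hZ : HasLaw Z (gaussianReal m v) P)
    (A : Set Ω) {x : ℝ} (hx : m ≤ x) :
    ∫⁻ ω in A, ENNReal.ofReal ((Z ω - m) / v) ∂P ≤
      ENNReal.ofReal ((x - m) / v) * P A + gaussianPDF m v x := by
  let g : ℝ → ENNReal := (Ioi x).indicator fun z ↦ ENNReal.ofReal ((z - m) / v)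
  have hg : Measurable g := Measurable.indicator (by fun_prop) measurableSet_Ioi
  calc ∫⁻ ω in A, ENNReal.ofReal ((Z ω - m) / v) ∂P
      ≤ ∫⁻ ω in A, (ENNReal.ofReal ((x - m) / v) + g (Z ω)) ∂P := by
        refine lintegral_mono fun ω ↦ ?_
        by_cases h : x < Z ω
        · simp only [g, indicator_of_mem (mem_Ioi.2 h), le_add_self]
        · exact le_add_right (by gcongr; exact not_lt.1 h)
    _ = ENNReal.ofReal ((x - m) / v) * P A + ∫⁻ ω in A, g (Z ω) ∂P := by
        rw [lintegral_add_left measurable_const, setLIntegral_const]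
    _ ≤ ENNReal.ofReal ((x - m) / v) * P A + ∫⁻ ω, g (Z ω) ∂P := by
        gcongr
        exact Measure.restrict_le_self
    _ = _ := by
        rw [← lintegral_map' hg.aemeasurable hZ.aemeasurable, hZ.map_eq,
          lintegral_indicator measurableSet_Ioi, setLIntegral_Ioi_score_gaussianReal hv hx]

lemma setLIntegral_score_le_mul_measure (hv : v ≠ 0) (hZ : HasLaw Z (gaussianReal m v) P)
    {A : Set Ω} {b : ℝ} (hA : Z ⁻¹' Ioi b ⊆ A) :
    ∫⁻ ω in A, ENNReal.ofReal ((Z ω - m) / v) ∂P ≤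
      ENNReal.ofReal ((|b - m| + 1) / v + 1) * P A := by
  have htail : gaussianPDF m v (m + |b - m| + 1) ≤ P A := by
    calc gaussianPDF m v (m + |b - m| + 1)
        ≤ gaussianReal m v (Ioi (m + |b - m|)) :=
          gaussianPDF_le_gaussianReal_Ioi hv (by linarith [abs_nonneg (b - m)])
      _ = P (Z ⁻¹' Ioi (m + |b - m|)) := by
          rw [← hZ.map_eq, Measure.map_apply_of_aemeasurable hZ.aemeasurable measurableSet_Ioi]
      _ ≤ P A := measure_mono <| (preimage_mono <| Ioi_subset_Ioi <| by
          linarith [le_abs_self (b - m)]).trans hA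
  refine (setLIntegral_score_le_add_gaussianPDF hv hZ A (x := m + |b - m| + 1)
    (by linarith [abs_nonneg (b - m)])).trans ?_
  rw [ENNReal.ofReal_add (by positivity) zero_le_one, ENNReal.ofReal_one, add_mul, one_mul]
  gcongr
  exact (by ring : m + |b - m| + 1 - m = |b - m| + 1).le

end GaussianReal

section Exceedance

/-- The exceedance event `{sup_i X i > b}` of a family of random variables, written without the
supremum so that it is meaningful for families that are not bounded above. -/
def exceedance {Ω ι : Type*} (X : ι → Ω → ℝ) (b : ℝ) : Set Ω := {ω | ∃ i, b < X i ω}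

variable {Ω ι : Type*}

lemma exceedance_comp_subset {κ : Type*} (X : ι → Ω → ℝ) (g : κ → ι) (b : ℝ) :
    exceedance (fun k ↦ X (g k)) b ⊆ exceedance X b := fun _ ⟨k, hk⟩ ↦ ⟨g k, hk⟩

variable [MeasurableSpace Ω] {P : Measure Ω}

lemma measurableSet_exceedance [Countable ι] {X : ι → Ω → ℝ} (hX : ∀ i, Measurable (X i)) (b : ℝ) :
    MeasurableSet (exceedance X b) := by
  rw [exceedance, ofPred_exists]
  exact .iUnion fun i ↦ measurableSet_lt measurable_const (hX i)

lemma nullMeasurableSet_exceedance [Countable ι] {X : ι → Ω → ℝ} (hX : ∀ i, AEMeasurable (X i) P)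
    (b : ℝ) : NullMeasurableSet (exceedance X b) P := by
  rw [exceedance, ofPred_exists]
  exact .iUnion fun i ↦ nullMeasurableSet_lt aemeasurable_const (hX i)

lemma isUpperSet_exceedance_affine {a : ι → ℝ} (ha : ∀ i, 0 ≤ a i) (y : ι → ℝ) (b : ℝ) :
    IsUpperSet (exceedance (fun i z ↦ a i * z + y i) b) := by
  rintro z w hzw ⟨i, hi⟩
  exact ⟨i, hi.trans_le (by dsimp only; gcongr; exact ha i)⟩

lemma ediam_exceedance_affine_diff_le {a : ι → ℝ} {c : ℝ} (hc : 0 < c) (ha : ∀ i, c ≤ a i)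
    (y : ι → ℝ) (b δ : ℝ) :
    Metric.ediam (exceedance (fun i z ↦ a i * z + y i) b \
      exceedance (fun i z ↦ a i * z + y i) (b + δ)) ≤ ENNReal.ofReal (δ / c) := by
  have sub_le : ∀ z w : ℝ, z ∈ exceedance (fun i z ↦ a i * z + y i) b →
      w ∉ exceedance (fun i z ↦ a i * z + y i) (b + δ) → z ≤ w → w - z ≤ δ / c := by
    rintro z w ⟨i, hi⟩ hw hzw
    have hwi : a i * w + y i ≤ b + δ := not_lt.1 fun h ↦ hw ⟨i, h⟩
    rw [le_div_iff₀ hc]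
    nlinarith [ha i]
  refine Metric.ediam_le fun z hz w hw ↦ ?_
  rw [edist_dist, Real.dist_eq]
  gcongr
  rcases le_total z w with h | h
  · rw [abs_sub_comm, abs_of_nonneg (sub_nonneg.2 h)]
    exact sub_le z w hz.1 hw.2 h
  · rw [abs_of_nonneg (sub_nonneg.2 h)]
    exact sub_le w z hw.1 hz.2 h

lemma prod_exceedance_affine_diff_le [Countable ι] {m : ℝ} {v : NNReal} (hv : v ≠ 0)
    (ν : Measure (ι → ℝ)) [SFinite ν] {a : ι → ℝ} {c : ℝ} (hc : 0 < c) (ha : ∀ i, c ≤ a i)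
    (b δ : ℝ) :
    (gaussianReal m v).prod ν (exceedance (fun i p ↦ a i * p.1 + p.2 i) b \
        exceedance (fun i p ↦ a i * p.1 + p.2 i) (b + δ)) ≤
      ENNReal.ofReal (δ / c) * ∫⁻ p in exceedance (fun i p ↦ a i * p.1 + p.2 i) b,
        ENNReal.ofReal ((p.1 - m) / v) ∂(gaussianReal m v).prod ν := by
  have hmeas : ∀ b, MeasurableSet
      (exceedance (fun i (p : ℝ × (ι → ℝ)) ↦ a i * p.1 + p.2 i) b) :=
    measurableSet_exceedance fun i ↦ by fun_prop
  rw [Measure.prod_apply_symm ((hmeas b).diff (hmeas _)), ← lintegral_indicator (hmeas b),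
    lintegral_prod_symm' _ (Measurable.indicator (by fun_prop) (hmeas b)),
    ← lintegral_const_mul' _ _ ENNReal.ofReal_ne_top]
  refine lintegral_mono fun y ↦ ?_
  refine (gaussianReal_le_ediam_mul_setLIntegral_score hv
    (isUpperSet_exceedance_affine (fun i ↦ hc.le.trans (ha i)) y b) sdiff_subset).trans ?_
  rw [← lintegral_indicator (measurableSet_exceedance (fun i ↦ by fun_prop) b)]
  exact mul_le_mul_left (ediam_exceedance_affine_diff_le hc ha y b δ) _

lemma measure_exceedance_diff_le_of_indepFun [Countable ι] {Z : Ω → ℝ} {Y : Ω → ι → ℝ}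
    {m : ℝ} {v : NNReal} (hv : v ≠ 0) (hZ : HasLaw Z (gaussianReal m v) P) (hY : AEMeasurable Y P)
    (hZY : IndepFun Z Y P) {a : ι → ℝ} {c : ℝ} (hc : 0 < c) (ha : ∀ i, c ≤ a i) (b δ : ℝ) :
    P (exceedance (fun i ω ↦ a i * Z ω + Y ω i) b \
        exceedance (fun i ω ↦ a i * Z ω + Y ω i) (b + δ)) ≤
      ENNReal.ofReal (δ / c) * ∫⁻ ω in exceedance (fun i ω ↦ a i * Z ω + Y ω i) b,
        ENNReal.ofReal ((Z ω - m) / v) ∂P := by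
  have := hZ.isProbabilityMeasure
  have hmeas : ∀ b, MeasurableSet
      (exceedance (fun i (p : ℝ × (ι → ℝ)) ↦ a i * p.1 + p.2 i) b) :=
    measurableSet_exceedance fun i ↦ by fun_prop
  have hZYm : AEMeasurable (fun ω ↦ (Z ω, Y ω)) P := hZ.aemeasurable.prodMk hY
  have hmap : P.map (fun ω ↦ (Z ω, Y ω)) = (gaussianReal m v).prod (P.map Y) := by
    rw [(indepFun_iff_map_prod_eq_prod_map_map hZ.aemeasurable hY).1 hZY, hZ.map_eq]
  have hprod := prod_exceedance_affine_diff_le hv (m := m) (P.map Y) hc ha b δ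
  rw [← hmap, Measure.map_apply_of_aemeasurable hZYm ((hmeas b).diff (hmeas _)),
    ← lintegral_indicator (hmeas b),
    lintegral_map' (Measurable.indicator (by fun_prop) (hmeas b)).aemeasurable hZYm] at hprod
  have hpre : NullMeasurableSet (exceedance (fun i ω ↦ a i * Z ω + Y ω i) b) P :=
    hZYm.nullMeasurableSet_preimage (hmeas b)
  rw [← lintegral_indicator₀ hpre]
  exact hprod

lemma cond_apply_le_of_measure_inter_le_mul {A B : Set Ω} (hA : NullMeasurableSet A P)
    {C : ENNReal} (h : P (A ∩ B) ≤ C * P A) : ProbabilityTheory.cond P A B ≤ C := by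
  rw [ProbabilityTheory.cond, Measure.smul_apply, smul_eq_mul, Measure.restrict_apply₀' hA,
    inter_comm, mul_comm]
  exact ENNReal.div_le_of_le_mul h

end Exceedance

section GaussianProcess

variable {Ω T : Type*} [MeasurableSpace Ω] {P : Measure Ω} {X : T → Ω → ℝ}

lemma isGaussianProcess_of_hasGaussianLaw_sum
    (h : ∀ (I : Finset T) (c : T → ℝ), HasGaussianLaw (fun ω ↦ ∑ t ∈ I, c t * X t ω) P) :
    IsGaussianProcess X P where
  hasGaussianLaw I := by
    classical
    have hX : AEMeasurable (fun ω ↦ I.restrict (X · ω)) P :=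
      aemeasurable_pi_lambda _ fun t ↦ by simpa using (h {t.1} 1).aemeasurable
    refine ⟨isGaussian_of_isGaussian_map fun L ↦ ?_⟩
    rw [AEMeasurable.map_map_of_aemeasurable (by fun_prop) hX]
    convert (h I fun t ↦ if ht : t ∈ I then L (Pi.single ⟨t, ht⟩ 1) else 0).isGaussian_map using 2
    ext ω
    rw [Function.comp_apply, ← Finset.sum_coe_sort I]
    refine (L.toLinearMap.pi_apply_eq_sum_univ _).trans (Finset.sum_congr rfl fun t _ ↦ ?_)
    have hsingle : (fun j ↦ if t = j then (1 : ℝ) else 0) = Pi.single t 1 := by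
      ext j
      simp [Pi.single_apply, eq_comm]
    simp [hsingle, mul_comm]

lemma isGaussianProcess_domRestrict {S : Set T}
    (h : ∀ I : Finset T, ↑I ⊆ S → ∀ c : T → ℝ, HasGaussianLaw (fun ω ↦ ∑ t ∈ I, c t * X t ω) P) :
    IsGaussianProcess (fun t : S ↦ X t) P := by
  refine isGaussianProcess_of_hasGaussianLaw_sum fun I c ↦ ?_
  simpa only [Finset.sum_map, Function.Embedding.subtype_apply, Subtype.val_injective.extend_apply]
    using h (I.map (Function.Embedding.subtype _)) (by simp) (Function.extend Subtype.val c 0)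

lemma isGaussianProcess_add_const (hX : IsGaussianProcess X P) (c : T → ℝ) :
    IsGaussianProcess (fun t ω ↦ X t ω + c t) P where
  hasGaussianLaw I := by
    have hI := hX.hasGaussianLaw I
    have := hI.isGaussian_map
    have hmap : P.map (fun ω ↦ I.restrict fun t ↦ X t ω + c t) =
        (P.map fun ω ↦ I.restrict (X · ω)).map (· + I.restrict c) := by
      rw [AEMeasurable.map_map_of_aemeasurable (by fun_prop) hI.aemeasurable]
      rfl
    exact ⟨hmap ▸ inferInstance⟩

lemma indepFun_sub_regression (hX : IsGaussianProcess X P) {o : T} (ho : Var[X o; P] ≠ 0) :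
    IndepFun (X o) (fun ω t ↦ X t ω - cov[X o, X t; P] / Var[X o; P] * X o ω) P := by
  classical
  have := hX.isProbabilityMeasure
  have hL : ∀ t, MemLp (X t) 2 P := fun t ↦ (hX.hasGaussianLaw_eval t).memLp_two
  have hG : IsGaussianProcess (Sum.elim (fun _ : Unit ↦ X o)
      (fun t ω ↦ X t ω - cov[X o, X t; P] / Var[X o; P] * X o ω)) P := by
    refine hX.of_isGaussianProcess ?_
    rintro (_ | t)
    · exact ⟨{o}, .proj ⟨o, by simp⟩, fun ω ↦ rfl⟩
    · exact ⟨{o, t}, .proj ⟨t, by simp⟩ - (cov[X o, X t; P] / Var[X o; P]) • .proj ⟨o, by simp⟩,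
        fun ω ↦ rfl⟩
  have hind := hG.indepFun_of_covariance_eq_zero (fun _ ↦ hX.aemeasurable o)
    (fun t ↦ (hX.aemeasurable t).sub ((hX.aemeasurable o).const_mul _)) fun _ t ↦ by
      rw [covariance_fun_sub_right (hL o) (hL t) ((hL o).const_mul _),
        covariance_const_mul_right, covariance_self (hX.aemeasurable o),
        div_mul_cancel₀ _ ho, sub_self]
  exact hind.comp (φ := fun x : Unit → ℝ ↦ x ()) (ψ := id) (measurable_pi_apply _) measurable_id

/-- No moment domination is available, but dominated convergence always applies to the
characteristic function, whose modulus at `1` is `exp (-Var / 2)`. -/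
lemma continuous_variance_of_ae_continuous [TopologicalSpace T] [FirstCountableTopology T]
    [IsFiniteMeasure P] (hX : ∀ t, HasGaussianLaw (X t) P)
    (hcont : ∀ᵐ ω ∂P, Continuous (X · ω)) : Continuous fun t ↦ Var[X t; P] := by
  have hchar : Continuous fun t ↦ charFun (P.map (X t)) 1 := by
    simp only [charFun_apply_real]
    have hmap : ∀ t, ∫ x, Complex.exp ((1 : ℝ) * x * Complex.I) ∂P.map (X t) =
        ∫ ω, Complex.exp ((1 : ℝ) * X t ω * Complex.I) ∂P := fun t ↦
      integral_map (hX t).aemeasurable (by fun_prop)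
    simp only [hmap]
    refine continuous_of_dominated (bound := fun _ ↦ 1) (fun t ↦ ?_) (fun t ↦ ?_)
      (integrable_const 1) ?_
    · have := (hX t).aemeasurable
      exact AEMeasurable.aestronglyMeasurable (by fun_prop)
    · refine .of_forall fun ω ↦ ?_
      rw [← Complex.ofReal_mul, Complex.norm_exp_ofReal_mul_I]
    · filter_upwards [hcont] with ω hω
      fun_prop
  have hvar : ∀ t, Var[X t; P] = -2 * Real.log ‖charFun (P.map (X t)) 1‖ := fun t ↦ by
    rw [(hX t).map_eq_gaussianReal, charFun_gaussianReal, Complex.norm_exp, Real.log_exp]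
    simp [variance_nonneg, mul_div_cancel₀]
  simp only [hvar]
  refine continuous_const.mul (hchar.norm.log fun t ↦ ?_)
  rw [(hX t).map_eq_gaussianReal, charFun_gaussianReal, Complex.norm_exp]
  positivity

lemma continuous_covariance_of_ae_continuous [TopologicalSpace T] [FirstCountableTopology T]
    (hX : IsGaussianProcess X P) (hcont : ∀ᵐ ω ∂P, Continuous (X · ω)) (o : T) :
    Continuous fun t ↦ cov[X o, X t; P] := by
  have := hX.isProbabilityMeasure
  have hL : ∀ t, MemLp (X t) 2 P := fun t ↦ (hX.hasGaussianLaw_eval t).memLp_two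
  have hcov : ∀ t, cov[X o, X t; P] =
      (Var[X o + X t; P] - Var[X o; P] - Var[X t; P]) / 2 := fun t ↦ by
    rw [variance_add (hL o) (hL t)]
    ring
  have hadd : ∀ᵐ ω ∂P, Continuous fun t ↦ (X o + X t) ω := by
    filter_upwards [hcont] with ω hω
    exact continuous_const.add hω
  simp only [hcov]
  exact (((continuous_variance_of_ae_continuous (fun _ ↦ hX.hasGaussianLaw_add) hadd).sub
    continuous_const).sub
      (continuous_variance_of_ae_continuous hX.hasGaussianLaw_eval hcont)).div_const 2

lemma measure_exceedance_diff_le_mul_setLIntegral_score (hX : IsGaussianProcess X P) {o : T}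
    (ho : Var[X o; P] ≠ 0) {D : Set T} (hD : D.Countable) {c : ℝ} (hc : 0 < c)
    (ha : ∀ t ∈ D, c ≤ cov[X o, X t; P] / Var[X o; P]) (b δ : ℝ) :
    P (exceedance (fun t : D ↦ X t) b \ exceedance (fun t : D ↦ X t) (b + δ)) ≤
      ENNReal.ofReal (δ / c) * ∫⁻ ω in exceedance (fun t : D ↦ X t) b,
        ENNReal.ofReal ((X o ω - P[X o]) / Var[X o; P].toNNReal) ∂P := by
  have := hD.to_subtype
  have hind : IndepFun (X o)
      (fun ω (t : D) ↦ X t ω - cov[X o, X t; P] / Var[X o; P] * X o ω) P :=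
    (indepFun_sub_regression hX ho).comp (ψ := D.domRestrict) measurable_id (by fun_prop)
  have hY : AEMeasurable (fun ω (t : D) ↦ X t ω - cov[X o, X t; P] / Var[X o; P] * X o ω) P :=
    aemeasurable_pi_lambda _ fun t ↦ (hX.aemeasurable t).sub ((hX.aemeasurable o).const_mul _)
  simpa only [add_sub_cancel] using measure_exceedance_diff_le_of_indepFun
    (Real.toNNReal_eq_zero.not.2 <| not_le.2 <| (variance_nonneg _ _).lt_of_ne' ho)
    ⟨hX.aemeasurable o, (hX.hasGaussianLaw_eval o).map_eq_gaussianReal⟩ hY hind hc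
    (fun t ↦ ha t t.2) b δ

lemma measure_exceedance_diff_le (hX : IsGaussianProcess X P) {o : T} (ho : Var[X o; P] ≠ 0)
    {D : Set T} (hD : D.Countable) {c : ℝ} (hc : 0 < c)
    (ha : ∀ t ∈ D, c ≤ cov[X o, X t; P] / Var[X o; P]) (b δ : ℝ) :
    P (exceedance (fun t : D ↦ X t) b \ exceedance (fun t : D ↦ X t) (b + δ)) ≤
      ENNReal.ofReal (((|P[X o]| + 1) / Var[X o; P] + 1) / c * (1 + |b|) * δ) *
        P (exceedance X b) := by
  set m := P[X o]
  have hv : 0 < Var[X o; P] := (variance_nonneg _ _).lt_of_ne' ho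
  have hscore := setLIntegral_score_le_mul_measure (Real.toNNReal_eq_zero.not.2 <| not_le.2 hv)
    ⟨hX.aemeasurable o, (hX.hasGaussianLaw_eval o).map_eq_gaussianReal⟩
    (A := exceedance X b) (b := b) fun _ hω ↦ ⟨o, hω⟩
  rw [Real.coe_toNNReal _ hv.le] at hscore
  have hle : (|b - m| + 1) / Var[X o; P] + 1 ≤ ((|m| + 1) / Var[X o; P] + 1) * (1 + |b|) := by
    have : |b - m| + 1 ≤ (|m| + 1) * (1 + |b|) := by
      nlinarith [abs_sub b m, abs_nonneg b, abs_nonneg m]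
    rw [add_mul, div_mul_eq_mul_div, one_mul]
    gcongr
    linarith [abs_nonneg b]
  calc _ ≤ ENNReal.ofReal (δ / c) * ∫⁻ ω in exceedance (fun t : D ↦ X t) b,
          ENNReal.ofReal ((X o ω - m) / Var[X o; P].toNNReal) ∂P :=
        measure_exceedance_diff_le_mul_setLIntegral_score hX ho hD hc ha b δ
    _ ≤ ENNReal.ofReal (δ / c) * (ENNReal.ofReal (((|m| + 1) / Var[X o; P] + 1) * (1 + |b|)) *
          P (exceedance X b)) := by
        gcongr
        rw [Real.coe_toNNReal _ hv.le]
        exact (lintegral_mono_set (exceedance_comp_subset X _ b)).trans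
          (hscore.trans (by gcongr))
    _ = _ := by
        rw [← mul_assoc, ← ENNReal.ofReal_mul' (by positivity)]
        congr 2
        ring

end GaussianProcess

section ContinuousPaths

variable {Ω T : Type*} [TopologicalSpace T] {X : T → Ω → ℝ}

lemma mem_exceedance_dense_iff {D : Set T} (hD : Dense D) {ω : Ω}
    (hω : Continuous (X · ω)) (b : ℝ) :
    ω ∈ exceedance (fun t : D ↦ X t) b ↔ ω ∈ exceedance X b := by
  refine ⟨fun h ↦ exceedance_comp_subset X _ b h, fun ⟨t, ht⟩ ↦ ?_⟩
  obtain ⟨s, hsD, hs⟩ := hD.exists_mem_open (isOpen_lt continuous_const hω) ⟨t, ht⟩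
  exact ⟨⟨s, hsD⟩, hs⟩

lemma exists_mem_exceedance_diff_of_dense {D : Set T} (hD : Dense D) {K : Finset T} {U : T → Set T}
    (hU : ∀ o, IsOpen (U o)) (hK : ⋃ o ∈ K, U o = univ) {ω : Ω} (hω : Continuous (X · ω))
    {b b' : ℝ} (h : ω ∈ exceedance X b \ exceedance X b') :
    ∃ o ∈ K, ω ∈ exceedance (fun t : ↥(U o ∩ D) ↦ X t) b \
      exceedance (fun t : ↥(U o ∩ D) ↦ X t) b' := by
  obtain ⟨⟨t, ht⟩, hb'⟩ := h
  obtain ⟨o, hoK, hto⟩ := mem_iUnion₂.1 (hK ▸ mem_univ t)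
  obtain ⟨s, hsD, hsU, hs⟩ := hD.exists_mem_open
    ((hU o).inter (isOpen_lt continuous_const hω)) ⟨t, hto, ht⟩
  exact ⟨o, hoK, ⟨⟨s, hsU, hsD⟩, hs⟩, fun h ↦ hb' (exceedance_comp_subset X _ b' h)⟩

variable [MeasurableSpace Ω] {P : Measure Ω}

lemma nullMeasurableSet_exceedance_of_ae_continuous [TopologicalSpace.SeparableSpace T]
    (hX : ∀ t, AEMeasurable (X t) P) (hcont : ∀ᵐ ω ∂P, Continuous (X · ω)) (b : ℝ) :
    NullMeasurableSet (exceedance X b) P := by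
  obtain ⟨D, hDc, hD⟩ := TopologicalSpace.exists_countable_dense T
  have := hDc.to_subtype
  refine (nullMeasurableSet_exceedance (fun t : D ↦ hX t) b).congr (eventuallyEq_set.2 ?_)
  filter_upwards [hcont] with ω hω using mem_exceedance_dense_iff hD hω b

lemma measure_exceedance_diff_le_sum (hcont : ∀ᵐ ω ∂P, Continuous (X · ω)) {D : Set T}
    (hD : Dense D) {K : Finset T} {U : T → Set T} (hU : ∀ o, IsOpen (U o))
    (hK : ⋃ o ∈ K, U o = univ) (b b' : ℝ) :
    P (exceedance X b \ exceedance X b') ≤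
      ∑ o ∈ K, P (exceedance (fun t : ↥(U o ∩ D) ↦ X t) b \
        exceedance (fun t : ↥(U o ∩ D) ↦ X t) b') := by
  refine (measure_mono_ae <| hcont.mono fun ω hω h ↦ ?_).trans (measure_biUnion_finset_le K _)
  obtain ⟨o, ho, hωo⟩ := exists_mem_exceedance_diff_of_dense hD hU hK hω h
  exact mem_biUnion ho hωo

lemma exists_measure_exceedance_diff_le [CompactSpace T]
    [TopologicalSpace.SeparableSpace T] [FirstCountableTopology T] (hX : IsGaussianProcess X P)
    (hcont : ∀ᵐ ω ∂P, Continuous (X · ω)) (hvar : ∀ t, Var[X t; P] ≠ 0) :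
    ∃ C > 0, ∀ b δ : ℝ, P (exceedance X b \ exceedance X (b + δ)) ≤
      ENNReal.ofReal (C * (1 + |b|) * δ) * P (exceedance X b) := by
  obtain ⟨D, hDc, hD⟩ := TopologicalSpace.exists_countable_dense T
  let U : T → Set T := fun o ↦ {t | 1 / 2 < cov[X o, X t; P] / Var[X o; P]}
  have hU : ∀ o, IsOpen (U o) := fun o ↦ isOpen_lt continuous_const
    ((continuous_covariance_of_ae_continuous hX hcont o).div_const _)
  have hself : ∀ o, o ∈ U o := fun o ↦ by
    simp only [U, mem_ofPred_eq, covariance_self (hX.aemeasurable o), div_self (hvar o)]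
    norm_num
  obtain ⟨K, hK⟩ := CompactSpace.elim_nhds_subcover U fun o ↦ (hU o).mem_nhds (hself o)
  let C : T → ℝ := fun o ↦ ((|P[X o]| + 1) / Var[X o; P] + 1) / (1 / 2)
  have hC : ∀ o, 0 ≤ C o := fun o ↦ by have := variance_nonneg (X o) P; positivity
  have hsum : 0 ≤ ∑ o ∈ K, C o := Finset.sum_nonneg fun o _ ↦ hC o
  refine ⟨∑ o ∈ K, C o + 1, by positivity, fun b δ ↦ ?_⟩
  have hlocal : ∀ o, P (exceedance (fun t : ↥(U o ∩ D) ↦ X t) b \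
      exceedance (fun t : ↥(U o ∩ D) ↦ X t) (b + δ)) ≤
        ENNReal.ofReal (C o * (1 + |b|) * δ) * P (exceedance X b) := fun o ↦
    measure_exceedance_diff_le hX (hvar o) (hDc.mono inter_subset_right) (by norm_num)
      (fun _ ht ↦ ht.1.out.le) b δ
  calc P (exceedance X b \ exceedance X (b + δ))
      ≤ ∑ o ∈ K, P (exceedance (fun t : ↥(U o ∩ D) ↦ X t) b \
          exceedance (fun t : ↥(U o ∩ D) ↦ X t) (b + δ)) :=
        measure_exceedance_diff_le_sum hcont hD hU hK b (b + δ)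
    _ ≤ ∑ o ∈ K, ENNReal.ofReal (C o * (1 + |b|) * δ) * P (exceedance X b) :=
        Finset.sum_le_sum fun o _ ↦ hlocal o
    _ = ENNReal.ofReal (∑ o ∈ K, C o) * ENNReal.ofReal ((1 + |b|) * δ) * P (exceedance X b) := by
        simp only [mul_assoc, ENNReal.ofReal_mul (hC _), ← Finset.sum_mul,
          ENNReal.ofReal_sum_of_nonneg fun o _ ↦ hC o]
    _ ≤ _ := by
        rw [mul_assoc _ (1 + |b|), ENNReal.ofReal_mul (p := _ + 1) (by positivity)]
        gcongr
        exact le_add_of_nonneg_right zero_le_one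

end ContinuousPaths

lemma continuousOn_of_abs_sub_le_rpow_dist {α : Type*} [PseudoMetricSpace α] {S : Set α}
    {g : α → ℝ} {κ β : ℝ} (hβ : 0 < β)
    (h : ∀ s ∈ S, ∀ u ∈ S, |g u - g s| ≤ κ * dist s u ^ β) : ContinuousOn g S := by
  intro s hs
  have hlim : Tendsto (fun u ↦ κ * dist s u ^ β) (nhdsWithin s S) (nhds 0) := by
    have hc : Continuous fun u ↦ κ * dist s u ^ β :=
      continuous_const.mul ((continuous_const.dist continuous_id).rpow_const fun _ ↦ .inr hβ.le)
    simpa [Real.zero_rpow hβ.ne'] using (hc.tendsto s).mono_left nhdsWithin_le_nhds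
  refine tendsto_iff_dist_tendsto_zero.2 (squeeze_zero' (.of_forall fun _ ↦ dist_nonneg) ?_ hlim)
  filter_upwards [self_mem_nhdsWithin] with u hu using h s hs u hu

lemma continuous_domRestrict_affine {α : Type*} [PseudoMetricSpace α] {S : Set α} {σ μ g : α → ℝ}
    {κ β : ℝ} (hβ : 0 < β) (h : ∀ s ∈ S, ∀ u ∈ S, |σ u - σ s| + |μ u - μ s| ≤ κ * dist s u ^ β)
    (hg : ContinuousOn g S) : Continuous fun t : S ↦ σ t * g t + μ t := by
  have hσ : ContinuousOn σ S := continuousOn_of_abs_sub_le_rpow_dist hβ fun s hs u hu ↦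
    (le_add_of_nonneg_right (abs_nonneg _)).trans (h s hs u hu)
  have hμ : ContinuousOn μ S := continuousOn_of_abs_sub_le_rpow_dist hβ fun s hs u hu ↦
    (le_add_of_nonneg_left (abs_nonneg _)).trans (h s hs u hu)
  exact ((hσ.mul hg).add hμ).domRestrict

lemma mul_one_add_abs_mul_div_le {C b γ ρ : ℝ} (hC : 0 ≤ C) (hb : 1 ≤ b) (hγ : 0 ≤ γ)
    (hρ : 0 ≤ ρ) : C * (1 + |b|) * (γ / b) ≤ 2 * C * γ * b ^ ρ := by
  have hb0 : 0 < b := one_pos.trans_le hb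
  calc C * (1 + |b|) * (γ / b) ≤ C * (b + b) * (γ / b) := by
        rw [abs_of_pos hb0]
        gcongr
    _ = 2 * C * γ * 1 := by
        field_simp
        ring
    _ ≤ 2 * C * γ * b ^ ρ := by
        gcongr
        exact Real.one_le_rpow hb hρ

theorem conditional_overshoot_bound_general {Ω T : Type*} [MeasurableSpace Ω] {P : Measure Ω}
    [TopologicalSpace T] [CompactSpace T] [TopologicalSpace.SeparableSpace T]
    [FirstCountableTopology T] {X : T → Ω → ℝ} (hX : IsGaussianProcess X P)
    (hcont : ∀ᵐ ω ∂P, Continuous (X · ω)) (hvar : ∀ t, Var[X t; P] ≠ 0) :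
    ∃ C > 0, ∀ b δ : ℝ,
      ProbabilityTheory.cond P {ω | ∃ t, b < X t ω} {ω | ∀ t, X t ω ≤ b + δ} ≤
        ENNReal.ofReal (C * (1 + |b|) * δ) := by
  obtain ⟨C, hC, h⟩ := exists_measure_exceedance_diff_le hX hcont hvar
  refine ⟨C, hC, fun b δ ↦ cond_apply_le_of_measure_inter_le_mul
    (nullMeasurableSet_exceedance_of_ae_continuous hX.aemeasurable hcont b) ?_⟩
  refine (measure_mono fun ω hω ↦ ?_).trans (h b δ)
  exact ⟨hω.1, fun ⟨t, ht⟩ ↦ (hω.2 t).not_gt ht⟩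

/-- **Conditional overshoot bound (Proposition 6.5 of Adler–Blanchet–Liu).**  For a
centered, unit-variance, a.s. continuous Gaussian field on a compact `T ⊂ ℝ^d` whose
correlation is Hölder (C4), and `(σ,μ)` in the Hölder class `C(μ_l,μ_u,σ_l,σ_u,β,κ_H)`:
for any `v > 0`, with `β* = min(β,β')` and `ρ = 2d/β* + dv + 1`, there exist `b₀ ≥ 1` and
`λ ∈ (0,∞)` such that for all `b ≥ b₀` and all `γ ∈ (0,1]`,
`P( max_{t∈T}(σ f + μ) ≤ b + γ/b | max_{t∈T}(σ f + μ) > b ) ≤ λ γ b^ρ`. -/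
theorem conditional_overshoot_bound
    {Ω : Type*} [MeasurableSpace Ω] (P : Measure Ω) [IsProbabilityMeasure P]
    {d : ℕ} (T : Set (EuclideanSpace ℝ (Fin d)))
    (hT : IsCompact T) (hTne : T.Nonempty)
    (f : EuclideanSpace ℝ (Fin d) → Ω → ℝ)
    (hmeas : ∀ u, Measurable (f u))
    (hGauss : ∀ s : Finset (EuclideanSpace ℝ (Fin d)), ↑s ⊆ T →
      ∀ c : EuclideanSpace ℝ (Fin d) → ℝ, ∃ v : NNReal,
        Measure.map (fun ω => ∑ u ∈ s, c u * f u ω) P = gaussianReal 0 v)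
    (hstd : ∀ u ∈ T, Measure.map (f u) P = gaussianReal 0 1)
    (hcont : ∀ᵐ ω ∂P, ContinuousOn (fun u => f u ω) T)
    (μl μu σl σu β κH β' κH' : ℝ)
    (hμ : μl ≤ μu) (hσl : 0 < σl) (hσ : σl ≤ σu) (hβ : 0 < β) (hκH : 0 < κH)
    (hβ' : 0 < β') (hκH' : 0 < κH')
    (hC4 : ∀ s ∈ T, ∀ u ∈ T, ∀ s' ∈ T, ∀ u' ∈ T,
      |(∫ ω, f u ω * f s ω ∂P) - (∫ ω, f u' ω * f s' ω ∂P)| ≤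
        κH' * (dist u u' ^ β' + dist s s' ^ β'))
    (σ μ : EuclideanSpace ℝ (Fin d) → ℝ)
    (hσr : ∀ u ∈ T, σ u ∈ Set.Icc σl σu) (hμr : ∀ u ∈ T, μ u ∈ Set.Icc μl μu)
    (hHolder : ∀ s ∈ T, ∀ u ∈ T, |σ u - σ s| + |μ u - μ s| ≤ κH * dist s u ^ β) :
    ∀ v > (0 : ℝ), ∃ b0 ≥ (1 : ℝ), ∃ lam > (0 : ℝ), ∀ b ≥ b0, ∀ γ ∈ Set.Ioc (0 : ℝ) 1,
      (ProbabilityTheory.cond P {ω | ∃ u ∈ T, σ u * f u ω + μ u > b})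
          {ω | ∀ u ∈ T, σ u * f u ω + μ u ≤ b + γ / b} ≤
        ENNReal.ofReal (lam * γ * b ^ (2 * (d : ℝ) / min β β' + (d : ℝ) * v + 1)) := by
  intro v hv
  have hX : IsGaussianProcess (fun (t : T) ω ↦ σ t * f t ω + μ t) P :=
    isGaussianProcess_add_const ((isGaussianProcess_domRestrict fun I hI c ↦
      ⟨(hGauss I hI c).choose_spec ▸ inferInstance⟩).smul fun t : T ↦ σ t) fun t : T ↦ μ t
  have hXvar : ∀ t : T, Var[fun ω ↦ σ t * f t ω + μ t; P] ≠ 0 := fun t ↦ by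
    rw [variance_affine_of_hasLaw_gaussianReal ⟨(hmeas t).aemeasurable, hstd t t.2⟩]
    exact mul_ne_zero (pow_ne_zero 2 (hσl.trans_le (hσr t t.2).1).ne') one_ne_zero
  have := isCompact_iff_compactSpace.1 hT
  obtain ⟨C, hC, hbound⟩ := conditional_overshoot_bound_general hX
    (hcont.mono fun _ ↦ continuous_domRestrict_affine hβ hHolder) hXvar
  refine ⟨1, le_rfl, 2 * C, by positivity, fun b hb γ hγ ↦ ?_⟩
  calc _ ≤ ENNReal.ofReal (C * (1 + |b|) * (γ / b)) := by
        simpa only [Subtype.exists, Subtype.forall, exists_prop] using hbound b (γ / b)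
    _ ≤ _ := ENNReal.ofReal_le_ofReal (mul_one_add_abs_mul_div_le hC.le hb hγ.1.le (by positivity))
end

section
/- Let {f(t) : t ∈ T} be a centered, unit-variance, almost surely continuous Gaussian random field on a compact T ⊂ ℝ^d with correlation satisfying |r(t,s) − r(t',s')| ≤ κ_H'(|t−t'|^{β'} + |s−s'|^{β'}), and let σ belong to the class C1 (σ(t) ∈ [σ_l, σ_u], Hölder with exponent β and constant κ_H). Define ξ(s,t) = σ(s)f(s) − σ(t)f(t) and β* = min(β, β'). Then there exists a constant κ_ξ > 0, uniform over all such σ and f, such that for all N ≥ 2, E[ sup_{s,t ∈ T, |s−t| ≤ κ_m/N} |ξ(s,t)| ] < κ_ξ · N^{−β*/2} · log N. -/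
open MeasureTheory ProbabilityTheory Filter Set
open scoped NNReal ENNReal Topology

/-!
The argument is chaining started at scale `1 / N`. The increments of `X = σ f` are sub-Gaussian with
variance proxy at most a constant times `|s - t| ^ (2 α)`: the Hölder bound on `σ` handles
`(σ s - σ t) ^ 2` and the one on the correlation handles `1 - r(s, t)`.

Take nets of mesh `2 ^ (-k) / N`. Every `X s` is the limit of `X` along a chain of points of these
nets, and for `|s - t| ≤ κm / N` the chain of `s` is joined to that of `t` by one more link of
length at most a constant times `1 / N`. The links of level `k` have length `O(2 ^ (-k) / N)` and
there are only polynomially many of them in `2 ^ k N`. The maximum of `n` sub-Gaussian variables of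
variance proxy `c` has expectation at most `√c * (log n + 4)`, so level `k` contributes
`O((k + 1) * 2 ^ (-α k) * N ^ (-α) * log N)`, and `∑ (k + 1) q ^ k = 1 / (1 - q) ^ 2` sums these.
-/

section CoveringNumber

/-- The set `T` has covering numbers of polynomial growth: at every scale `ε ≤ 1` it is covered by
at most `C * ε ^ (-d)` closed balls of radius `ε` centered in `T`. This is the only information
about the index set that the chaining argument uses; `d` plays the role of its dimension. -/
def HasPolynomialCoveringNumber {E : Type*} [PseudoEMetricSpace E] (T : Set E) (C d : ℝ≥0) : Prop :=
  ∀ ε : ℝ≥0, 0 < ε → ε ≤ 1 →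
    (Metric.coveringNumber ε T : ℝ≥0∞) ≤ (C * ε ^ (-(d : ℝ)) : ℝ≥0)

lemma HasPolynomialCoveringNumber.exists_finset_isCover {E : Type*} [PseudoEMetricSpace E]
    {T : Set E} {C d : ℝ≥0} (hT : HasPolynomialCoveringNumber T C d) {ε : ℝ≥0} (hε₀ : 0 < ε)
    (hε : ε ≤ 1) :
    ∃ F : Finset E, ↑F ⊆ T ∧ Metric.IsCover ε T F ∧ (F.card : ℝ) ≤ C * (ε : ℝ) ^ (-(d : ℝ)) := by
  have hle := hT ε hε₀ hε
  have hfin : Metric.coveringNumber ε T ≠ ⊤ := fun h => by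
    rw [h, ENat.toENNReal_top, top_le_iff] at hle
    exact ENNReal.coe_ne_top hle
  obtain ⟨F, hFT, hF, hcover, hcard⟩ := Metric.exists_set_encard_eq_coveringNumber hfin
  lift F to Finset E using hF
  rw [← hcard, Set.encard_coe_eq_coe_finsetCard, ENat.toENNReal_coe, ← ENNReal.coe_natCast,
    ENNReal.coe_le_coe] at hle
  exact ⟨F, hFT, hcover, by exact_mod_cast NNReal.coe_le_coe.2 hle⟩

lemma HasPolynomialCoveringNumber.isBounded {E : Type*} [PseudoMetricSpace E] {T : Set E}
    {C d : ℝ≥0} (hT : HasPolynomialCoveringNumber T C d) : Bornology.IsBounded T := by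
  obtain ⟨F, -, hF, -⟩ := hT.exists_finset_isCover one_pos le_rfl
  have hballs : Bornology.IsBounded (⋃ x ∈ F, Metric.closedBall x ((1 : ℝ≥0) : ℝ)) :=
    (Bornology.isBounded_biUnion F.finite_toSet).2 fun _ _ => Metric.isBounded_closedBall
  exact hballs.subset (Metric.isCover_iff_subset_iUnion_closedBall.1 hF)

variable {E : Type*} [NormedAddCommGroup E] [NormedSpace ℝ E] [FiniteDimensional ℝ E]

-- Volume comparison: the balls of radius `ε / 2` around separated points are disjoint.
lemma encard_le_of_isSeparated_of_subset_closedBall {S : Set E} {R ε : ℝ≥0} (hε : 0 < ε)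
    (hsep : Metric.IsSeparated ε S) (hS : S ⊆ Metric.closedBall 0 R) :
    (S.encard : ℝ≥0∞) ≤ ((1 + 2 * R / ε) ^ Module.finrank ℝ E : ℝ≥0) := by
  borelize E
  set n := Module.finrank ℝ E
  let μ : Measure E := Measure.addHaar
  have hε' : (0 : ℝ) < ε := hε
  have hdisj : Pairwise (Function.onFun Disjoint fun x : S => Metric.ball (x : E) (ε / 2)) := by
    intro x y hxy
    have hdist : (ε : ℝ) < dist (x : E) y := by
      have h : (ε : ℝ≥0∞) < edist (x : E) y := hsep x.2 y.2 (Subtype.coe_injective.ne hxy)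
      rw [edist_nndist] at h
      exact_mod_cast h
    exact Metric.ball_disjoint_ball (by linarith)
  have hsub : ⋃ x : S, Metric.ball (x : E) (ε / 2) ⊆ Metric.ball 0 (R + ε / 2) := by
    refine Set.iUnion_subset fun x => Metric.ball_subset_ball' ?_
    have h : dist (x : E) 0 ≤ R := hS x.2
    linarith
  have hvol : (S.encard : ℝ≥0∞) * ENNReal.ofReal ((ε / 2 : ℝ) ^ n) ≤
      ENNReal.ofReal ((R + ε / 2 : ℝ) ^ n) := by
    have h := (tsum_meas_le_meas_iUnion_of_disjoint μ (fun _ => Metric.isOpen_ball.measurableSet)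
      hdisj).trans (measure_mono hsub)
    simp only [μ.addHaar_ball_of_pos _ (half_pos hε'), ENNReal.tsum_const,
      μ.addHaar_ball_of_pos _ (by positivity : (0 : ℝ) < R + ε / 2), ENat.card_coe_set_eq,
      ← mul_assoc] at h
    exact (ENNReal.mul_le_mul_iff_left (Metric.measure_ball_pos μ 0 one_pos).ne'
      measure_ball_lt_top.ne).1 h
  calc (S.encard : ℝ≥0∞)
      ≤ ENNReal.ofReal ((R + ε / 2 : ℝ) ^ n) / ENNReal.ofReal ((ε / 2 : ℝ) ^ n) :=
        ENNReal.le_div_iff_mul_le (by simp [hε']) (by simp) |>.2 hvol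
    _ = ENNReal.ofReal ((1 + 2 * R / ε) ^ n) := by
        rw [← ENNReal.ofReal_div_of_pos (by positivity), ← div_pow]
        congr 2
        field_simp
        ring
    _ = ((1 + 2 * R / ε) ^ n : ℝ≥0) := by
        rw [ENNReal.ofReal_eq_coe_nnreal (by positivity)]
        rfl

lemma packingNumber_le_of_subset_closedBall {T : Set E} {R ε : ℝ≥0}
    (hT : T ⊆ Metric.closedBall 0 R) (hε : 0 < ε) :
    (Metric.packingNumber ε T : ℝ≥0∞) ≤ ((1 + 2 * R / ε) ^ Module.finrank ℝ E : ℝ≥0) := by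
  simp only [Metric.packingNumber, ENat.toENNReal_iSup]
  exact iSup₂_le fun S hST => iSup_le fun hsep =>
    encard_le_of_isSeparated_of_subset_closedBall hε hsep (hST.trans hT)

lemma exists_hasPolynomialCoveringNumber_of_isBounded {T : Set E}
    (hT : Bornology.IsBounded T) :
    ∃ C : ℝ≥0, HasPolynomialCoveringNumber T C (Module.finrank ℝ E) := by
  obtain ⟨R, hR₀, hR⟩ := hT.exists_pos_norm_le
  lift R to ℝ≥0 using hR₀.le
  refine ⟨(1 + 2 * R) ^ Module.finrank ℝ E, fun ε hε₀ hε => ?_⟩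
  have hball : T ⊆ Metric.closedBall 0 R := fun x hx => by simpa using hR x hx
  calc (Metric.coveringNumber ε T : ℝ≥0∞)
      ≤ Metric.packingNumber ε T := by
        exact_mod_cast Metric.coveringNumber_le_packingNumber ε T
    _ ≤ ((1 + 2 * R / ε) ^ Module.finrank ℝ E : ℝ≥0) :=
        packingNumber_le_of_subset_closedBall hball hε₀
    _ ≤ (((1 + 2 * R) / ε) ^ Module.finrank ℝ E : ℝ≥0) := by
        gcongr
        rw [add_div]
        gcongr
        exact (one_le_div hε₀).2 hε
    _ = ((1 + 2 * R) ^ Module.finrank ℝ E * ε ^ (-((Module.finrank ℝ E : ℝ≥0) : ℝ)) : ℝ≥0) := by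
        rw [NNReal.coe_natCast, NNReal.rpow_neg, NNReal.rpow_natCast, div_pow, div_eq_mul_inv]

end CoveringNumber

section MaximalInequality

variable {Ω : Type*} [MeasurableSpace Ω] {P : Measure Ω}

lemma hasSubgaussianMGF_mono {Y : Ω → ℝ} {c c' : ℝ≥0} (hY : HasSubgaussianMGF Y c P)
    (hc : c ≤ c') : HasSubgaussianMGF Y c' P where
  integrable_exp_mul := hY.integrable_exp_mul
  mgf_le t := (hY.mgf_le t).trans (by gcongr)

lemma lintegral_exp_mul_abs_le {Y : Ω → ℝ} {c : ℝ≥0} (hY : HasSubgaussianMGF Y c P) (t : ℝ) :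
    ∫⁻ ω, ENNReal.ofReal (Real.exp (t * |Y ω|)) ∂P ≤
      ENNReal.ofReal (2 * Real.exp (c * t ^ 2 / 2)) := by
  have hmgf : ∀ Z : Ω → ℝ, HasSubgaussianMGF Z c P →
      ∫⁻ ω, ENNReal.ofReal (Real.exp (t * Z ω)) ∂P ≤ ENNReal.ofReal (Real.exp (c * t ^ 2 / 2)) := by
    intro Z hZ
    rw [← ofReal_integral_eq_lintegral_ofReal (hZ.integrable_exp_mul t)
      (ae_of_all _ fun _ => (Real.exp_pos _).le)]
    exact ENNReal.ofReal_le_ofReal (hZ.mgf_le t)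
  calc ∫⁻ ω, ENNReal.ofReal (Real.exp (t * |Y ω|)) ∂P
      ≤ ∫⁻ ω, (ENNReal.ofReal (Real.exp (t * Y ω)) +
          ENNReal.ofReal (Real.exp (t * (-Y) ω))) ∂P := by
        refine lintegral_mono fun ω => ?_
        rcases abs_choice (Y ω) with h | h <;> simp [h]
    _ ≤ ENNReal.ofReal (Real.exp (c * t ^ 2 / 2)) + ENNReal.ofReal (Real.exp (c * t ^ 2 / 2)) := by
        rw [lintegral_add_left' (hY.integrable_exp_mul t).aemeasurable.ennreal_ofReal]
        exact add_le_add (hmgf Y hY) (hmgf (-Y) hY.neg)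
    _ = ENNReal.ofReal (2 * Real.exp (c * t ^ 2 / 2)) := by
        rw [← ENNReal.ofReal_add (by positivity) (by positivity), two_mul]

lemma enorm_le_add_exp_mul_abs {s : ℝ} (hs : 0 < s) {L : ℝ} (hL : 0 ≤ L) (y : ℝ) :
    ‖y‖ₑ ≤ ENNReal.ofReal (s * L) +
      ENNReal.ofReal (s * Real.exp (-L)) * ENNReal.ofReal (Real.exp (s⁻¹ * |y|)) := by
  rw [← ENNReal.ofReal_mul (by positivity), ← ENNReal.ofReal_add (by positivity) (by positivity),
    Real.enorm_eq_ofReal_abs]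
  refine ENNReal.ofReal_le_ofReal ?_
  calc |y| = s * (L + (s⁻¹ * |y| - L)) := by field_simp; ring
    _ ≤ s * (L + Real.exp (s⁻¹ * |y| - L)) := by
        gcongr
        linarith [Real.add_one_le_exp (s⁻¹ * |y| - L)]
    _ = s * L + s * Real.exp (-L) * Real.exp (s⁻¹ * |y|) := by
        rw [sub_eq_neg_add, Real.exp_add]
        ring

lemma lintegral_biSup_enorm_le_of_hasSubgaussianMGF [IsProbabilityMeasure P] {ι : Type*}
    (I : Finset ι) {Y : ι → Ω → ℝ} {c : ℝ≥0} (hc : 0 < c)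
    (hY : ∀ i ∈ I, HasSubgaussianMGF (Y i) c P) {L : ℝ} (hL : 0 ≤ L)
    (hcard : (I.card : ℝ) ≤ Real.exp L) :
    ∫⁻ ω, ⨆ i ∈ I, ‖Y i ω‖ₑ ∂P ≤ ENNReal.ofReal (√c * (L + 4)) := by
  have hs : 0 < √(c : ℝ) := Real.sqrt_pos.2 hc
  set Z : ι → Ω → ℝ≥0∞ := fun i ω => ENNReal.ofReal (Real.exp ((√c)⁻¹ * |Y i ω|))
  have hZ : ∀ i ∈ I, ∫⁻ ω, Z i ω ∂P ≤ ENNReal.ofReal 4 := fun i hi => by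
    refine (lintegral_exp_mul_abs_le (hY i hi) _).trans (ENNReal.ofReal_le_ofReal ?_)
    have hexp : Real.exp (1 / 2) ^ 2 = Real.exp 1 := by rw [← Real.exp_nat_mul]; norm_num
    have hsq : (c : ℝ) * (√c)⁻¹ ^ 2 = 1 := by
      rw [inv_pow, Real.sq_sqrt c.coe_nonneg]
      exact mul_inv_cancel₀ (by exact_mod_cast hc.ne')
    rw [hsq]
    nlinarith [Real.exp_one_lt_d9, Real.exp_pos (1 / 2)]
  calc ∫⁻ ω, ⨆ i ∈ I, ‖Y i ω‖ₑ ∂P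
      ≤ ∫⁻ ω, (ENNReal.ofReal (√c * L) +
          ENNReal.ofReal (√c * Real.exp (-L)) * ∑ i ∈ I, Z i ω) ∂P := by
        refine lintegral_mono fun ω => iSup₂_le fun i hi => ?_
        refine (enorm_le_add_exp_mul_abs hs hL (Y i ω)).trans ?_
        gcongr
        exact Finset.single_le_sum (f := fun i => Z i ω) (fun _ _ => zero_le) hi
    _ = ENNReal.ofReal (√c * L) +
          ENNReal.ofReal (√c * Real.exp (-L)) * ∑ i ∈ I, ∫⁻ ω, Z i ω ∂P := by
        rw [lintegral_add_left measurable_const, lintegral_const_mul' _ _ ENNReal.ofReal_ne_top,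
          lintegral_finsetSum' _ fun _ hi => ?_, lintegral_const, measure_univ, mul_one]
        have := (hY _ hi).aemeasurable
        fun_prop
    _ ≤ ENNReal.ofReal (√c * L) +
          ENNReal.ofReal (√c * Real.exp (-L)) * ∑ _ ∈ I, ENNReal.ofReal 4 := by
        gcongr with _ hi
        exact hZ _ hi
    _ = ENNReal.ofReal (√c * (L + Real.exp (-L) * I.card * 4)) := by
        rw [Finset.sum_const, nsmul_eq_mul, ← ENNReal.ofReal_natCast,
          ← ENNReal.ofReal_mul (by positivity), ← ENNReal.ofReal_mul (by positivity),
          ← ENNReal.ofReal_add (by positivity) (by positivity)]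
        ring_nf
    _ ≤ ENNReal.ofReal (√c * (L + 4)) := by
        gcongr
        have : Real.exp (-L) * I.card ≤ 1 := by
          rwa [Real.exp_neg, inv_mul_le_iff₀ (Real.exp_pos _), mul_one]
        linarith

end MaximalInequality

section Chaining

variable {E : Type*} [PseudoMetricSpace E]

open Classical in
/-- The links of level `k` of a chaining argument along the nets `F`: the pairs formed by a point of
`F k` and a point of `F (k + 1)` at distance at most `δ k`. -/
noncomputable def chainLinks (F : ℕ → Finset E) (δ : ℕ → ℝ≥0) (k : ℕ) : Finset (E × E) :=
  (F k ×ˢ F (k + 1)).filter fun p => nndist p.1 p.2 ≤ δ k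

lemma mem_chainLinks {F : ℕ → Finset E} {δ : ℕ → ℝ≥0} {k : ℕ} {p : E × E} :
    p ∈ chainLinks F δ k ↔ (p.1 ∈ F k ∧ p.2 ∈ F (k + 1)) ∧ nndist p.1 p.2 ≤ δ k := by
  simp only [chainLinks, Finset.mem_filter, Finset.mem_product]

lemma card_chainLinks_le (F : ℕ → Finset E) (δ : ℕ → ℝ≥0) (k : ℕ) :
    (chainLinks F δ k).card ≤ (F k).card * (F (k + 1)).card :=
  (Finset.card_filter_le _ _).trans (Finset.card_product _ _).le

lemma exists_forall_mem_nndist_le {T : Set E} {F : ℕ → Finset E} {r : ℕ → ℝ≥0}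
    (hF : ∀ k, Metric.IsCover (r k) T (F k)) {u : E} (hu : u ∈ T) :
    ∃ π : ℕ → E, ∀ k, π k ∈ F k ∧ nndist u (π k) ≤ r k := by
  choose π hπF hπ using fun k => hF k hu
  exact ⟨π, fun k => ⟨hπF k, edist_le_coe.1 (hπ k)⟩⟩

variable {M : Type*} [PseudoEMetricSpace M] {T : Set E} {x : E → M} {F : ℕ → Finset E}
  {r δ : ℕ → ℝ≥0}

lemma edist_le_biSup_chainLinks {k : ℕ} {a b : E} (ha : a ∈ F k) (hb : b ∈ F (k + 1))
    (hab : nndist a b ≤ δ k) :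
    edist (x a) (x b) ≤ ⨆ p ∈ chainLinks F δ k, edist (x p.1) (x p.2) :=
  le_iSup₂_of_le (a, b) (mem_chainLinks.2 ⟨⟨ha, hb⟩, hab⟩) le_rfl

lemma edist_le_tsum_chainLinks (hx : ContinuousOn x T) (hFT : ∀ k, ↑(F k) ⊆ T)
    (hr : Tendsto r atTop (𝓝 0)) (hδ : ∀ k, r k + r (k + 1) ≤ δ k) {u : E} (hu : u ∈ T)
    {π : ℕ → E} (hπ : ∀ k, π k ∈ F k ∧ nndist u (π k) ≤ r k) (n : ℕ) :
    edist (x (π n)) (x u) ≤ ∑' k, ⨆ p ∈ chainLinks F δ (n + k), edist (x p.1) (x p.2) := by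
  have hstep : ∀ k, edist (x (π k)) (x (π (k + 1))) ≤
      ⨆ p ∈ chainLinks F δ k, edist (x p.1) (x p.2) := fun k =>
    edist_le_biSup_chainLinks (hπ k).1 (hπ (k + 1)).1 <|
      ((nndist_triangle_left _ _ u).trans (add_le_add (hπ k).2 (hπ (k + 1)).2)).trans (hδ k)
  have hπu : Tendsto π atTop (𝓝 u) := by
    rw [tendsto_iff_dist_tendsto_zero]
    refine squeeze_zero (fun _ => dist_nonneg) (fun k => ?_) (NNReal.tendsto_coe.2 hr)
    rw [dist_comm]
    exact (hπ k).2
  have hlim : Tendsto (fun k => x (π k)) atTop (𝓝 (x u)) := (hx u hu).tendsto.comp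
    (tendsto_nhdsWithin_iff.2 ⟨hπu, Eventually.of_forall fun k => hFT k (hπ k).1⟩)
  exact edist_le_tsum_of_edist_le_of_tendsto _ hstep hlim n

-- The link from `π 0` to `ρ 1` replaces the link of level `0` in the chain `ρ` of `t`.
lemma edist_le_two_mul_tsum_chainLinks (hx : ContinuousOn x T) (hFT : ∀ k, ↑(F k) ⊆ T)
    (hF : ∀ k, Metric.IsCover (r k) T (F k)) (hr : Tendsto r atTop (𝓝 0))
    (hδ : ∀ k, r k + r (k + 1) ≤ δ k) {h : ℝ≥0} (hδ₀ : r 0 + h + r 1 ≤ δ 0)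
    {s t : E} (hs : s ∈ T) (ht : t ∈ T) (hst : nndist s t ≤ h) :
    edist (x s) (x t) ≤ 2 * ∑' k, ⨆ p ∈ chainLinks F δ k, edist (x p.1) (x p.2) := by
  set S : ℕ → ℝ≥0∞ := fun k => ⨆ p ∈ chainLinks F δ k, edist (x p.1) (x p.2)
  obtain ⟨π, hπ⟩ := exists_forall_mem_nndist_le hF hs
  obtain ⟨ρ, hρ⟩ := exists_forall_mem_nndist_le hF ht
  have hsπ : edist (x (π 0)) (x s) ≤ ∑' k, S k := by
    simpa only [zero_add] using edist_le_tsum_chainLinks hx hFT hr hδ hs hπ 0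
  have htρ : edist (x (ρ 1)) (x t) ≤ ∑' k, S (1 + k) :=
    edist_le_tsum_chainLinks hx hFT hr hδ ht hρ 1
  have hπρ : edist (x (π 0)) (x (ρ 1)) ≤ S 0 := by
    refine edist_le_biSup_chainLinks (hπ 0).1 (hρ 1).1 (le_trans ?_ hδ₀)
    calc nndist (π 0) (ρ 1) ≤ nndist (π 0) s + nndist s t + nndist t (ρ 1) :=
          (nndist_triangle _ t _).trans (add_le_add_left (nndist_triangle _ s _) _)
      _ ≤ r 0 + h + r 1 := by
          rw [nndist_comm _ s]
          exact add_le_add_three (hπ 0).2 hst (hρ 1).2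
  calc edist (x s) (x t)
      ≤ edist (x s) (x (π 0)) + edist (x (π 0)) (x (ρ 1)) + edist (x (ρ 1)) (x t) :=
        edist_triangle4 _ _ _ _
    _ ≤ ∑' k, S k + S 0 + ∑' k, S (1 + k) := by
        rw [edist_comm (x s)]
        exact add_le_add_three hsπ hπρ htρ
    _ = 2 * ∑' k, S k := by
        simp_rw [add_comm 1]
        rw [add_assoc, ← tsum_eq_zero_add' ENNReal.summable, two_mul]

lemma lintegral_iSup_edist_le_two_mul_tsum_chainLinks {Ω : Type*} [MeasurableSpace Ω]
    {P : Measure Ω} {X : E → Ω → M} (hX : ∀ᵐ ω ∂P, ContinuousOn (fun u => X u ω) T)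
    (hmeas : ∀ a ∈ T, ∀ b ∈ T, AEMeasurable (fun ω => edist (X a ω) (X b ω)) P)
    (hFT : ∀ k, ↑(F k) ⊆ T) (hF : ∀ k, Metric.IsCover (r k) T (F k))
    (hr : Tendsto r atTop (𝓝 0)) (hδ : ∀ k, r k + r (k + 1) ≤ δ k) {h : ℝ≥0}
    (hδ₀ : r 0 + h + r 1 ≤ δ 0) :
    ∫⁻ ω, ⨆ p : {p : E × E // p.1 ∈ T ∧ p.2 ∈ T ∧ dist p.1 p.2 ≤ h},
        edist (X p.1.1 ω) (X p.1.2 ω) ∂P ≤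
      2 * ∑' k, ∫⁻ ω, ⨆ p ∈ chainLinks F δ k, edist (X p.1 ω) (X p.2 ω) ∂P := by
  have hlinks : ∀ k, AEMeasurable (fun ω => ⨆ p ∈ chainLinks F δ k, edist (X p.1 ω) (X p.2 ω)) P :=
    fun k => AEMeasurable.biSup _ (Finset.countable_toSet _) fun p hp =>
      hmeas _ (hFT k (mem_chainLinks.1 hp).1.1) _ (hFT (k + 1) (mem_chainLinks.1 hp).1.2)
  rw [← lintegral_tsum hlinks, ← lintegral_const_mul' _ _ ENNReal.ofNat_ne_top]
  refine lintegral_mono_ae ?_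
  filter_upwards [hX] with ω hω
  exact iSup_le fun p =>
    edist_le_two_mul_tsum_chainLinks hω hFT hF hr hδ hδ₀ p.2.1 p.2.2.1 p.2.2.2

end Chaining

section SubgaussianIncrements

lemma tsum_ofReal_succ_mul_geometric {q : ℝ} (hq₀ : 0 ≤ q) (hq₁ : q < 1) :
    ∑' k : ℕ, ENNReal.ofReal (((k : ℝ) + 1) * q ^ k) = ENNReal.ofReal (1 / (1 - q) ^ 2) := by
  have h := hasSum_choose_mul_geometric_of_norm_lt_one 1 (r := q)
    (by rwa [Real.norm_of_nonneg hq₀])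
  simp only [Nat.choose_one_right, Nat.cast_add, Nat.cast_one, Nat.reduceAdd] at h
  rw [← ENNReal.ofReal_tsum_of_nonneg (fun k => by positivity) h.summable, h.tsum_eq]

lemma div_two_pow_rpow {x : ℝ} (hx : 0 ≤ x) (α : ℝ) (k : ℕ) :
    (x / 2 ^ k) ^ α = x ^ α * (2 ^ (-α)) ^ k := by
  rw [Real.div_rpow hx (by positivity), ← Real.rpow_natCast_mul two_pos.le,
    ← Real.rpow_mul_natCast two_pos.le, neg_mul, Real.rpow_neg two_pos.le, mul_comm α,
    div_eq_mul_inv]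

variable {E : Type*} [PseudoMetricSpace E] {C d ε : ℝ≥0} {F : ℕ → Finset E} {δ : ℕ → ℝ≥0}

lemma card_chainLinks_le_exp (hε : 0 < ε)
    (hF : ∀ k, ((F k).card : ℝ) ≤ C * ((ε / 2 ^ k : ℝ≥0) : ℝ) ^ (-(d : ℝ))) (k : ℕ) :
    ((chainLinks F δ k).card : ℝ) ≤
      Real.exp (2 * (C + d * Real.log ((ε : ℝ) / 2 ^ (k + 1))⁻¹)) := by
  have : (0 : ℝ) < ε := hε
  have hexp : C * ((ε : ℝ) / 2 ^ (k + 1)) ^ (-(d : ℝ)) ≤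
      Real.exp (C + d * Real.log ((ε : ℝ) / 2 ^ (k + 1))⁻¹) := by
    rw [Real.exp_add, Real.rpow_def_of_pos (by positivity), Real.log_inv, mul_neg, mul_neg,
      mul_comm (Real.log _)]
    gcongr
    linarith [Real.add_one_le_exp (C : ℝ)]
  have hmono : C * ((ε : ℝ) / 2 ^ k) ^ (-(d : ℝ)) ≤ C * ((ε : ℝ) / 2 ^ (k + 1)) ^ (-(d : ℝ)) := by
    refine mul_le_mul_of_nonneg_left
      (Real.rpow_le_rpow_of_nonpos (by positivity) ?_ (by simp)) C.coe_nonneg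
    gcongr
    · norm_num
    · omega
  push_cast at hF
  calc ((chainLinks F δ k).card : ℝ) ≤ (F k).card * (F (k + 1)).card := by
        exact_mod_cast card_chainLinks_le F δ k
    _ ≤ Real.exp (C + d * Real.log ((ε : ℝ) / 2 ^ (k + 1))⁻¹) *
          Real.exp (C + d * Real.log ((ε : ℝ) / 2 ^ (k + 1))⁻¹) := by
        gcongr
        · exact (hF k).trans (hmono.trans hexp)
        · exact (hF (k + 1)).trans hexp
    _ = Real.exp (2 * (C + d * Real.log ((ε : ℝ) / 2 ^ (k + 1))⁻¹)) := by
        rw [← Real.exp_add, two_mul]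

lemma half_le_log_inv (hε₀ : 0 < ε) (hε : ε ≤ 1 / 2) : 1 / 2 ≤ Real.log (ε : ℝ)⁻¹ := by
  have h2 : (2 : ℝ) ≤ (ε : ℝ)⁻¹ := by
    rw [le_inv_comm₀ two_pos (by exact_mod_cast hε₀), ← one_div]
    exact_mod_cast hε
  linarith [Real.log_two_gt_d9, Real.log_le_log two_pos h2]

lemma log_inv_div_two_pow_le (hε₀ : 0 < ε) (hε : ε ≤ 1 / 2) (k : ℕ) :
    2 * (C + d * Real.log ((ε : ℝ) / 2 ^ (k + 1))⁻¹) + 4 ≤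
      (4 * C + 8 + 6 * d) * Real.log (ε : ℝ)⁻¹ * (k + 1) := by
  have hε' : (ε : ℝ) ≠ 0 := by exact_mod_cast hε₀.ne'
  have hlog := half_le_log_inv hε₀ hε
  have hk : ((k : ℝ) + 1) / 2 ≤ Real.log (ε : ℝ)⁻¹ * (k + 1) := by nlinarith
  have hsplit : Real.log ((ε : ℝ) / 2 ^ (k + 1))⁻¹ =
      (k + 1) * Real.log 2 + Real.log (ε : ℝ)⁻¹ := by
    rw [inv_div, div_eq_mul_inv, Real.log_mul (by positivity) (inv_ne_zero hε'), Real.log_pow]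
    push_cast
    rfl
  have hscale : Real.log ((ε : ℝ) / 2 ^ (k + 1))⁻¹ ≤ 3 * (Real.log (ε : ℝ)⁻¹ * (k + 1)) := by
    rw [hsplit]
    nlinarith [Real.log_two_lt_d9]
  have hone : 1 ≤ 2 * (Real.log (ε : ℝ)⁻¹ * (k + 1)) := by
    linarith [(k.cast_nonneg : (0 : ℝ) ≤ k)]
  nlinarith [mul_le_mul_of_nonneg_left hscale d.coe_nonneg,
    mul_le_mul_of_nonneg_left hone C.coe_nonneg]

variable {Ω : Type*} [MeasurableSpace Ω] {P : Measure Ω} [IsProbabilityMeasure P]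
  {T : Set E} {X : E → Ω → ℝ} {V : ℝ≥0} {α : ℝ}

lemma lintegral_biSup_chainLinks_le (hε₀ : 0 < ε) (hε : ε ≤ 1 / 2) (hFT : ∀ k, ↑(F k) ⊆ T)
    (hF : ∀ k, ((F k).card : ℝ) ≤ C * ((ε / 2 ^ k : ℝ≥0) : ℝ) ^ (-(d : ℝ))) (hV : 0 < V)
    (hα : 0 < α)
    (hX : ∀ a ∈ T, ∀ b ∈ T, HasSubgaussianMGF (X a - X b) (V * nndist a b ^ (2 * α)) P)
    {K : ℝ≥0} (hK : 0 < K) (k : ℕ) :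
    ∫⁻ ω, ⨆ p ∈ chainLinks F (fun k => K * (ε / 2 ^ k)) k, edist (X p.1 ω) (X p.2 ω) ∂P ≤
      ENNReal.ofReal (√V * (K * ε) ^ α * ((4 * C + 8 + 6 * d) * Real.log (ε : ℝ)⁻¹)) *
        ENNReal.ofReal ((k + 1) * (2 ^ (-α)) ^ k) := by
  set x : ℝ≥0 := K * (ε / 2 ^ k)
  have : 0 < x := by positivity
  have hlog := half_le_log_inv hε₀ hε
  have hsub : ∀ p ∈ chainLinks F (fun k => K * (ε / 2 ^ k)) k,
      HasSubgaussianMGF (X p.1 - X p.2) (V * x ^ (2 * α)) P := fun p hp => by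
    obtain ⟨⟨h₁, h₂⟩, hp⟩ := mem_chainLinks.1 hp
    exact hasSubgaussianMGF_mono (hX _ (hFT k h₁) _ (hFT (k + 1) h₂)) (by gcongr)
  have hL : 0 ≤ 2 * (C + d * Real.log ((ε : ℝ) / 2 ^ (k + 1))⁻¹) := by
    have hle : (ε : ℝ) / 2 ^ (k + 1) ≤ 1 :=
      div_le_one_of_le₀ ((hε.trans (by norm_num)).trans (one_le_pow₀ one_le_two)) (by positivity)
    have := Real.log_nonneg ((one_le_inv₀ (by positivity)).2 hle)
    positivity
  have hsqrt : √(V * x ^ (2 * α) : ℝ≥0) = √V * (K * ε) ^ α * (2 ^ (-α)) ^ k := by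
    have hxα : (x : ℝ) ^ α = (K * ε) ^ α * (2 ^ (-α)) ^ k := by
      rw [← div_two_pow_rpow (by positivity), mul_div_assoc]
      rfl
    rw [NNReal.coe_mul, Real.sqrt_mul V.coe_nonneg, NNReal.coe_rpow, mul_comm 2 α,
      Real.rpow_mul x.coe_nonneg, Real.rpow_two, Real.sqrt_sq (by positivity), hxα, mul_assoc]
  rw [← ENNReal.ofReal_mul (by positivity)]
  simp_rw [edist_eq_enorm_sub]
  calc _ ≤ _ := lintegral_biSup_enorm_le_of_hasSubgaussianMGF _ (by positivity) hsub hL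
        (card_chainLinks_le_exp hε₀ hF k)
    _ ≤ _ := by
      refine ENNReal.ofReal_le_ofReal ?_
      rw [hsqrt]
      calc _ ≤ √V * (K * ε) ^ α * (2 ^ (-α)) ^ k *
            ((4 * C + 8 + 6 * d) * Real.log (ε : ℝ)⁻¹ * (k + 1)) := by
            gcongr
            exact log_inv_div_two_pow_le hε₀ hε k
        _ = _ := by ring

theorem lintegral_iSup_edist_le_of_hasSubgaussianMGF (hT : HasPolynomialCoveringNumber T C d)
    (hε₀ : 0 < ε) (hε : ε ≤ 1 / 2) (hcont : ∀ᵐ ω ∂P, ContinuousOn (fun u => X u ω) T) (hV : 0 < V)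
    (hα : 0 < α)
    (hX : ∀ a ∈ T, ∀ b ∈ T, HasSubgaussianMGF (X a - X b) (V * nndist a b ^ (2 * α)) P)
    (h : ℝ≥0) :
    ∫⁻ ω, ⨆ p : {p : E × E // p.1 ∈ T ∧ p.2 ∈ T ∧ dist p.1 p.2 ≤ h * ε},
        edist (X p.1.1 ω) (X p.1.2 ω) ∂P ≤
      ENNReal.ofReal (2 * √V * (h + 2) ^ α * (4 * C + 8 + 6 * d) / (1 - 2 ^ (-α)) ^ 2 *
        (ε : ℝ) ^ α * Real.log (ε : ℝ)⁻¹) := by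
  have hr₀ : ∀ k : ℕ, 0 < ε / 2 ^ k := fun k => by positivity
  have hr₁ : ∀ k : ℕ, ε / 2 ^ k ≤ 1 := fun k =>
    (div_le_self zero_le (one_le_pow₀ one_le_two)).trans (hε.trans (by norm_num))
  have hr : Tendsto (fun k : ℕ => ε / 2 ^ k) atTop (𝓝 0) := by
    simpa [div_eq_mul_inv] using
      (NNReal.tendsto_pow_atTop_nhds_zero_of_lt_one (r := 2⁻¹) (by norm_num)).const_mul ε
  choose F hFT hcover hcard using fun k => hT.exists_finset_isCover (hr₀ k) (hr₁ k)
  have hmeas : ∀ a ∈ T, ∀ b ∈ T, AEMeasurable (fun ω => edist (X a ω) (X b ω)) P := by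
    intro a ha b hb
    simp_rw [edist_eq_enorm_sub]
    exact (hX a ha b hb).aemeasurable.enorm
  have hδ : ∀ k : ℕ, ε / 2 ^ k + ε / 2 ^ (k + 1) ≤ (h + 2) * (ε / 2 ^ k) := fun k =>
    calc ε / 2 ^ k + ε / 2 ^ (k + 1) ≤ ε / 2 ^ k + ε / 2 ^ k := by
          gcongr
          · exact one_le_two
          · exact k.le_succ
      _ = 2 * (ε / 2 ^ k) := (two_mul _).symm
      _ ≤ (h + 2) * (ε / 2 ^ k) := by
          gcongr
          exact le_add_self
  have hδ₀ : ε / 2 ^ 0 + h * ε + ε / 2 ^ 1 ≤ (h + 2) * (ε / 2 ^ 0) := by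
    rw [pow_zero, pow_one, div_one]
    calc ε + h * ε + ε / 2 ≤ ε + h * ε + ε := by
          gcongr
          exact half_le_self zero_le
      _ = (h + 2) * ε := by ring
  calc _ ≤ 2 * ∑' k, ∫⁻ ω, ⨆ p ∈ chainLinks F (fun k => (h + 2) * (ε / 2 ^ k)) k,
          edist (X p.1 ω) (X p.2 ω) ∂P :=
        lintegral_iSup_edist_le_two_mul_tsum_chainLinks hcont hmeas hFT hcover hr hδ hδ₀
    _ ≤ 2 * ∑' k : ℕ, ENNReal.ofReal
          (√V * ((h + 2) * ε) ^ α * ((4 * C + 8 + 6 * d) * Real.log (ε : ℝ)⁻¹)) *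
            ENNReal.ofReal ((k + 1) * (2 ^ (-α)) ^ k) := by
        gcongr with k
        exact lintegral_biSup_chainLinks_le hε₀ hε hFT hcard hV hα hX (by positivity) k
    _ = _ := by
        rw [ENNReal.tsum_mul_left, tsum_ofReal_succ_mul_geometric (by positivity)
          (Real.rpow_lt_one_of_one_lt_of_neg one_lt_two (neg_neg_of_pos hα)),
          ← ENNReal.ofReal_ofNat 2, ← ENNReal.ofReal_mul' (by positivity),
          ← ENNReal.ofReal_mul two_pos.le, Real.mul_rpow (by positivity) (by positivity)]
        ring_nf

end SubgaussianIncrements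

section GaussianIncrements

variable {Ω : Type*} [MeasurableSpace Ω] {P : Measure Ω} {U W : Ω → ℝ}

lemma hasSubgaussianMGF_of_hasGaussianLaw (hU : HasGaussianLaw U P) (hU₀ : ∫ ω, U ω ∂P = 0) :
    HasSubgaussianMGF U (∫ ω, U ω ^ 2 ∂P).toNNReal P := by
  have hlaw : P.map U = gaussianReal 0 (∫ ω, U ω ^ 2 ∂P).toNNReal := by
    rw [hU.map_eq_gaussianReal, hU₀, variance_of_integral_eq_zero hU.aemeasurable hU₀]
  refine ⟨fun t => ?_, fun t => ?_⟩
  · have h := integrable_exp_mul_gaussianReal (μ := 0) (v := (∫ ω, U ω ^ 2 ∂P).toNNReal) t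
    rw [← hlaw] at h
    exact h.comp_aemeasurable hU.aemeasurable
  · rw [mgf_gaussianReal hlaw, zero_mul, zero_add]

lemma integral_mul_sub_mul_sq (hU : MemLp U 2 P) (hW : MemLp W 2 P)
    (hU₁ : ∫ ω, U ω ^ 2 ∂P = 1) (hW₁ : ∫ ω, W ω ^ 2 ∂P = 1) (a b : ℝ) :
    ∫ ω, (a * U ω - b * W ω) ^ 2 ∂P = (a - b) ^ 2 + 2 * (a * b) * (1 - ∫ ω, U ω * W ω ∂P) := by
  have hUW : Integrable (fun ω => U ω * W ω) P := hU.integrable_mul hW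
  have hsum : Integrable (fun ω => a ^ 2 * U ω ^ 2 + b ^ 2 * W ω ^ 2) P :=
    (hU.integrable_sq.const_mul _).add (hW.integrable_sq.const_mul _)
  calc ∫ ω, (a * U ω - b * W ω) ^ 2 ∂P
      = ∫ ω, (a ^ 2 * U ω ^ 2 + b ^ 2 * W ω ^ 2 - 2 * (a * b) * (U ω * W ω)) ∂P := by
        congr 1 with ω
        ring
    _ = a ^ 2 * 1 + b ^ 2 * 1 - 2 * (a * b) * ∫ ω, U ω * W ω ∂P := by
        rw [integral_sub hsum (hUW.const_mul _), integral_add (hU.integrable_sq.const_mul _)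
          (hW.integrable_sq.const_mul _), integral_const_mul, integral_const_mul,
          integral_const_mul, hU₁, hW₁]
    _ = (a - b) ^ 2 + 2 * (a * b) * (1 - ∫ ω, U ω * W ω ∂P) := by ring

lemma integral_mul_le_one (hU : MemLp U 2 P) (hW : MemLp W 2 P)
    (hU₁ : ∫ ω, U ω ^ 2 ∂P = 1) (hW₁ : ∫ ω, W ω ^ 2 ∂P = 1) : ∫ ω, U ω * W ω ∂P ≤ 1 := by
  have h := integral_mul_sub_mul_sq hU hW hU₁ hW₁ 1 1
  have h₀ : 0 ≤ ∫ ω, (1 * U ω - 1 * W ω) ^ 2 ∂P := integral_nonneg fun _ => sq_nonneg _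
  linarith

lemma hasSubgaussianMGF_mul_sub_mul (hUW : HasGaussianLaw (fun ω => (U ω, W ω)) P)
    (hU₀ : ∫ ω, U ω ∂P = 0) (hW₀ : ∫ ω, W ω ∂P = 0) (hU₁ : ∫ ω, U ω ^ 2 ∂P = 1)
    (hW₁ : ∫ ω, W ω ^ 2 ∂P = 1) {a b : ℝ} {σ x y : ℝ≥0} (ha : |a| ≤ σ) (hb : |b| ≤ σ)
    (hab : |a - b| ≤ x) (hcorr : 1 - ∫ ω, U ω * W ω ∂P ≤ y) :
    HasSubgaussianMGF (fun ω => a * U ω - b * W ω) (x ^ 2 + 2 * σ ^ 2 * y) P := by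
  have hU := hUW.fst.memLp_two
  have hW := hUW.snd.memLp_two
  have := hUW.isProbabilityMeasure
  have hgauss : HasGaussianLaw (fun ω => a * U ω - b * W ω) P :=
    hUW.map_fun (a • ContinuousLinearMap.fst ℝ ℝ ℝ - b • ContinuousLinearMap.snd ℝ ℝ ℝ)
  have hmean : ∫ ω, (a * U ω - b * W ω) ∂P = 0 := by
    rw [integral_sub (hUW.fst.integrable.const_mul a) (hUW.snd.integrable.const_mul b),
      integral_const_mul, integral_const_mul, hU₀, hW₀, mul_zero, mul_zero, sub_zero]
  refine hasSubgaussianMGF_mono (hasSubgaussianMGF_of_hasGaussianLaw hgauss hmean) ?_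
  have hcorr₀ : 0 ≤ 1 - ∫ ω, U ω * W ω ∂P :=
    sub_nonneg.2 (integral_mul_le_one hU hW hU₁ hW₁)
  have hmul : a * b ≤ σ ^ 2 := by
    rw [sq]
    exact (le_abs_self _).trans ((abs_mul a b).trans_le (by gcongr))
  rw [Real.toNNReal_le_iff_le_coe, integral_mul_sub_mul_sq hU hW hU₁ hW₁]
  push_cast
  calc (a - b) ^ 2 + 2 * (a * b) * (1 - ∫ ω, U ω * W ω ∂P)
      ≤ |a - b| ^ 2 + 2 * (σ : ℝ) ^ 2 * (1 - ∫ ω, U ω * W ω ∂P) := by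
        rw [sq_abs]
        gcongr
    _ ≤ (x : ℝ) ^ 2 + 2 * (σ : ℝ) ^ 2 * y := by gcongr

lemma integral_of_hasLaw_gaussianReal {m : ℝ} {v : ℝ≥0} (hU : HasLaw U (gaussianReal m v) P) :
    ∫ ω, U ω ∂P = m :=
  hU.integral_eq.trans integral_id_gaussianReal

lemma integral_sq_of_hasLaw_gaussianReal {v : ℝ≥0} (hU : HasLaw U (gaussianReal 0 v) P) :
    ∫ ω, U ω ^ 2 ∂P = v := by
  rw [← variance_of_integral_eq_zero hU.aemeasurable (integral_of_hasLaw_gaussianReal hU),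
    hU.variance_eq, variance_id_gaussianReal]

end GaussianIncrements

section FiniteDimensionalDistributions

variable {Ω : Type*} [MeasurableSpace Ω] {P : Measure Ω} {E : Type*} {T : Set E}
  {f : E → Ω → ℝ}

lemma hasGaussianLaw_prodMk_of_map_sum (hmeas : ∀ u ∈ T, AEMeasurable (f u) P)
    (hsum : ∀ s : Finset E, ↑s ⊆ T → ∀ c : E → ℝ,
      ∃ v : ℝ≥0, P.map (fun ω => ∑ u ∈ s, c u * f u ω) = gaussianReal 0 v)
    {a b : E} (ha : a ∈ T) (hb : b ∈ T) : HasGaussianLaw (fun ω => (f a ω, f b ω)) P := by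
  classical
  refine ⟨isGaussian_of_map_eq_gaussianReal fun L => ⟨0, ?_⟩⟩
  obtain ⟨v, hv⟩ := hsum {a, b} (by simp [insert_subset_iff, ha, hb])
    (Pi.single a (L (1, 0)) + Pi.single b (L (0, 1)))
  refine ⟨v, ?_⟩
  rw [AEMeasurable.map_map_of_aemeasurable (by fun_prop) ((hmeas a ha).prodMk (hmeas b hb)), ← hv]
  congr 1 with ω
  have hL : L (f a ω, f b ω) = L (1, 0) * f a ω + L (0, 1) * f b ω := by
    have h : (f a ω, f b ω) = f a ω • (1, 0) + f b ω • (0, 1) := by simp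
    rw [h, map_add, map_smul, map_smul, smul_eq_mul, smul_eq_mul, mul_comm, mul_comm (f b ω)]
  simp [hL, add_mul, Finset.sum_add_distrib, Pi.single_apply]

lemma one_sub_integral_mul_le_of_abs_sub_le [PseudoMetricSpace E] {κ β : ℝ} (hβ : 0 < β)
    (hlaw : ∀ u ∈ T, HasLaw (f u) (gaussianReal 0 1) P)
    (hcorr : ∀ s ∈ T, ∀ u ∈ T, ∀ s' ∈ T, ∀ u' ∈ T,
      |(∫ ω, f u ω * f s ω ∂P) - (∫ ω, f u' ω * f s' ω ∂P)| ≤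
        κ * (dist u u' ^ β + dist s s' ^ β))
    {a b : E} (ha : a ∈ T) (hb : b ∈ T) : 1 - ∫ ω, f a ω * f b ω ∂P ≤ κ * dist a b ^ β := by
  have h := (le_abs_self _).trans (hcorr b hb b hb b hb a ha)
  simp_rw [← sq] at h
  rwa [integral_sq_of_hasLaw_gaussianReal (hlaw b hb), NNReal.coe_one, dist_self,
    Real.zero_rpow hβ.ne', add_zero, dist_comm] at h

end FiniteDimensionalDistributions

section GaussianField

variable {E : Type*} [PseudoMetricSpace E] {T : Set E} {Ω : Type*} [MeasurableSpace Ω]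
  {P : Measure Ω} {f : E → Ω → ℝ} {σ : E → ℝ} {α σu κH κH' : ℝ≥0}

lemma hasSubgaussianMGF_mul_sub_mul_of_holderOnWith
    (hgauss : ∀ s ∈ T, ∀ t ∈ T, HasGaussianLaw (fun ω => (f s ω, f t ω)) P)
    (hlaw : ∀ t ∈ T, HasLaw (f t) (gaussianReal 0 1) P)
    (hcorr : ∀ s ∈ T, ∀ t ∈ T, 1 - ∫ ω, f s ω * f t ω ∂P ≤ κH' * dist s t ^ (2 * α : ℝ))
    (hσ : ∀ t ∈ T, |σ t| ≤ σu) (hHolder : HolderOnWith κH α σ T) {s t : E} (hs : s ∈ T)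
    (ht : t ∈ T) :
    HasSubgaussianMGF (fun ω => σ s * f s ω - σ t * f t ω)
      ((κH ^ 2 + 2 * σu ^ 2 * κH') * nndist s t ^ (2 * α : ℝ)) P := by
  have hV : (κH ^ 2 + 2 * σu ^ 2 * κH') * nndist s t ^ (2 * α : ℝ) =
      (κH * nndist s t ^ (α : ℝ)) ^ 2 + 2 * σu ^ 2 * (κH' * nndist s t ^ (2 * α : ℝ)) := by
    rw [mul_pow, ← NNReal.rpow_mul_natCast, mul_comm (α : ℝ), Nat.cast_ofNat]
    ring
  rw [hV]
  exact hasSubgaussianMGF_mul_sub_mul (hgauss s hs t ht)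
    (integral_of_hasLaw_gaussianReal (hlaw s hs)) (integral_of_hasLaw_gaussianReal (hlaw t ht))
    (integral_sq_of_hasLaw_gaussianReal (hlaw s hs))
    (integral_sq_of_hasLaw_gaussianReal (hlaw t ht)) (hσ s hs) (hσ t ht)
    (hHolder.nndist_le hs ht) (hcorr s hs t ht)

-- The summand `1` keeps the variance constant positive when `κH = κH' = 0`.
theorem lintegral_iSup_edist_mul_le_of_holderOnWith [IsProbabilityMeasure P] {C d : ℝ≥0}
    (hT : HasPolynomialCoveringNumber T C d) (hα : 0 < α)
    (hgauss : ∀ s ∈ T, ∀ t ∈ T, HasGaussianLaw (fun ω => (f s ω, f t ω)) P)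
    (hlaw : ∀ t ∈ T, HasLaw (f t) (gaussianReal 0 1) P)
    (hcont : ∀ᵐ ω ∂P, ContinuousOn (fun t => f t ω) T)
    (hcorr : ∀ s ∈ T, ∀ t ∈ T, 1 - ∫ ω, f s ω * f t ω ∂P ≤ κH' * dist s t ^ (2 * α : ℝ))
    (hσ : ∀ t ∈ T, |σ t| ≤ σu) (hHolder : HolderOnWith κH α σ T) (κm : ℝ≥0) {N : ℝ} (hN : 2 ≤ N) :
    ∫⁻ ω, ⨆ p : {p : E × E // p.1 ∈ T ∧ p.2 ∈ T ∧ dist p.1 p.2 ≤ κm / N},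
        edist (σ p.1.1 * f p.1.1 ω) (σ p.1.2 * f p.1.2 ω) ∂P ≤
      ENNReal.ofReal (2 * √(κH ^ 2 + 2 * σu ^ 2 * κH' + 1) * (κm + 2) ^ (α : ℝ) *
        (4 * C + 8 + 6 * d) / (1 - 2 ^ (-(α : ℝ))) ^ 2 * N ^ (-(α : ℝ)) * Real.log N) := by
  lift N to ℝ≥0 using by linarith
  have hN₀ : (0 : ℝ) < N := by linarith
  have hcontX : ∀ᵐ ω ∂P, ContinuousOn (fun t => σ t * f t ω) T :=
    hcont.mono fun ω hω => (hHolder.continuousOn hα).mul hω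
  have hX : ∀ s ∈ T, ∀ t ∈ T, HasSubgaussianMGF
      ((fun ω => σ s * f s ω) - fun ω => σ t * f t ω)
      ((κH ^ 2 + 2 * σu ^ 2 * κH' + 1) * nndist s t ^ (2 * α : ℝ)) P := fun s hs t ht =>
    hasSubgaussianMGF_mono
      (hasSubgaussianMGF_mul_sub_mul_of_holderOnWith hgauss hlaw hcorr hσ hHolder hs ht)
      (mul_le_mul_left le_self_add _)
  have hbound := lintegral_iSup_edist_le_of_hasSubgaussianMGF hT (ε := N⁻¹) (by simpa using hN₀)
    (by rw [one_div]; gcongr; exact_mod_cast hN) hcontX (by positivity) (by exact_mod_cast hα)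
    hX κm
  rw [NNReal.coe_inv, inv_inv, Real.inv_rpow hN₀.le, ← Real.rpow_neg hN₀.le] at hbound
  rw [div_eq_mul_inv (κm : ℝ)]
  exact_mod_cast hbound

end GaussianField

section HolderExponents

lemma rpow_le_mul_rpow_of_le {x D a b : ℝ} (hx : 0 ≤ x) (hxD : x ≤ D) (ha : 0 ≤ a) (hab : a ≤ b) :
    x ^ b ≤ D ^ (b - a) * x ^ a :=
  calc x ^ b = x ^ (b - a) * x ^ a := by
        rw [← Real.rpow_add_of_nonneg hx (sub_nonneg.2 hab) ha, sub_add_cancel]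
    _ ≤ D ^ (b - a) * x ^ a := by gcongr

lemma holderOnWith_of_abs_sub_le {E : Type*} [PseudoMetricSpace E] {T : Set E} {σ : E → ℝ}
    {κ β : ℝ≥0}
    (hσ : ∀ s ∈ T, ∀ t ∈ T, |σ t - σ s| ≤ κ * dist s t ^ (β : ℝ)) :
    HolderOnWith κ β σ T := by
  intro s hs t ht
  rw [edist_nndist, edist_nndist, ← ENNReal.coe_rpow_of_nonneg _ β.coe_nonneg, ← ENNReal.coe_mul,
    ENNReal.coe_le_coe]
  exact (dist_comm _ _).trans_le (hσ s hs t ht)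

end HolderExponents

-- The junk value `0` of an unbounded `⨆` or a non-integrable function satisfies the bound.
lemma integral_iSup_abs_lt_of_lintegral_iSup_enorm_lt {Ω : Type*} [MeasurableSpace Ω]
    {P : Measure Ω} {ι : Sort*} {Y : ι → Ω → ℝ} {B : ℝ}
    (h : ∫⁻ ω, ⨆ i, ‖Y i ω‖ₑ ∂P < ENNReal.ofReal B) : ∫ ω, ⨆ i, |Y i ω| ∂P < B := by
  have hpt : ∀ ω, ‖⨆ i, |Y i ω|‖ₑ ≤ ⨆ i, ‖Y i ω‖ₑ := fun ω => by
    rw [Real.enorm_of_nonneg (Real.iSup_nonneg fun _ => abs_nonneg _)]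
    simp_rw [← Real.norm_eq_abs, ← toReal_enorm]
    rw [← ENNReal.toReal_iSup fun _ => enorm_ne_top]
    exact ENNReal.ofReal_toReal_le
  have hlt := (enorm_integral_le_lintegral_enorm _).trans_lt ((lintegral_mono hpt).trans_lt h)
  rw [Real.enorm_of_nonneg (integral_nonneg fun _ => Real.iSup_nonneg fun _ => abs_nonneg _)] at hlt
  exact (ENNReal.ofReal_lt_ofReal_iff_of_nonneg
    (integral_nonneg fun _ => Real.iSup_nonneg fun _ => abs_nonneg _)).1 hlt

universe u v

theorem expected_sup_increment_bound_general {E : Type u} [PseudoMetricSpace E] {T : Set E}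
    {C d : ℝ≥0} (hT : HasPolynomialCoveringNumber T C d) {α β β' : ℝ≥0} (hα : 0 < α)
    (hαβ : α ≤ β) (hαβ' : 2 * α ≤ β') (σu κH κH' κm : ℝ≥0) :
    ∃ κξ > (0 : ℝ), ∀ {Ω : Type v} [MeasurableSpace Ω] (P : Measure Ω) [IsProbabilityMeasure P]
      (f : E → Ω → ℝ),
      (∀ s : Finset E, ↑s ⊆ T → ∀ c : E → ℝ,
        ∃ v : ℝ≥0, P.map (fun ω => ∑ u ∈ s, c u * f u ω) = gaussianReal 0 v) →
      (∀ u ∈ T, P.map (f u) = gaussianReal 0 1) →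
      (∀ᵐ ω ∂P, ContinuousOn (fun u => f u ω) T) →
      (∀ s ∈ T, ∀ u ∈ T, ∀ s' ∈ T, ∀ u' ∈ T,
        |(∫ ω, f u ω * f s ω ∂P) - (∫ ω, f u' ω * f s' ω ∂P)| ≤
          κH' * (dist u u' ^ (β' : ℝ) + dist s s' ^ (β' : ℝ))) →
      ∀ σ : E → ℝ, (∀ u ∈ T, |σ u| ≤ σu) →
      (∀ s ∈ T, ∀ u ∈ T, |σ u - σ s| ≤ κH * dist s u ^ (β : ℝ)) →
      ∀ N : ℝ, 2 ≤ N →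
        ∫⁻ ω, ⨆ p : {p : E × E // p.1 ∈ T ∧ p.2 ∈ T ∧ dist p.1 p.2 ≤ κm / N},
            ‖σ p.1.1 * f p.1.1 ω - σ p.1.2 * f p.1.2 ω‖ₑ ∂P <
          ENNReal.ofReal (κξ * N ^ (-(α : ℝ)) * Real.log N) := by
  obtain ⟨D, hD⟩ := Metric.isBounded_iff_nndist.1 hT.isBounded
  set κα : ℝ≥0 := κH * D ^ (β - α : ℝ)
  set κα' : ℝ≥0 := κH' * D ^ (β' - 2 * α : ℝ)
  set K : ℝ := 2 * √(κα ^ 2 + 2 * σu ^ 2 * κα' + 1) * (κm + 2) ^ (α : ℝ) * (4 * C + 8 + 6 * d) /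
    (1 - 2 ^ (-(α : ℝ))) ^ 2
  have hK : 0 ≤ K := by positivity
  refine ⟨K + 1, add_pos_of_nonneg_of_pos hK one_pos,
    fun P _ f hsum hunit hcont hcorr σ hσ hσβ N hN => ?_⟩
  have hlaw : ∀ t ∈ T, HasLaw (f t) (gaussianReal 0 1) P := fun t ht =>
    ⟨.of_map_ne_zero (by rw [hunit t ht]; exact NeZero.ne _), hunit t ht⟩
  have hgauss : ∀ s ∈ T, ∀ t ∈ T, HasGaussianLaw (fun ω => (f s ω, f t ω)) P := fun s hs t ht =>
    hasGaussianLaw_prodMk_of_map_sum (fun u hu => (hlaw u hu).aemeasurable) hsum hs ht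
  have hHolder : HolderOnWith κα α σ T :=
    (holderOnWith_of_abs_sub_le hσβ).of_le (fun _ hs _ ht => edist_le_coe.2 (hD hs ht)) hαβ
  have hβ' : 0 < β' := (mul_pos two_pos hα).trans_le hαβ'
  have hcorrα : ∀ s ∈ T, ∀ t ∈ T,
      1 - ∫ ω, f s ω * f t ω ∂P ≤ κα' * dist s t ^ (2 * α : ℝ) := fun s hs t ht => by
    refine (one_sub_integral_mul_le_of_abs_sub_le hβ' hlaw hcorr hs ht).trans ?_
    rw [NNReal.coe_mul, mul_assoc]
    gcongr
    exact rpow_le_mul_rpow_of_le dist_nonneg (hD hs ht) (by positivity) hαβ'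
  have hpow : 0 < N ^ (-(α : ℝ)) := Real.rpow_pos_of_pos (by linarith) _
  have hlog : 0 < Real.log N := Real.log_pos (by linarith)
  simp_rw [← edist_eq_enorm_sub]
  calc _ ≤ ENNReal.ofReal (K * N ^ (-(α : ℝ)) * Real.log N) :=
        lintegral_iSup_edist_mul_le_of_holderOnWith hT hα hgauss hlaw hcont hcorrα hσ hHolder κm hN
    _ < ENNReal.ofReal ((K + 1) * N ^ (-(α : ℝ)) * Real.log N) := by
        rw [ENNReal.ofReal_lt_ofReal_iff (mul_pos (mul_pos (by linarith) hpow) hlog)]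
        gcongr
        exact lt_add_one K

/-- **Expected supremum of the increment field near the diagonal (Lemma 3).**
For `ξ(s,t) = σ(s)f(s) − σ(t)f(t)` and `β* = min(β, β')`, there is a constant
`κ_ξ > 0`, uniform over all `σ` in the class C1 and all centered unit-variance
a.s. continuous Gaussian fields `f` satisfying the correlation Hölder condition C4,
such that for all `N ≥ 2`,
`E[ sup_{s,t ∈ T, |s−t| ≤ κ_m/N} |ξ(s,t)| ] < κ_ξ · N^{−β*/2} · log N`. -/
theorem expected_sup_increment_bound
    {Ω : Type*} [MeasurableSpace Ω] (P : Measure Ω) [IsProbabilityMeasure P]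
    {d : ℕ} (T : Set (EuclideanSpace ℝ (Fin d)))
    (hT : IsCompact T) (hTne : T.Nonempty)
    (μl μu σl σu β κH β' κH' κm : ℝ)
    (hμ : μl ≤ μu) (hσl : 0 < σl) (hσ : σl ≤ σu) (hβ : 0 < β) (hκH : 0 < κH)
    (hβ' : 0 < β') (hκH' : 0 < κH') (hκm : 0 < κm) :
    ∃ κξ > (0 : ℝ), ∀ f : EuclideanSpace ℝ (Fin d) → Ω → ℝ,
      (∀ u, Measurable (f u)) →
      (∀ s : Finset (EuclideanSpace ℝ (Fin d)), ↑s ⊆ T →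
        ∀ c : EuclideanSpace ℝ (Fin d) → ℝ, ∃ v : NNReal,
          Measure.map (fun ω => ∑ u ∈ s, c u * f u ω) P = gaussianReal 0 v) →
      (∀ u ∈ T, Measure.map (f u) P = gaussianReal 0 1) →
      (∀ᵐ ω ∂P, ContinuousOn (fun u => f u ω) T) →
      (∀ s ∈ T, ∀ u ∈ T, ∀ s' ∈ T, ∀ u' ∈ T,
        |(∫ ω, f u ω * f s ω ∂P) - (∫ ω, f u' ω * f s' ω ∂P)| ≤
          κH' * (dist u u' ^ β' + dist s s' ^ β')) →
      ∀ σ : EuclideanSpace ℝ (Fin d) → ℝ,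
        (∀ u ∈ T, σ u ∈ Set.Icc σl σu) →
        (∀ s ∈ T, ∀ u ∈ T, |σ u - σ s| ≤ κH * dist s u ^ β) →
        ∀ N : ℕ, 2 ≤ N →
          (∫ ω, (⨆ p : {p : (EuclideanSpace ℝ (Fin d)) × (EuclideanSpace ℝ (Fin d)) //
              p.1 ∈ T ∧ p.2 ∈ T ∧ dist p.1 p.2 ≤ κm / N},
            |σ p.1.1 * f p.1.1 ω - σ p.1.2 * f p.1.2 ω|) ∂P) <
            κξ * (N : ℝ) ^ (-(min β β' / 2)) * Real.log N := by
  lift β to ℝ≥0 using hβ.le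
  lift β' to ℝ≥0 using hβ'.le
  lift κH to ℝ≥0 using hκH.le
  lift κH' to ℝ≥0 using hκH'.le
  lift κm to ℝ≥0 using hκm.le
  lift σu to ℝ≥0 using hσl.le.trans hσ
  obtain ⟨C, hC⟩ := exists_hasPolynomialCoveringNumber_of_isBounded hT.isBounded
  obtain ⟨κξ, hκξ, hbound⟩ := expected_sup_increment_bound_general hC
    (half_pos (lt_min hβ hβ') : 0 < min β β' / 2) ((half_le_self zero_le).trans (min_le_left _ _))
    ((mul_div_cancel₀ _ two_ne_zero).trans_le (min_le_right _ _)) σu κH κH' κm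
  refine ⟨κξ, hκξ, fun f _ hsum hunit hcont hcorr σ hσu hσβ N hN => ?_⟩
  have hσ_abs : ∀ u ∈ T, |σ u| ≤ σu := fun u hu =>
    (abs_of_pos (hσl.trans_le (hσu u hu).1)).trans_le (hσu u hu).2
  exact integral_iSup_abs_lt_of_lintegral_iSup_enorm_lt
    (hbound P f hsum hunit hcont hcorr σ hσ_abs hσβ N (by exact_mod_cast hN))
end
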